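/- Let n ≥ 3 and let m ≥ 4 be an integer. There exists ε_m > 0 with the following property: if K ⊂ ℝⁿ is an origin-symmetric convex body with support function h_K ∈ C²(S^{n−1}) such that Π^{2m}K = cK for some constant c > 0, and there exists φ ∈ GL_n(ℝ) with ‖h_{φK} − 1‖_{C²} ≤ ε_m, then K is an ellipsoid centered at the origin. -/

import Mathlib

/-!
The proof is a linearisation argument at the unit ball, carried out in `L²` of the sphere.

**The class of bodies.** Closeness to the ball is measured by `Sand (1 - η) (1 + η) H G`: at every
boundary point the body with support function `H` is enclosed between touching balls of radii
`1 ± η`. Closeness in `C²` implies this by Taylor expansion along great circles (`sand_of_C2`), and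
the projection body operator preserves it (`step_sand`). For the latter, the support function of
`ΠK` is a multiple of the volume increment `HP K v = |K + [0,v]| - |K|`. This increment is the
integral of widths of planar sections, and these sections are enclosed between touching discs. The
increment is also covariant under linear maps, so that even iterates of `Π` commute with linear maps
up to dilation (`projBody_iter_image`).

**Linearisation.** Write `H = 1 + f` on the sphere, and `nxt H` for the support function of the
projection body, normalised at the ball. Comparing projections with star bodies gives
`nxt H - 1 = (n - 1) R f + O(R |∇f|²)`, where `R` is the spherical Radon transform
(`exists_expansion`). The interpolation inequality `‖∇f‖₄² ≤ C ‖∇²f‖_∞ ‖f‖₂` (`Sand.gn`) shows that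
the error is small relative to `f` in `L²`.

**Spectral gap.** On even polynomials, filtered by degree, `R` is symmetric and triangular; the
diagonal entry in degree `2k` is `(-1)^k` times the moment of order `2k` of a coordinate on the unit
sphere of dimension `n - 2`. Hence, off the quadratic forms, `(n - 1) R` has norm at most
`(n - 1)` times the fourth moment, which is less than `1` for `n ≥ 3` (`raH_gap`, `mom_four_lt`).

**Positioning.** Minimising `∫ (H ∘ A - 1)²` over linear maps `A` produces a linear image of the body
whose perturbation is almost orthogonal to all quadratic forms, and so is dominated by its component
`a` orthogonal to them (`exists_position`).

**Conclusion.** If `Π^{2m} K` is a dilate of `K`, the same holds for the positioned image. The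
component orthogonal to quadratic forms is then multiplied by a factor close to `1` while it is
contracted by a fixed factor less than `1`; so it vanishes, and the positioned body is a ball
(`sand_rigid`).

The sphere is treated as a homogeneous space: functions on it are lifted to the orthogonal group by
`u = g e0`, and `L²` norms are taken with respect to the Haar probability measure.
-/

open MeasureTheory Metric Set Filter
open scoped RealInnerProductSpace Topology Pointwise NNReal ENNReal

noncomputable section

/-- `Euc n` is Euclidean space `ℝⁿ`. -/
abbrev Euc (n : ℕ) : Type := EuclideanSpace ℝ (Fin n)

/-- `uball k` is `ω_k`, the volume of the unit ball of `ℝ^k`. -/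
def uball (k : ℕ) : ℝ := (volume (closedBall (0 : Euc k) 1)).toReal

/-- The spherical Lebesgue measure on `S^{n-1} ⊂ ℝⁿ`:
the `(n-1)`-dimensional Hausdorff measure. -/
def sphMeas (n : ℕ) : Measure (Euc n) := Measure.hausdorffMeasure ((n : ℝ) - 1)

/-- The support function of a set `K ⊆ ℝⁿ`. -/
def suppFn {n : ℕ} (K : Set (Euc n)) (x : Euc n) : ℝ :=
  sSup ((fun y => ⟪y, x⟫) '' K)

/-- `K` is a convex body: compact, convex, with nonempty interior. -/
def IsConvexBody {n : ℕ} (K : Set (Euc n)) : Prop :=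
  IsCompact K ∧ Convex ℝ K ∧ (interior K).Nonempty

/-- Lebesgue volume of a subset of `ℝⁿ`, as a real number. -/
def vol {n : ℕ} (K : Set (Euc n)) : ℝ := (volume K).toReal

/-- `projSupp K u` is the `(n-1)`-dimensional measure of the orthogonal projection of
`K` onto the hyperplane `u^⊥` (for a unit vector `u`); this is the support function
of the projection body `ΠK`. -/
def projSupp {n : ℕ} (K : Set (Euc n)) (u : Euc n) : ℝ :=
  (Measure.hausdorffMeasure ((n : ℝ) - 1)
    ((fun x : Euc n => x - ⟪x, u⟫ • u) '' K)).toReal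

/-- The projection body `ΠK` of `K`: the convex body whose support function is
`u ↦ V_{n-1}(K | u^⊥)`. -/
def projBody {n : ℕ} (K : Set (Euc n)) : Set (Euc n) :=
  {x | ∀ u ∈ sphere (0 : Euc n) 1, ⟪x, u⟫ ≤ projSupp K u}

/-- The convex body determined by a function `f` on the sphere (the Wulff shape /
intersection of halfspaces); if `f` is a support function this body has support function `f`. -/
def bodyOf {n : ℕ} (f : Euc n → ℝ) : Set (Euc n) :=
  {x | ∀ u ∈ sphere (0 : Euc n) 1, ⟪x, u⟫ ≤ f u}

/-- The 1-homogeneous extension of a function on the unit sphere. -/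
def homExt {n : ℕ} (f : Euc n → ℝ) (x : Euc n) : ℝ := ‖x‖ * f (‖x‖⁻¹ • x)

/-- The Euclidean Laplacian of `F : ℝⁿ → ℝ`. -/
def lapl {n : ℕ} (F : Euc n → ℝ) (x : Euc n) : ℝ :=
  ∑ i : Fin n, fderiv ℝ (fun y => fderiv ℝ F y (EuclideanSpace.single i 1)) x
    (EuclideanSpace.single i 1)

/-- The operator `□f = Δ_{S^{n-1}} f + (n-1) f` on functions on the sphere, realized as the
Euclidean Laplacian of the 1-homogeneous extension (restricted to the sphere). -/
def boxOp {n : ℕ} (f : Euc n → ℝ) (x : Euc n) : ℝ := lapl (homExt f) x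

/-- The cosine transform `Cf(u) = ∫_{S^{n-1}} |u·x| f(x) dx`. -/
def cosT {n : ℕ} (f : Euc n → ℝ) (u : Euc n) : ℝ :=
  ∫ x in sphere (0 : Euc n) 1, |⟪u, x⟫| * f x ∂(sphMeas n)

/-- The spherical Radon (Funk) transform
`Rf(u) = (1/((n-1)ω_{n-1})) ∫_{S^{n-1} ∩ u^⊥} f`, normalized so that `R1 = 1`. -/
def radon {n : ℕ} (f : Euc n → ℝ) (u : Euc n) : ℝ :=
  (1 / (((n : ℝ) - 1) * uball (n - 1))) *
    ∫ x in sphere (0 : Euc n) 1 ∩ {x : Euc n | ⟪x, u⟫ = 0}, f x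
      ∂(Measure.hausdorffMeasure ((n : ℝ) - 2))

/-- The `C²(S^{n-1})` norm of a function on the sphere (computed through its
1-homogeneous extension, which only depends on the values of `f` on the sphere). -/
def C2Norm {n : ℕ} (f : Euc n → ℝ) : ℝ :=
  ⨆ x : sphere (0 : Euc n) 1,
    (|homExt f (x : Euc n)| + ‖fderiv ℝ (homExt f) (x : Euc n)‖ +
      ‖iteratedFDeriv ℝ 2 (homExt f) (x : Euc n)‖)

/-- The sup (`C`) norm of a function on the sphere. -/
def CNorm {n : ℕ} (f : Euc n → ℝ) : ℝ := ⨆ x : sphere (0 : Euc n) 1, |f (x : Euc n)|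

/-- `f` is of class `C²` as a function on the sphere: its 1-homogeneous extension is
`C²` away from the origin. -/
def C2Sph {n : ℕ} (f : Euc n → ℝ) : Prop :=
  ContDiffOn ℝ 2 (homExt f) {(0 : Euc n)}ᶜ

/-- `f` is even on the sphere. -/
def EvenSph {n : ℕ} (f : Euc n → ℝ) : Prop := ∀ x ∈ sphere (0 : Euc n) 1, f (-x) = f x

/-- `f` is the curvature function of `K`: for every convex body `L`, the first variation of
volume satisfies `nV₁(K,L) = ∫_{S^{n-1}} h_L f dx`, i.e. the surface area measure of `K`
has density `f` with respect to spherical Lebesgue measure. -/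
def HasCurvFn {n : ℕ} (K : Set (Euc n)) (f : Euc n → ℝ) : Prop :=
  ∀ L : Set (Euc n), IsConvexBody L →
    Tendsto (fun t : ℝ => (vol (K + t • L) - vol K) / t) (𝓝[>] (0 : ℝ))
      (𝓝 (∫ x in sphere (0 : Euc n) 1, suppFn L x * f x ∂(sphMeas n)))

/-- `K` is a convex body of class `C²₊`: its support function is `C²` and it has a positive
continuous curvature function. -/
def IsC2Plus {n : ℕ} (K : Set (Euc n)) : Prop :=
  IsConvexBody K ∧ C2Sph (suppFn K) ∧
    ∃ f : Euc n → ℝ, ContinuousOn f (sphere (0 : Euc n) 1) ∧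
      (∀ x ∈ sphere (0 : Euc n) 1, 0 < f x) ∧ HasCurvFn K f

/-- `f` is a spherical harmonic of degree `k` on `S^{n-1}`: the restriction to the sphere of a
harmonic polynomial that is homogeneous of degree `k` (equivalently, an eigenfunction of the
Laplace–Beltrami operator with eigenvalue `-k(k+n-2)`; the zero function is allowed). -/
def IsSphHarm {n : ℕ} (k : ℕ) (f : Euc n → ℝ) : Prop :=
  ∃ P : MvPolynomial (Fin n) ℝ, P.IsHomogeneous k ∧
    (∑ i : Fin n, MvPolynomial.pderiv i (MvPolynomial.pderiv i P)) = 0 ∧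
    ∀ x ∈ sphere (0 : Euc n) 1, f x = MvPolynomial.eval (fun i => x i) P

/-- `π_k f = 0`: `f` is `L²(S^{n-1})`-orthogonal to all spherical harmonics of degree `k`. -/
def ProjZero {n : ℕ} (k : ℕ) (f : Euc n → ℝ) : Prop :=
  ∀ Y : Euc n → ℝ, IsSphHarm k Y →
    ∫ x in sphere (0 : Euc n) 1, f x * Y x ∂(sphMeas n) = 0

/-- The multipliers `v_{k,n}` of the spherical Radon transform:
`v_{k,n} = (1·3⋯(k-1)) / ((n-1)(n+1)⋯(n+k-3))` for even `k`, `v_{0,n} = 1`, and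
`v_{k,n} = 0` for odd `k`. -/
def vkn (n k : ℕ) : ℝ :=
  if k % 2 = 0 then ∏ i ∈ Finset.range (k / 2), (2 * (i : ℝ) + 1) / ((n : ℝ) + 2 * i - 1)
  else 0

/-- `D` is the derivative at `t = 0`, in the `C²(S^{n-1})`-norm, of a curve `t ↦ F t` of
functions on the sphere. -/
def HasC2DerivAt {n : ℕ} (F : ℝ → Euc n → ℝ) (D : Euc n → ℝ) : Prop :=
  Tendsto (fun t : ℝ => C2Norm (fun x => (F t x - F 0 x) / t - D x)) (𝓝[≠] (0 : ℝ)) (𝓝 0)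

/-! ### The orthogonal group and its Haar measure -/

/-- The orthogonal group of `ℝⁿ`, as the unitary elements of the algebra of operators. -/
abbrev OG (n : ℕ) : Type := unitary (Euc n →L[ℝ] Euc n)

instance (n : ℕ) : ContinuousStar (Euc n →L[ℝ] Euc n) :=
  ⟨(ContinuousLinearMap.adjoint (𝕜 := ℝ) (E := Euc n) (F := Euc n)).continuous⟩

theorem isCompact_OG (n : ℕ) : IsCompact (unitary (Euc n →L[ℝ] Euc n) : Set (Euc n →L[ℝ] Euc n)) := by
  refine Metric.isCompact_of_isClosed_isBounded ?_ ?_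
  · exact isClosed_unitary
  · refine (Metric.isBounded_closedBall (x := (0 : Euc n →L[ℝ] Euc n)) (r := 1)).subset ?_
    intro u hu
    rw [mem_closedBall_zero_iff]
    refine ContinuousLinearMap.opNorm_le_bound _ zero_le_one fun x => ?_
    rw [Unitary.norm_map ⟨u, hu⟩ x, one_mul]

instance (n : ℕ) : CompactSpace (OG n) := isCompact_iff_compactSpace.mp (isCompact_OG n)

/-- The Haar probability measure on the orthogonal group. -/
def haarO (n : ℕ) : Measure (OG n) := Measure.haarMeasure ⊤

instance (n : ℕ) : (haarO n).IsHaarMeasure := by unfold haarO; infer_instance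

instance (n : ℕ) : IsProbabilityMeasure (haarO n) :=
  ⟨by simpa [haarO] using Measure.haarMeasure_self (K₀ := (⊤ : TopologicalSpace.PositiveCompacts (OG n)))⟩

instance (n : ℕ) : (haarO n).IsMulRightInvariant := by
  constructor
  intro g
  have : IsProbabilityMeasure (Measure.map (· * g) (haarO n)) :=
    Measure.isProbabilityMeasure_map (by fun_prop)
  exact Measure.isHaarMeasure_eq_of_isProbabilityMeasure _ _

theorem integral_OG_mul_right {n : ℕ} (f : OG n → ℝ) (k : OG n) :
    ∫ g, f (g * k) ∂(haarO n) = ∫ g, f g ∂(haarO n) :=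
  integral_mul_right_eq_self f k

theorem integral_OG_mul_left {n : ℕ} (f : OG n → ℝ) (k : OG n) :
    ∫ g, f (k * g) ∂(haarO n) = ∫ g, f g ∂(haarO n) :=
  integral_mul_left_eq_self f k

/-- Some orthogonal map swaps two given vectors of equal length (a reflection). -/
theorem exists_OG_swap {n : ℕ} {a b : Euc n} (h : ‖a‖ = ‖b‖) :
    ∃ k : OG n, k.1 a = b ∧ k.1 b = a := by
  refine ⟨Unitary.linearIsometryEquiv.symm ((ℝ ∙ (a - b))ᗮ.reflection), ?_, ?_⟩
  · exact Submodule.reflection_sub h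
  · have := Submodule.reflection_sub h
    show (ℝ ∙ (a - b))ᗮ.reflection b = a
    have h2 := congrArg (ℝ ∙ (a - b))ᗮ.reflection this
    rw [Submodule.reflection_reflection] at h2
    exact h2.symm

theorem OG_norm {n : ℕ} (g : OG n) (x : Euc n) : ‖g.1 x‖ = ‖x‖ := Unitary.norm_map g x
theorem OG_inner {n : ℕ} (g : OG n) (x y : Euc n) : ⟪g.1 x, g.1 y⟫ = ⟪x, y⟫ :=
  Unitary.inner_map_map g x y

theorem OG_mul_apply {n : ℕ} (g k : OG n) (x : Euc n) : (g * k).1 x = g.1 (k.1 x) := rfl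

theorem continuous_OG_apply {n : ℕ} : Continuous fun p : OG n × Euc n => p.1.1 p.2 :=
  (continuous_subtype_val.comp continuous_fst).clm_apply continuous_snd

/-- The rotation-averages of a function do not depend on the base point of a sphere. -/
theorem integral_OG_base {n : ℕ} (f : Euc n → ℝ) {a b : Euc n} (h : ‖a‖ = ‖b‖) :
    ∫ g : OG n, f (g.1 a) ∂(haarO n) = ∫ g : OG n, f (g.1 b) ∂(haarO n) := by
  obtain ⟨k, hk, -⟩ := exists_OG_swap h
  rw [← integral_OG_mul_right (fun g => f (g.1 a)) k]
  simp only [OG_mul_apply, hk]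

theorem integrable_OG {n : ℕ} {f : OG n → ℝ} (hf : Continuous f) : Integrable f (haarO n) :=
  hf.integrable_of_hasCompactSupport (HasCompactSupport.of_compactSpace f)

/-! ### The spherical Radon transform -/

/-- The first coordinate vector. -/
def e0 {n : ℕ} : Euc (n + 1) := EuclideanSpace.single 0 1

@[simp] theorem norm_e0 {n : ℕ} : ‖(e0 : Euc (n + 1))‖ = 1 := by simp [e0]

/-- The isometric inclusion `ℝ^d → ℝ^{d+1}` onto the hyperplane orthogonal to `e0`. -/
def Jm {d : ℕ} (y : Euc d) : Euc (d + 1) := WithLp.toLp 2 (Fin.cons 0 (fun i => y i))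

/-- The adjoint of `Jm`: forget the first coordinate. -/
def Tl {d : ℕ} (x : Euc (d + 1)) : Euc d := WithLp.toLp 2 (fun i => x i.succ)

theorem inner_Jm {d : ℕ} (x : Euc (d + 1)) (y : Euc d) : ⟪x, Jm y⟫ = ⟪Tl x, y⟫ := by
  simp [Jm, Tl, PiLp.inner_apply, Fin.sum_univ_succ]

theorem Tl_Jm {d : ℕ} (y : Euc d) : Tl (Jm y) = y := by
  ext i; simp [Jm, Tl]

theorem inner_e0 {d : ℕ} (x : Euc (d + 1)) : ⟪x, e0⟫ = x 0 := by
  simp [e0, EuclideanSpace.inner_single_right]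

theorem inner_e0' {d : ℕ} (x : Euc (d + 1)) : ⟪e0, x⟫ = x 0 := by
  rw [real_inner_comm, inner_e0]

theorem norm_Tl_sq {d : ℕ} (x : Euc (d + 1)) : ‖Tl x‖ ^ 2 = ‖x‖ ^ 2 - ⟪x, e0⟫ ^ 2 := by
  rw [inner_e0, EuclideanSpace.norm_sq_eq, EuclideanSpace.norm_sq_eq, Fin.sum_univ_succ]
  simp [Tl]

@[simp] theorem norm_Jm {d : ℕ} (y : Euc d) : ‖Jm y‖ = ‖y‖ := by
  have : ‖Jm y‖ ^ 2 = ‖y‖ ^ 2 := by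
    rw [EuclideanSpace.norm_sq_eq, EuclideanSpace.norm_sq_eq, Fin.sum_univ_succ]; simp [Jm]
  exact (sq_eq_sq₀ (norm_nonneg _) (norm_nonneg _)).1 this

theorem Jm_orth {d : ℕ} (y : Euc d) : ⟪e0, Jm y⟫ = 0 := by
  rw [inner_e0']; simp [Jm]

theorem Jm_sub {d : ℕ} (x y : Euc d) : Jm (x - y) = Jm x - Jm y := by
  ext i; refine Fin.cases ?_ (fun j => ?_) i <;> simp [Jm]

theorem Jm_smul {d : ℕ} (t : ℝ) (y : Euc d) : Jm (t • y) = t • Jm y := by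
  ext i; refine Fin.cases ?_ (fun j => ?_) i <;> simp [Jm]

theorem Jm_add {d : ℕ} (x y : Euc d) : Jm (x + y) = Jm x + Jm y := by
  ext i; refine Fin.cases ?_ (fun j => ?_) i <;> simp [Jm]

theorem isometry_Jm {d : ℕ} : Isometry (Jm : Euc d → Euc (d + 1)) := by
  refine Isometry.of_dist_eq fun x y => ?_
  rw [dist_eq_norm, dist_eq_norm, ← Jm_sub, norm_Jm]

theorem continuous_Jm {d : ℕ} : Continuous (Jm : Euc d → Euc (d + 1)) := isometry_Jm.continuous

theorem Jm_Tl {d : ℕ} (x : Euc (d + 1)) : Jm (Tl x) = x - ⟪x, e0⟫ • e0 := by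
  rw [inner_e0]
  ext i; refine Fin.cases ?_ (fun j => ?_) i <;> simp [Jm, Tl, e0]

theorem OG_inner_left {n : ℕ} (g : OG n) (a y : Euc n) : ⟪a, g.1 y⟫ = ⟪(g⁻¹).1 a, y⟫ := by
  rw [← OG_inner g ((g⁻¹).1 a) y, ← OG_mul_apply, mul_inv_cancel]; rfl

/-- Evaluation of a function on the sphere at `g e0`, as a function on the orthogonal group. -/
def liftO {n : ℕ} : C(Euc (n + 1), ℝ) →ₗ[ℝ] C(OG (n + 1), ℝ) where
  toFun w := ⟨fun g => w (g.1 e0),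
    w.continuous.comp (continuous_OG_apply.comp (Continuous.prodMk continuous_id continuous_const))⟩
  map_add' _ _ := rfl
  map_smul' _ _ := rfl

theorem liftO_apply {n : ℕ} (w : C(Euc (n + 1), ℝ)) (g : OG (n + 1)) :
    liftO w g = w (g.1 e0) := rfl

theorem continuous_OG2 {d : ℕ} : Continuous fun q : OG (d + 2) × OG (d + 1) =>
    q.1.1 (Jm (q.2.1 e0)) :=
  continuous_OG_apply.comp (Continuous.prodMk continuous_fst (continuous_Jm.comp
    (continuous_OG_apply.comp (Continuous.prodMk continuous_snd continuous_const))))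

/-- The spherical Radon transform: the value at `u = g e0` is the average of `w` over the great
subsphere orthogonal to `u`. -/
def radO {d : ℕ} : C(Euc (d + 2), ℝ) →ₗ[ℝ] C(OG (d + 2), ℝ) where
  toFun w := ⟨fun g => ∫ k : OG (d + 1), w (g.1 (Jm (k.1 e0))) ∂(haarO (d + 1)), by
    have := continuous_parametric_integral_of_continuous (μ := haarO (d + 1))
      (f := fun (g : OG (d + 2)) (k : OG (d + 1)) => w (g.1 (Jm (k.1 e0))))
      (w.continuous.comp continuous_OG2) isCompact_univ
    simpa using this⟩
  map_add' v w := by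
    ext g
    exact integral_add (integrable_OG (v.continuous.comp (continuous_OG2.comp
      (Continuous.prodMk continuous_const continuous_id)))) (integrable_OG (w.continuous.comp
      (continuous_OG2.comp (Continuous.prodMk continuous_const continuous_id))))
  map_smul' c w := by
    ext g
    exact integral_const_mul c _

theorem radO_apply {d : ℕ} (w : C(Euc (d + 2), ℝ)) (g : OG (d + 2)) :
    radO w g = ∫ k : OG (d + 1), w (g.1 (Jm (k.1 e0))) ∂(haarO (d + 1)) := rfl

/-- `L²` of the orthogonal group, which contains `L²` of the sphere. -/
abbrev HO (n : ℕ) : Type := Lp ℝ 2 (haarO n)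

/-- A continuous function on the group as an element of `L²`. -/
def toH {n : ℕ} : C(OG n, ℝ) →L[ℝ] HO n := ContinuousMap.toLp 2 (haarO n) ℝ

theorem inner_toH {n : ℕ} (f g : C(OG n, ℝ)) :
    ⟪toH f, toH g⟫ = ∫ x, f x * g x ∂(haarO n) := by
  unfold toH
  rw [ContinuousMap.inner_toLp]
  simp [mul_comm]

theorem norm_toH_sq {n : ℕ} (f : C(OG n, ℝ)) : ‖toH f‖ ^ 2 = ∫ x, (f x) ^ 2 ∂(haarO n) := by
  rw [← real_inner_self_eq_norm_sq, inner_toH]; simp [sq]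

theorem norm_toH_le {n : ℕ} {f : C(OG n, ℝ)} {C : ℝ} (hC : 0 ≤ C) (h : ∀ x, |f x| ≤ C) :
    ‖toH f‖ ≤ C := by
  refine abs_le_of_sq_le_sq' ?_ hC |>.2
  rw [norm_toH_sq]
  calc ∫ x, (f x) ^ 2 ∂(haarO n) ≤ ∫ x, C ^ 2 ∂(haarO n) := by
        refine integral_mono (integrable_OG (by fun_prop)) (integrable_const _) fun x => ?_
        exact sq_le_sq' (abs_le.1 (h x)).1 (abs_le.1 (h x)).2
    _ = C ^ 2 := by simp

theorem toH_mono {n : ℕ} {f g : C(OG n, ℝ)} (h : ∀ x, |f x| ≤ |g x|) : ‖toH f‖ ≤ ‖toH g‖ := by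
  refine abs_le_of_sq_le_sq' ?_ (norm_nonneg _) |>.2
  rw [norm_toH_sq, norm_toH_sq]
  exact integral_mono (integrable_OG (by fun_prop)) (integrable_OG (by fun_prop)) fun x =>
    sq_le_sq.2 (h x)

theorem toH_eq_zero {n : ℕ} {f : C(OG n, ℝ)} (h : toH f = 0) : f = 0 := by
  have h2 := norm_toH_sq f
  rw [h, norm_zero] at h2
  have h3 : (fun x => (f x) ^ 2) = 0 := by
    have h4 : ∫ x, (f x) ^ 2 ∂(haarO n) = 0 := by simpa using h2.symm
    rw [integral_eq_zero_iff_of_nonneg (fun x => sq_nonneg _) (integrable_OG (f.continuous.pow 2))] at h4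
    exact (Continuous.ae_eq_iff_eq _ (f.continuous.pow 2) continuous_zero).1 h4
  ext x
  simpa using congrFun h3 x

/-- The Radon transform is self-adjoint: after exchanging the two integrations, a reflection swaps the
pair of orthogonal vectors `e0` and `Jm (k e0)`. -/
theorem radO_symm {d : ℕ} (v w : C(Euc (d + 2), ℝ)) :
    ⟪toH (radO v), toH (liftO w)⟫ = ⟪toH (liftO v), toH (radO w)⟫ := by
  have key : ∀ v w : C(Euc (d + 2), ℝ), ⟪toH (radO v), toH (liftO w)⟫ =
      ∫ k, ∫ g : OG (d + 2), v (g.1 (Jm (k.1 e0))) * w (g.1 e0) ∂(haarO (d + 2))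
        ∂(haarO (d + 1)) := by
    intro v w
    rw [inner_toH]
    simp only [radO_apply, liftO_apply, ← integral_mul_const]
    refine integral_integral_swap_of_hasCompactSupport ?_ (HasCompactSupport.of_compactSpace _)
    exact (v.continuous.comp continuous_OG2).mul (w.continuous.comp
      (continuous_OG_apply.comp (Continuous.prodMk continuous_fst continuous_const)))
  rw [key, real_inner_comm, key]
  congr 1
  ext k
  have hn : ‖Jm (k.1 (e0 : Euc (d + 1)))‖ = ‖(e0 : Euc (d + 2))‖ := by
    rw [norm_Jm, OG_norm, norm_e0, norm_e0]
  obtain ⟨r, h1, h2⟩ := exists_OG_swap hn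
  rw [← integral_OG_mul_right _ r]
  simp only [OG_mul_apply, h1, h2]
  congr 1; ext g; ring

/-- The Radon transform is an average over rotations, hence an `L²` contraction by Jensen. -/
theorem radO_norm_le {d : ℕ} (w : C(Euc (d + 2), ℝ)) :
    ‖toH (radO w)‖ ≤ ‖toH (liftO w)‖ := by
  refine abs_le_of_sq_le_sq' ?_ (norm_nonneg _) |>.2
  rw [norm_toH_sq, norm_toH_sq]
  have hc : Continuous fun q : OG (d + 2) × OG (d + 1) => (w (q.1.1 (Jm (q.2.1 e0)))) ^ 2 :=
    (w.continuous.comp continuous_OG2).pow 2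
  calc ∫ g, (radO w g) ^ 2 ∂(haarO (d + 2))
      ≤ ∫ g : OG (d + 2), ∫ k : OG (d + 1), (w (g.1 (Jm (k.1 e0)))) ^ 2
          ∂(haarO (d + 1)) ∂(haarO (d + 2)) := by
        refine integral_mono (integrable_OG (by fun_prop)) (integrable_OG ?_) fun g => ?_
        · have := continuous_parametric_integral_of_continuous (μ := haarO (d + 1))
            (f := fun (g : OG (d + 2)) (k : OG (d + 1)) => (w (g.1 (Jm (k.1 e0)))) ^ 2)
            hc isCompact_univ
          simpa using this
        · have hcw : Continuous fun k : OG (d + 1) => w (g.1 (Jm (k.1 e0))) :=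
            w.continuous.comp (continuous_OG2.comp (Continuous.prodMk continuous_const continuous_id))
          simp only [radO_apply]
          exact ConvexOn.map_integral_le (μ := haarO (d + 1)) (s := univ) (g := fun x : ℝ => x ^ 2)
            (even_two.convexOn_pow) (by fun_prop) isClosed_univ (by simp)
            (integrable_OG hcw) (integrable_OG (hcw.pow 2))
    _ = ∫ k : OG (d + 1), ∫ g : OG (d + 2), (w (g.1 (Jm (k.1 e0)))) ^ 2
          ∂(haarO (d + 2)) ∂(haarO (d + 1)) :=
        integral_integral_swap_of_hasCompactSupport hc (HasCompactSupport.of_compactSpace _)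
    _ = ∫ k : OG (d + 1), ∫ g : OG (d + 2), (w (g.1 e0)) ^ 2
          ∂(haarO (d + 2)) ∂(haarO (d + 1)) := by
        congr 1; ext k
        exact integral_OG_base (fun x => w x ^ 2) (by rw [norm_Jm, OG_norm, norm_e0, norm_e0])
    _ = ∫ g, (liftO w g) ^ 2 ∂(haarO (d + 2)) := by simp [liftO_apply]

/-- The moments of a coordinate on the unit sphere. -/
def mom (d m : ℕ) : ℝ := ∫ k : OG (d + 1), ⟪(e0 : Euc (d + 1)), k.1 e0⟫ ^ m ∂(haarO (d + 1))

theorem integral_inner_pow {d : ℕ} (b : Euc (d + 1)) (m : ℕ) :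
    ∫ k : OG (d + 1), ⟪b, k.1 e0⟫ ^ m ∂(haarO (d + 1)) = ‖b‖ ^ m * mom d m := by
  have hn : ‖b‖ = ‖(‖b‖ • (e0 : Euc (d + 1)))‖ := by simp [norm_smul]
  obtain ⟨r, h1, -⟩ := exists_OG_swap hn
  have : ∀ k : OG (d + 1), ⟪b, k.1 e0⟫ ^ m = ‖b‖ ^ m * ⟪(e0 : Euc (d + 1)), (r * k).1 e0⟫ ^ m := by
    intro k
    rw [← OG_inner r, h1, inner_smul_left, mul_pow]; rfl
  simp only [this, integral_const_mul]
  rw [integral_OG_mul_left (fun k => ⟪(e0 : Euc (d + 1)), k.1 e0⟫ ^ m) r, mom]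

/-! ### Even polynomials and the spectral gap -/

/-- The function `x ↦ (a · x)^{2j}`. -/
def pw {n : ℕ} (a : Euc n) (j : ℕ) : C(Euc n, ℝ) := ⟨fun x => ⟪a, x⟫ ^ (2 * j), by fun_prop⟩

theorem pw_apply {n : ℕ} (a : Euc n) (j : ℕ) (x : Euc n) : pw a j x = ⟪a, x⟫ ^ (2 * j) := rfl

/-- Even polynomial functions of degree at most `2k`, spanned by even powers of linear forms. -/
def Vk (n k : ℕ) : Submodule ℝ C(Euc n, ℝ) :=
  Submodule.span ℝ {w | ∃ a : Euc n, ∃ j ≤ k, w = pw a j}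

theorem Vk_mono {n k l : ℕ} (h : k ≤ l) : Vk n k ≤ Vk n l :=
  Submodule.span_mono fun _ ⟨a, j, hj, hw⟩ => ⟨a, j, hj.trans h, hw⟩

theorem pw_mem {n k j : ℕ} (a : Euc n) (h : j ≤ k) : pw a j ∈ Vk n k :=
  Submodule.subset_span ⟨a, j, h, rfl⟩

/-- Polynomials as continuous functions. -/
def polyMap (n : ℕ) : MvPolynomial (Fin n) ℝ →ₗ[ℝ] C(Euc n, ℝ) where
  toFun p := ⟨fun x => MvPolynomial.eval (fun i => x i) p, by
    have := MvPolynomial.continuous_eval p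
    exact this.comp (by fun_prop)⟩
  map_add' p q := by ext x; simp
  map_smul' c p := by ext x; simp [MvPolynomial.smul_eval]

instance Vk_finite (n k : ℕ) : FiniteDimensional ℝ (Vk n k) := by
  have hle : Vk n k ≤ (MvPolynomial.restrictTotalDegree (Fin n) ℝ (2 * k)).map (polyMap n) := by
    refine Submodule.span_le.2 ?_
    rintro w ⟨a, j, hj, rfl⟩
    refine ⟨(∑ i, MvPolynomial.C (a i) * MvPolynomial.X i) ^ (2 * j), ?_, ?_⟩
    · rw [SetLike.mem_coe, MvPolynomial.mem_restrictTotalDegree]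
      refine (MvPolynomial.totalDegree_pow _ _).trans ?_
      have : (∑ i, MvPolynomial.C (a i) * MvPolynomial.X i : MvPolynomial (Fin n) ℝ).totalDegree
          ≤ 1 := by
        refine MvPolynomial.totalDegree_finsetSum_le fun i _ => ?_
        refine (MvPolynomial.totalDegree_mul _ _).trans ?_
        simp
      nlinarith
    · ext x
      simp [polyMap, pw_apply, PiLp.inner_apply, mul_comm]
  exact Submodule.finiteDimensional_of_le hle

theorem radO_pw {d : ℕ} (a : Euc (d + 2)) (j : ℕ) (g : OG (d + 2)) :
    radO (pw a j) g = mom d (2 * j) * (‖a‖ ^ 2 - ⟪a, g.1 e0⟫ ^ 2) ^ j := by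
  rw [radO_apply]
  simp only [pw_apply, OG_inner_left g, inner_Jm]
  rw [integral_inner_pow, pow_mul, norm_Tl_sq, OG_norm, mul_comm]

/-- The leading coefficients of the Radon transform on even polynomials. -/
def sk (d k : ℕ) : ℝ := (-1) ^ k * mom d (2 * k)

/-- Expand `radO_pw` by the binomial theorem: modulo powers of lower degree, the Radon transform
multiplies `(a · x)^{2j}` by `sk d j`. -/
theorem radO_pw_tri {d : ℕ} (a : Euc (d + 2)) (j : ℕ) :
    ∃ z ∈ Submodule.span ℝ {w | ∃ a : Euc (d + 2), ∃ i < j, w = pw a i},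
      radO (pw a j) = sk d j • liftO (pw a j) + liftO z := by
  refine ⟨∑ i ∈ Finset.range j, (mom d (2 * j) * (-1) ^ i * (‖a‖ ^ 2) ^ (j - i) * j.choose i) •
    pw a i, ?_, ?_⟩
  · exact Submodule.sum_mem _ fun i hi => Submodule.smul_mem _ _
      (Submodule.subset_span ⟨a, i, Finset.mem_range.1 hi, rfl⟩)
  · ext g
    rw [radO_pw]
    have : ‖a‖ ^ 2 - ⟪a, g.1 e0⟫ ^ 2 = -⟪a, g.1 e0⟫ ^ 2 + ‖a‖ ^ 2 := by ring
    rw [this, add_pow, Finset.sum_range_succ]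
    simp only [map_sum, map_smul, ContinuousMap.add_apply, ContinuousMap.smul_apply,
      ContinuousMap.coe_sum, Finset.sum_apply, liftO_apply, pw_apply, smul_eq_mul, sk]
    rw [mul_add, Finset.mul_sum, add_comm]
    congr 1
    · simp [neg_pow (⟪a, g.1 e0⟫ ^ 2)]; ring
    · refine Finset.sum_congr rfl fun i _ => ?_
      rw [neg_pow (⟪a, g.1 e0⟫ ^ 2)]; ring

/-- The Radon transform is triangular for the filtration of even polynomials by degree. -/
theorem radO_tri {d k : ℕ} {w : C(Euc (d + 2), ℝ)} (hw : w ∈ Vk (d + 2) (k + 1)) :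
    ∃ z ∈ Vk (d + 2) k, radO w = sk d (k + 1) • liftO w + liftO z := by
  induction hw using Submodule.span_induction with
  | mem w hw =>
    obtain ⟨a, j, hj, rfl⟩ := hw
    obtain ⟨z, hz, h⟩ := radO_pw_tri a j
    have hz' : ∀ l, j ≤ l + 1 → z ∈ Vk (d + 2) l := by
      intro l hl
      exact Submodule.span_mono (by rintro w ⟨a, i, hi, hw⟩; exact ⟨a, i, by omega, hw⟩) hz
    rcases Nat.lt_or_ge j (k + 1) with hlt | hge
    · refine ⟨z + (sk d j - sk d (k + 1)) • pw a j,
        Submodule.add_mem _ (hz' k (by omega)) (Submodule.smul_mem _ _ (pw_mem a (by omega))), ?_⟩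
      rw [h, map_add, map_smul]; module
    · obtain rfl : j = k + 1 := by omega
      exact ⟨z, hz' k le_rfl, h⟩
  | zero => exact ⟨0, zero_mem _, by simp⟩
  | add x y _ _ hx hy =>
    obtain ⟨z, hz, h⟩ := hx
    obtain ⟨z', hz', h'⟩ := hy
    exact ⟨z + z', add_mem hz hz', by simp only [map_add, h, h']; module⟩
  | smul c x _ hx =>
    obtain ⟨z, hz, h⟩ := hx
    exact ⟨c • z, Submodule.smul_mem _ _ hz, by simp only [map_smul, h]; module⟩

theorem radO_Vk {d k : ℕ} {w : C(Euc (d + 2), ℝ)} (hw : w ∈ Vk (d + 2) (k + 1)) :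
    ∃ z ∈ Vk (d + 2) (k + 1), radO w = liftO z := by
  obtain ⟨z, hz, h⟩ := radO_tri hw
  exact ⟨sk d (k + 1) • w + z, add_mem (Submodule.smul_mem _ _ hw) (Vk_mono (by omega) hz), by
    rw [h, map_add, map_smul]⟩

section AbstractContraction

variable {X H : Type*} [AddCommGroup X] [Module ℝ X] [NormedAddCommGroup H] [InnerProductSpace ℝ H]
  (ι R : X →ₗ[ℝ] H) (V : ℕ → Submodule ℝ X) [∀ k, FiniteDimensional ℝ (V k)]

/-- Orthogonal decomposition with respect to a step of a finite dimensional filtration. -/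
theorem exists_decomp (k : ℕ) (w : X) :
    ∃ v ∈ V k, ∀ u ∈ (V k).map ι, ⟪u, ι (w - v)⟫ = 0 := by
  obtain ⟨v, hv, h⟩ := ((V k).map ι).starProjection_apply_mem (ι w)
  refine ⟨v, hv, fun u hu => ?_⟩
  have h2 := ((V k).map ι).sub_starProjection_mem_orthogonal (ι w) u hu
  rw [map_sub, h]
  exact h2

/-- A symmetric operator `R` that is triangular with respect to a filtration, with diagonal
entries bounded by `c` from the second step on, has norm at most `c` on the orthogonal complement
of the first step: diagonalise step by step. -/
theorem contract_of_tri (mono : Monotone V) (symm : ∀ v w, ⟪R v, ι w⟫ = ⟪ι v, R w⟫)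
    (bd : ∀ w, ‖R w‖ ≤ ‖ι w‖) (s : ℕ → ℝ)
    (tri : ∀ k, ∀ w ∈ V (k + 1), ∃ z ∈ V k, R w = s (k + 1) • ι w + ι z)
    {c : ℝ} (hc : ∀ k, 2 ≤ k → |s k| ≤ c) (k : ℕ) :
    ∀ w ∈ V (k + 1), (∀ u ∈ (V 1).map ι, ⟪u, ι w⟫ = 0) → ‖R w‖ ≤ c * ‖ι w‖ := by
  have stab : ∀ k, ∀ w ∈ V (k + 1), ∃ z ∈ V (k + 1), R w = ι z := by
    intro k w hw
    obtain ⟨z, hz, h⟩ := tri k w hw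
    exact ⟨s (k + 1) • w + z, add_mem (Submodule.smul_mem _ _ hw) (mono (Nat.le_succ k) hz), by
      rw [h, map_add, map_smul]⟩
  have hc0 : 0 ≤ c := (abs_nonneg _).trans (hc 2 le_rfl)
  induction k with
  | zero =>
    intro w hw h
    have h0 : ι w = 0 := inner_self_eq_zero.1 (h _ (Submodule.mem_map_of_mem hw))
    have := bd w
    rw [h0] at this ⊢
    simpa using this
  | succ k ih =>
    intro w hw h
    obtain ⟨w1, hw1, horth⟩ := exists_decomp ι V (k + 1) w
    set w2 := w - w1 with hw2
    have hw2m : w2 ∈ V (k + 2) := sub_mem hw (mono (Nat.le_succ _) hw1)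
    have hsum : w = w1 + w2 := by rw [hw2]; abel
    have hio : ∀ y ∈ V (k + 1), ⟪ι y, ι w2⟫ = 0 := fun y hy =>
      horth _ (Submodule.mem_map_of_mem hy)
    have h1 : ‖R w1‖ ≤ c * ‖ι w1‖ := by
      refine ih w1 hw1 fun u hu => ?_
      have e1 := h u hu
      have e2 := horth u (Submodule.map_mono (mono (by omega)) hu)
      rw [hsum, map_add, inner_add_right, e2, add_zero] at e1
      exact e1
    obtain ⟨z, hz, htri⟩ := tri _ w2 hw2m
    obtain ⟨y, hy, hry⟩ := stab _ z hz
    have hz0 : ι z = 0 := by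
      have e1 : ι z = R w2 - s (k + 2) • ι w2 := by rw [htri]; abel
      have e2 : ⟪ι z, R w2⟫ = 0 := by rw [← symm, hry]; exact hio _ hy
      rw [← inner_self_eq_zero (𝕜 := ℝ)]
      nth_rewrite 2 [e1]
      rw [inner_sub_right, inner_smul_right, e2, hio _ hz]; simp
    have hR2 : R w2 = s (k + 2) • ι w2 := by rw [htri, hz0, add_zero]
    obtain ⟨y1, hy1, hry1⟩ := stab _ w1 hw1
    have p1 : ⟪R w1, R w2⟫ = 0 := by
      rw [hry1, hR2, inner_smul_right, hio _ hy1, mul_zero]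
    have n1 : ‖R w‖ ^ 2 = ‖R w1‖ ^ 2 + ‖R w2‖ ^ 2 := by
      rw [hsum, map_add, sq, sq, sq, norm_add_sq_eq_norm_sq_add_norm_sq_of_inner_eq_zero _ _ p1]
    have n2 : ‖ι w‖ ^ 2 = ‖ι w1‖ ^ 2 + ‖ι w2‖ ^ 2 := by
      rw [hsum, map_add, sq, sq, sq,
        norm_add_sq_eq_norm_sq_add_norm_sq_of_inner_eq_zero _ _ (hio _ hw1)]
    have h2 : ‖R w2‖ ≤ c * ‖ι w2‖ := by
      rw [hR2, norm_smul, Real.norm_eq_abs]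
      exact mul_le_mul_of_nonneg_right (hc _ (by omega)) (norm_nonneg _)
    refine abs_le_of_sq_le_sq' ?_ (by positivity) |>.2
    rw [n1, mul_pow, n2, mul_add, ← mul_pow, ← mul_pow]
    gcongr

/-- The form of `contract_of_tri` for arbitrary vectors: as `R` preserves the first step and is
symmetric, it commutes with the projection to its orthogonal complement. -/
theorem perp_contract_of_tri (mono : Monotone V) (symm : ∀ v w, ⟪R v, ι w⟫ = ⟪ι v, R w⟫)
    (bd : ∀ w, ‖R w‖ ≤ ‖ι w‖) (s : ℕ → ℝ)
    (tri : ∀ k, ∀ w ∈ V (k + 1), ∃ z ∈ V k, R w = s (k + 1) • ι w + ι z)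
    {c : ℝ} (hc : ∀ k, 2 ≤ k → |s k| ≤ c) (k : ℕ) (w : X) (hw : w ∈ V (k + 1)) :
    ‖((V 1).map ι)ᗮ.starProjection (R w)‖ ≤ c * ‖((V 1).map ι)ᗮ.starProjection (ι w)‖ := by
  obtain ⟨w1, hw1, horth⟩ := exists_decomp ι V 1 w
  obtain ⟨z, hz, htri⟩ := tri 0 w1 hw1
  have hz1 : z ∈ V 1 := mono (Nat.zero_le 1) hz
  have hR1 : R w1 ∈ (V 1).map ι := by
    rw [htri]
    exact add_mem (Submodule.smul_mem _ _ (Submodule.mem_map_of_mem hw1))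
      (Submodule.mem_map_of_mem hz1)
  have hkill : ∀ x ∈ (V 1).map ι, ((V 1).map ι)ᗮ.starProjection x = 0 := fun x hx =>
    (Submodule.starProjection_apply_eq_zero_iff _).2 (Submodule.le_orthogonal_orthogonal _ hx)
  have hsum : w = w1 + (w - w1) := by abel
  have hm : w - w1 ∈ V (k + 1) := sub_mem hw (mono (by omega) hw1)
  rw [hsum, map_add, map_add, map_add, map_add, hkill _ hR1,
    hkill _ (Submodule.mem_map_of_mem hw1), zero_add, zero_add,
    Submodule.starProjection_eq_self_iff.2 ((Submodule.mem_orthogonal _ _).2 horth)]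
  exact (Submodule.norm_starProjection_apply_le _ _).trans
    (contract_of_tri ι R V mono symm bd s tri hc k _ hm horth)

end AbstractContraction

/-- A function on the sphere as an element of `L²`. -/
def ioH {n : ℕ} : C(Euc (n + 1), ℝ) →ₗ[ℝ] HO (n + 1) :=
  (toH : C(OG (n + 1), ℝ) →L[ℝ] HO (n + 1)).toLinearMap ∘ₗ liftO

/-- The Radon transform of a function on the sphere as an element of `L²`. -/
def raH {d : ℕ} : C(Euc (d + 2), ℝ) →ₗ[ℝ] HO (d + 2) :=
  (toH : C(OG (d + 2), ℝ) →L[ℝ] HO (d + 2)).toLinearMap ∘ₗ radO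

theorem ioH_eq {n : ℕ} (w : C(Euc (n + 1), ℝ)) : ioH w = toH (liftO w) := rfl
theorem raH_eq {d : ℕ} (w : C(Euc (d + 2), ℝ)) : raH w = toH (radO w) := rfl

theorem raH_norm_le {d : ℕ} (w : C(Euc (d + 2), ℝ)) : ‖raH w‖ ≤ ‖ioH w‖ := radO_norm_le w

/-- The component of an element of `L²` orthogonal to the quadratic forms. -/
def qperp (n : ℕ) : HO (n + 1) →L[ℝ] HO (n + 1) := ((Vk (n + 1) 1).map ioH)ᗮ.starProjection

theorem qperp_norm_le {n : ℕ} (x : HO (n + 1)) : ‖qperp n x‖ ≤ ‖x‖ :=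
  Submodule.norm_starProjection_apply_le _ _

theorem raH_poly {d : ℕ} {c : ℝ} (hc : ∀ k, 2 ≤ k → |sk d k| ≤ c) {k : ℕ}
    {w : C(Euc (d + 2), ℝ)} (hw : w ∈ Vk (d + 2) (k + 1)) :
    ‖qperp (d + 1) (raH w)‖ ≤ c * ‖qperp (d + 1) (ioH w)‖ := by
  refine perp_contract_of_tri ioH raH (Vk (d + 2)) (fun _ _ h => Vk_mono h) radO_symm radO_norm_le
    (sk d) ?_ hc k w hw
  intro k w hw
  obtain ⟨z, hz, h⟩ := radO_tri hw
  refine ⟨z, hz, ?_⟩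
  rw [raH_eq, h, map_add, map_smul, ioH_eq, ioH_eq]

theorem continuous_e0_inner {d : ℕ} :
    Continuous fun k : OG (d + 1) => ⟪(e0 : Euc (d + 1)), k.1 e0⟫ :=
  continuous_const.inner (continuous_OG_apply.comp (Continuous.prodMk continuous_id continuous_const))

/-- The squares of the `d + 1` coordinates of a unit vector have equal means and sum to `1`. -/
theorem mom_two (d : ℕ) : (d + 1) * mom d 2 = 1 := by
  have h1 : ∀ i : Fin (d + 1), ∫ k : OG (d + 1), (k.1 e0 : Euc (d + 1)) i ^ 2 ∂(haarO (d + 1)) =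
      mom d 2 := by
    intro i
    have := integral_inner_pow (EuclideanSpace.single i (1 : ℝ) : Euc (d + 1)) 2
    simpa [EuclideanSpace.inner_single_left] using this
  have h2 : ∫ k : OG (d + 1), (∑ i, (k.1 e0 : Euc (d + 1)) i ^ 2) ∂(haarO (d + 1)) =
      ∑ i : Fin (d + 1), mom d 2 := by
    rw [integral_finsetSum _ fun i _ => integrable_OG ?_]
    · exact Finset.sum_congr rfl fun i _ => h1 i
    · have : Continuous fun k : OG (d + 1) => (k.1 e0 : Euc (d + 1)) :=
        continuous_OG_apply.comp (Continuous.prodMk continuous_id continuous_const)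
      fun_prop
  have h3 : ∀ k : OG (d + 1), ∑ i, (k.1 e0 : Euc (d + 1)) i ^ 2 = 1 := by
    intro k
    have := EuclideanSpace.real_norm_sq_eq (k.1 e0 : Euc (d + 1))
    rw [OG_norm, norm_e0] at this
    simpa using this.symm
  simp only [h3] at h2
  simp at h2
  linarith

theorem abs_e0_inner_le {d : ℕ} (k : OG (d + 1)) : ⟪(e0 : Euc (d + 1)), k.1 e0⟫ ^ 2 ≤ 1 := by
  have h := abs_real_inner_le_norm (e0 : Euc (d + 1)) (k.1 e0)
  rw [OG_norm, norm_e0, mul_one] at h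
  rw [← sq_abs]; exact pow_le_one₀ (abs_nonneg _) h

theorem mom_nonneg (d k : ℕ) : 0 ≤ mom d (2 * k) :=
  integral_nonneg fun x => by simp only [pow_mul]; positivity

/-- Even moments of a variable bounded by `1` decrease, so the fourth moment dominates from degree
four on. -/
theorem sk_le {d k : ℕ} (hk : 2 ≤ k) : |sk d k| ≤ mom d 4 := by
  rw [sk, abs_mul, abs_pow, abs_neg, abs_one, one_pow, one_mul, abs_of_nonneg (mom_nonneg d k)]
  refine integral_mono (integrable_OG (continuous_e0_inner.pow _))
    (integrable_OG (continuous_e0_inner.pow _)) fun x => ?_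
  show _ ^ (2 * k) ≤ _ ^ (2 * 2)
  simp only [pow_mul]
  exact pow_le_pow_of_le_one (sq_nonneg _) (abs_e0_inner_le x) hk

/-- The contraction factor of the linearised projection body map off the quadratic forms. -/
theorem mom_four_lt {d : ℕ} (hd : 1 ≤ d) : (d + 1) * mom d 4 < 1 := by
  have hlt : mom d 4 < mom d 2 := by
    by_contra hcon
    push Not at hcon
    have hc : Continuous fun k : OG (d + 1) => ⟪(e0 : Euc (d + 1)), k.1 e0⟫ ^ 2 -
        ⟪(e0 : Euc (d + 1)), k.1 e0⟫ ^ 4 :=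
      (continuous_e0_inner.pow _).sub (continuous_e0_inner.pow _)
    have hnn : ∀ k : OG (d + 1), 0 ≤ ⟪(e0 : Euc (d + 1)), k.1 e0⟫ ^ 2 -
        ⟪(e0 : Euc (d + 1)), k.1 e0⟫ ^ 4 := by
      intro k
      have := abs_e0_inner_le k
      nlinarith [sq_nonneg ⟪(e0 : Euc (d + 1)), k.1 e0⟫]
    have hI0 : ∫ k : OG (d + 1), (⟪(e0 : Euc (d + 1)), k.1 e0⟫ ^ 2 -
        ⟪(e0 : Euc (d + 1)), k.1 e0⟫ ^ 4) ∂(haarO (d + 1)) = 0 := by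
      refine le_antisymm ?_ (integral_nonneg hnn)
      have e := integral_sub (integrable_OG (continuous_e0_inner (d := d).pow 2))
        (integrable_OG (continuous_e0_inner (d := d).pow 4))
      exact e.le.trans (sub_nonpos.2 hcon)
    rw [integral_eq_zero_iff_of_nonneg hnn (integrable_OG hc)] at hI0
    have hz := (Continuous.ae_eq_iff_eq _ hc continuous_zero).1 hI0
    obtain ⟨e, rfl⟩ : ∃ e, d = e + 1 := ⟨d - 1, by omega⟩
    -- a rotation taking `e0` to a vector strictly between `e0` and its orthogonal complement
    have hn : ‖(e0 : Euc (e + 2))‖ = ‖((3 / 5 : ℝ) • e0 + (4 / 5 : ℝ) • Jm e0 : Euc (e + 2))‖ := by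
      rw [norm_e0]
      have : ‖((3 / 5 : ℝ) • e0 + (4 / 5 : ℝ) • Jm e0 : Euc (e + 2))‖ ^ 2 = 1 := by
        rw [norm_add_sq_real, inner_smul_left, inner_smul_right, Jm_orth, norm_smul, norm_smul]
        norm_num
      symm
      exact (sq_eq_sq₀ (norm_nonneg _) zero_le_one).1 (by rw [this]; norm_num)
    obtain ⟨k, hk, -⟩ := exists_OG_swap hn
    have := congrFun hz k
    simp only [hk, inner_add_right, inner_smul_right, Jm_orth, real_inner_self_eq_norm_sq,
      norm_e0] at this
    norm_num at this
  have : (0 : ℝ) < d + 1 := by positivity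
  exact (mul_lt_mul_of_pos_left hlt this).trans_eq (mom_two d)

/-! ### Density of even polynomials -/

/-- The function `x ↦ exp (a · x)`. -/
def exF {n : ℕ} (a : Euc n) : C(Euc n, ℝ) := ⟨fun x => Real.exp ⟪a, x⟫, by fun_prop⟩

/-- The algebra generated by the exponentials of linear forms. -/
def expAlg (n : ℕ) : Subalgebra ℝ C(Euc n, ℝ) := Algebra.adjoin ℝ (Set.range exF)

theorem expAlg_span (n : ℕ) :
    Subalgebra.toSubmodule (expAlg n) = Submodule.span ℝ (Set.range exF) := by
  let S : Submonoid C(Euc n, ℝ) :=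
    { carrier := Set.range exF
      one_mem' := ⟨0, by ext x; simp [exF]⟩
      mul_mem' := by
        rintro _ _ ⟨a, rfl⟩ ⟨b, rfl⟩
        exact ⟨a + b, by ext x; simp [exF, inner_add_left, Real.exp_add]⟩ }
  have hS : Submonoid.closure (Set.range exF) = S :=
    le_antisymm ((Submonoid.closure_le (S := S)).2 fun _ h => h) (Submonoid.subset_closure (s := Set.range exF))
  rw [expAlg, Algebra.adjoin_eq_span, hS]
  rfl

theorem expAlg_separates (n : ℕ) : (expAlg n).SeparatesPoints := by
  intro x y hxy
  refine ⟨exF (x - y), ⟨exF (x - y), Algebra.subset_adjoin ⟨_, rfl⟩, rfl⟩, ?_⟩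
  intro h
  have h1 : ⟪x - y, x⟫ = ⟪x - y, y⟫ := Real.exp_injective h
  have h2 : ⟪x - y, x - y⟫ = 0 := by rw [inner_sub_right, h1, sub_self]
  exact hxy (sub_eq_zero.1 (inner_self_eq_zero.1 h2))

/-- Truncate the power series of `cosh`, whose terms are multiples of `pw a j`. -/
theorem cosh_approx {n : ℕ} (a : Euc n) {ε : ℝ} (hε : 0 < ε) :
    ∃ k, ∃ w ∈ Vk n (k + 1), ∀ x : Euc n, ‖x‖ = 1 → |Real.cosh ⟪a, x⟫ - w x| < ε := by
  have hu : Summable fun j : ℕ => ‖a‖ ^ (2 * j) / ((2 * j).factorial : ℝ) :=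
    (Real.hasSum_cosh ‖a‖).summable
  have h := tendstoUniformlyOn_tsum_nat (β := Euc n)
    (f := fun (j : ℕ) x => ⟪a, x⟫ ^ (2 * j) / ((2 * j).factorial : ℝ)) hu
    (s := {x : Euc n | ‖x‖ = 1}) (fun j x hx => by
      have h1 := abs_real_inner_le_norm a x
      rw [show ‖x‖ = 1 from hx, mul_one] at h1
      rw [Real.norm_eq_abs, abs_div, abs_pow, Nat.abs_cast]
      gcongr)
  rw [Metric.tendstoUniformlyOn_iff] at h
  obtain ⟨N, hN⟩ := (h ε hε).exists
  refine ⟨N, ∑ j ∈ Finset.range N, (1 / ((2 * j).factorial : ℝ)) • pw a j, ?_, fun x hx => ?_⟩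
  · exact Submodule.sum_mem _ fun j hj => Submodule.smul_mem _ _ (pw_mem a (by
      have := Finset.mem_range.1 hj; omega))
  · have := hN x hx
    rw [(Real.hasSum_cosh ⟪a, x⟫).tsum_eq, Real.dist_eq] at this
    convert this using 3
    simp only [ContinuousMap.coe_sum, ContinuousMap.coe_smul, Finset.sum_apply, Pi.smul_apply,
      pw_apply, smul_eq_mul]
    exact Finset.sum_congr rfl fun j _ => by ring

/-- The even part of a combination of exponentials is a combination of hyperbolic cosines. -/
theorem span_approx {n : ℕ} {g : C(Euc n, ℝ)} (hg : g ∈ Submodule.span ℝ (Set.range (exF (n := n)))) :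
    ∀ ε : ℝ, 0 < ε → ∃ k, ∃ w ∈ Vk n (k + 1), ∀ x : Euc n, ‖x‖ = 1 →
      |(g x + g (-x)) / 2 - w x| < ε := by
  induction hg using Submodule.span_induction with
  | mem g hg =>
    obtain ⟨a, rfl⟩ := hg
    intro ε hε
    obtain ⟨k, w, hw, h⟩ := cosh_approx a hε
    refine ⟨k, w, hw, fun x hx => ?_⟩
    have := h x hx
    rw [Real.cosh_eq] at this
    simpa [exF] using this
  | zero => exact fun ε hε => ⟨0, 0, zero_mem _, fun x _ => by simpa using hε⟩
  | add u v _ _ hu hv =>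
    intro ε hε
    obtain ⟨k, w, hw, h⟩ := hu (ε / 2) (half_pos hε)
    obtain ⟨l, z, hz, h'⟩ := hv (ε / 2) (half_pos hε)
    refine ⟨k + l, w + z, add_mem (Vk_mono (by omega) hw) (Vk_mono (by omega) hz), fun x hx => ?_⟩
    have h1 := abs_lt.1 (h x hx)
    have h2 := abs_lt.1 (h' x hx)
    rw [ContinuousMap.add_apply, ContinuousMap.add_apply, ContinuousMap.add_apply, abs_lt]
    constructor <;> linarith [h1.1, h1.2, h2.1, h2.2]
  | smul c u _ hu =>
    intro ε hε
    obtain ⟨k, w, hw, h⟩ := hu (ε / (|c| + 1)) (by positivity)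
    refine ⟨k, c • w, Submodule.smul_mem _ _ hw, fun x hx => ?_⟩
    have h1 := h x hx
    simp only [ContinuousMap.smul_apply, smul_eq_mul]
    rw [show (c * u x + c * u (-x)) / 2 - c * w x = c * ((u x + u (-x)) / 2 - w x) by ring, abs_mul]
    rw [lt_div_iff₀ (by positivity)] at h1
    nlinarith [abs_nonneg c, abs_nonneg ((u x + u (-x)) / 2 - w x)]

/-- Even continuous functions are uniform limits of even polynomials on the unit sphere. -/
theorem even_approx {n : ℕ} (f : C(Euc n, ℝ)) (hf : ∀ x, f (-x) = f x) {ε : ℝ} (hε : 0 < ε) :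
    ∃ k, ∃ w ∈ Vk n (k + 1), ∀ x : Euc n, ‖x‖ = 1 → |f x - w x| < ε := by
  obtain ⟨g, hg, h⟩ :=
    ContinuousMap.exists_mem_subalgebra_near_continuous_of_isCompact_of_separatesPoints
      (expAlg_separates n) f (isCompact_sphere (0 : Euc n) 1) (half_pos hε)
  have hg' : g ∈ Submodule.span ℝ (Set.range (exF (n := n))) := by
    rw [← expAlg_span]; exact hg
  obtain ⟨k, w, hw, h'⟩ := span_approx hg' (ε / 2) (half_pos hε)
  refine ⟨k, w, hw, fun x hx => ?_⟩
  have h1 := abs_lt.1 (h x (by simpa using hx))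
  have h2 := abs_lt.1 (h (-x) (by simpa using hx))
  have h3 := abs_lt.1 (h' x hx)
  rw [hf] at h2
  rw [abs_lt]
  constructor <;> linarith [h1.1, h1.2, h2.1, h2.2, h3.1, h3.2]

theorem ioH_le {n : ℕ} {w : C(Euc (n + 1), ℝ)} {C : ℝ} (hC : 0 ≤ C)
    (h : ∀ x, ‖x‖ = 1 → |w x| ≤ C) : ‖ioH w‖ ≤ C :=
  norm_toH_le hC fun g => h _ (by rw [OG_norm, norm_e0])

/-- Spectral gap: off the quadratic forms, the Radon transform of even functions has norm at most
`mom d 4`. -/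
theorem raH_gap {d : ℕ} (f : C(Euc (d + 2), ℝ)) (hf : ∀ x, f (-x) = f x) :
    ‖qperp (d + 1) (raH f)‖ ≤ mom d 4 * ‖qperp (d + 1) (ioH f)‖ := by
  have hm : 0 ≤ mom d 4 := mom_nonneg d 2
  refine le_of_forall_pos_le_add fun ε hε => ?_
  have hη : 0 < ε / (1 + mom d 4) := by positivity
  obtain ⟨k, w, hw, h⟩ := even_approx f hf hη
  have h1 := raH_poly (fun k hk => sk_le (d := d) hk) hw
  have h2 : ‖ioH (f - w)‖ ≤ ε / (1 + mom d 4) := ioH_le hη.le fun x hx => (h x hx).le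
  have h3 : ‖qperp (d + 1) (raH f)‖ ≤ ‖qperp (d + 1) (raH w)‖ + ε / (1 + mom d 4) := by
    have e : raH f = raH w + raH (f - w) := by rw [← map_add]; congr 1; abel
    rw [e, map_add]
    refine (norm_add_le _ _).trans (add_le_add_right ?_ _)
    exact (qperp_norm_le _).trans ((raH_norm_le _).trans h2)
  have h4 : ‖qperp (d + 1) (ioH w)‖ ≤ ‖qperp (d + 1) (ioH f)‖ + ε / (1 + mom d 4) := by
    have e : ioH w = ioH f - ioH (f - w) := by rw [← map_sub]; congr 1; abel
    rw [e, map_sub]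
    refine (norm_sub_le _ _).trans (add_le_add_right ?_ _)
    exact (qperp_norm_le _).trans h2
  have h5 : ε = ε / (1 + mom d 4) * (1 + mom d 4) := by field_simp
  nlinarith [mul_le_mul_of_nonneg_left h4 hm]

/-! ### Bodies sandwiched between touching balls -/

/-- `Sand r R H G`: the even function `H` lies between two support functions touching it at every
unit vector `y`, those of balls of radius `r` and `R` which support the body of `H` at the
point `G y`. Equivalently `H` is the support function of a symmetric body such that `H - r‖·‖` and
`R‖·‖ - H` are convex, and `G` is the gradient of `H`. -/
structure Sand {n : ℕ} (r R : ℝ) (H : Euc n → ℝ) (G : Euc n → Euc n) : Prop where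
  lo : ∀ x y, ‖y‖ = 1 → ⟪G y, x⟫ + r * (‖x‖ - ⟪y, x⟫) ≤ H x
  hi : ∀ x y, ‖y‖ = 1 → H x ≤ ⟪G y, x⟫ + R * (‖x‖ - ⟪y, x⟫)
  even : ∀ x, H (-x) = H x

theorem inner_self_one {n : ℕ} {y : Euc n} (hy : ‖y‖ = 1) : ⟪y, y⟫ = 1 := by
  rw [real_inner_self_eq_norm_sq, hy]; norm_num

theorem inner_le_norm_unit {n : ℕ} {y : Euc n} (hy : ‖y‖ = 1) (x : Euc n) : ⟪y, x⟫ ≤ ‖x‖ := by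
  have := real_inner_le_norm y x; rwa [hy, one_mul] at this

theorem norm_sub_inner_le {n : ℕ} {y : Euc n} (hy : ‖y‖ = 1) (x : Euc n) :
    ‖x‖ - ⟪y, x⟫ ≤ ‖x - y‖ ^ 2 / 2 := by
  rw [norm_sub_sq_real, hy, real_inner_comm]
  nlinarith [sq_nonneg (‖x‖ - 1)]

theorem norm_sub_inner_eq {n : ℕ} {x y : Euc n} (hx : ‖x‖ = 1) (hy : ‖y‖ = 1) :
    1 - ⟪y, x⟫ = ‖x - y‖ ^ 2 / 2 := by
  rw [norm_sub_sq_real, hy, hx, real_inner_comm]; ring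

theorem exists_unit {n : ℕ} (x : Euc n) (hx : x ≠ 0) : ∃ y : Euc n, ‖y‖ = 1 ∧ x = ‖x‖ • y := by
  have h : ‖x‖ ≠ 0 := norm_ne_zero_iff.2 hx
  exact ⟨‖x‖⁻¹ • x, by rw [norm_smul, norm_inv, norm_norm, inv_mul_cancel₀ h], by
    rw [smul_smul, mul_inv_cancel₀ h, one_smul]⟩

/-- The gradient is determined by the two-sided quadratic bound. -/
theorem grad_uniq {n : ℕ} {H : Euc n → ℝ} {y g g' : Euc n} {r R : ℝ} (hy : ‖y‖ = 1)
    (h1 : ∀ x, ⟪g, x⟫ + r * (‖x‖ - ⟪y, x⟫) ≤ H x)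
    (h2 : ∀ x, H x ≤ ⟪g', x⟫ + R * (‖x‖ - ⟪y, x⟫)) (h3 : ⟪g, y⟫ = ⟪g', y⟫) : g = g' := by
  set b := g' - g with hb
  have hby : ⟪b, y⟫ = 0 := by rw [hb, inner_sub_left, h3, sub_self]
  have key : ∀ s : ℝ, 0 ≤ -s * ‖b‖ ^ 2 + |R - r| * (s ^ 2 * ‖b‖ ^ 2 / 2) := by
    intro s
    have e1 := h1 (y - s • b)
    have e2 := h2 (y - s • b)
    have e3 := norm_sub_inner_le hy (y - s • b)
    have e4 := inner_le_norm_unit hy (y - s • b)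
    have e5 : ‖y - s • b - y‖ ^ 2 = s ^ 2 * ‖b‖ ^ 2 := by
      rw [sub_sub_cancel_left, norm_neg, norm_smul, mul_pow, Real.norm_eq_abs, sq_abs]
    have e6 : ⟪b, y - s • b⟫ = -s * ‖b‖ ^ 2 := by
      rw [inner_sub_right, hby, inner_smul_right, real_inner_self_eq_norm_sq]; ring
    have e7 : ⟪b, y - s • b⟫ = ⟪g', y - s • b⟫ - ⟪g, y - s • b⟫ := by rw [hb, inner_sub_left]
    rw [e5] at e3
    set q := ‖y - s • b‖ - ⟪y, y - s • b⟫
    have e8 : (R - r) * q ≤ |R - r| * (s ^ 2 * ‖b‖ ^ 2 / 2) :=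
      mul_le_mul (le_abs_self _) e3 (by linarith) (abs_nonneg _)
    nlinarith
  by_contra hne
  have hb0 : 0 < ‖b‖ ^ 2 := by
    have : b ≠ 0 := fun h => hne (sub_eq_zero.1 h).symm
    positivity
  have := key (1 / (|R - r| + 1))
  have hc : 0 ≤ |R - r| := abs_nonneg _
  have e : -(1 / (|R - r| + 1)) * ‖b‖ ^ 2 + |R - r| * ((1 / (|R - r| + 1)) ^ 2 * ‖b‖ ^ 2 / 2) =
      -‖b‖ ^ 2 * (|R - r| + 2) / (2 * (|R - r| + 1) ^ 2) := by
    field_simp; ring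
  rw [e] at this
  have h' : -‖b‖ ^ 2 * (|R - r| + 2) / (2 * (|R - r| + 1) ^ 2) < 0 :=
    div_neg_of_neg_of_pos (by nlinarith) (by positivity)
  linarith

namespace Sand

variable {n : ℕ} {r R : ℝ} {H : Euc n → ℝ} {G : Euc n → Euc n}

theorem euler (h : Sand r R H G) {y : Euc n} (hy : ‖y‖ = 1) : ⟪G y, y⟫ = H y := by
  have h1 := h.lo y y hy
  have h2 := h.hi y y hy
  rw [inner_self_one hy, hy, sub_self, mul_zero, add_zero] at h1 h2
  exact le_antisymm h1 h2

theorem hom_unit (h : Sand r R H G) {y : Euc n} (hy : ‖y‖ = 1) {t : ℝ} (ht : 0 ≤ t) :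
    H (t • y) = t * H y := by
  have h1 := h.lo (t • y) y hy
  have h2 := h.hi (t • y) y hy
  rw [inner_smul_right, inner_smul_right, inner_self_one hy, norm_smul, hy, Real.norm_eq_abs,
    abs_of_nonneg ht, sub_self, mul_zero, add_zero, h.euler hy] at h1 h2
  exact le_antisymm h2 h1

theorem H_zero (h : Sand r R H G) (hn : ∃ y : Euc n, ‖y‖ = 1) : H 0 = 0 := by
  obtain ⟨y, hy⟩ := hn
  have := h.hom_unit hy (le_refl (0 : ℝ))
  rwa [zero_smul, zero_mul] at this

theorem hom (h : Sand r R H G) (hn : ∃ y : Euc n, ‖y‖ = 1) (x : Euc n) {t : ℝ} (ht : 0 ≤ t) :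
    H (t • x) = t * H x := by
  by_cases hx : x = 0
  · rw [hx, smul_zero, h.H_zero hn, mul_zero]
  · obtain ⟨y, hy, hxy⟩ := exists_unit x hx
    rw [hxy, smul_smul, h.hom_unit hy (by positivity), h.hom_unit hy (by positivity), mul_assoc]

theorem shift (h : Sand r R H G) (s : ℝ) :
    Sand (r - s) (R - s) (fun x => H x - s * ‖x‖) (fun y => G y - s • y) where
  lo x y hy := by
    have := h.lo x y hy
    rw [inner_sub_left, inner_smul_left]; simp only [conj_trivial]; linarith
  hi x y hy := by
    have := h.hi x y hy
    rw [inner_sub_left, inner_smul_left]; simp only [conj_trivial]; linarith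
  even x := by rw [h.even, norm_neg]

theorem mono (h : Sand r R H G) {r' R' : ℝ} (hr : r' ≤ r) (hR : R ≤ R') : Sand r' R' H G where
  lo x y hy := by
    have := h.lo x y hy
    have := inner_le_norm_unit hy x
    nlinarith
  hi x y hy := by
    have := h.hi x y hy
    have := inner_le_norm_unit hy x
    nlinarith
  even := h.even

/-- Half of the cocoercivity estimate, from comparing the lower and upper bounds at a well chosen
point. -/
theorem coco_aux (h : Sand r R H G) (hr : 0 ≤ r) (hR : 0 < R) {x y : Euc n} (hx : ‖x‖ = 1)
    (hy : ‖y‖ = 1) : ‖G x - G y‖ ^ 2 / (2 * R) ≤ ⟪G x - G y, x⟫ := by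
  set a := G x - G y with ha
  have h1 := h.lo (x - R⁻¹ • a) y hy
  have h2 := h.hi (x - R⁻¹ • a) x hx
  have h3 := inner_le_norm_unit hy (x - R⁻¹ • a)
  have h4 := norm_sub_inner_le hx (x - R⁻¹ • a)
  have h5 : ‖x - R⁻¹ • a - x‖ ^ 2 = ‖a‖ ^ 2 / R ^ 2 := by
    rw [sub_sub_cancel_left, norm_neg, norm_smul, mul_pow, Real.norm_eq_abs, sq_abs]
    field_simp
  have h6 : ⟪G x, x - R⁻¹ • a⟫ - ⟪G y, x - R⁻¹ • a⟫ = ⟪a, x⟫ - ‖a‖ ^ 2 / R := by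
    rw [← inner_sub_left, ← ha, inner_sub_right, inner_smul_right, real_inner_self_eq_norm_sq]
    ring
  rw [h5] at h4
  have h7 : R * (‖a‖ ^ 2 / R ^ 2 / 2) = ‖a‖ ^ 2 / R - ‖a‖ ^ 2 / (2 * R) := by
    field_simp; ring
  have h8 := mul_le_mul_of_nonneg_left h4 hR.le
  have h9 := mul_nonneg hr (sub_nonneg.2 h3)
  linarith

/-- Cocoercivity of the gradient. -/
theorem coco (h : Sand r R H G) (hr : 0 ≤ r) (hR : 0 < R) {x y : Euc n} (hx : ‖x‖ = 1)
    (hy : ‖y‖ = 1) : ‖G x - G y‖ ^ 2 ≤ R * ⟪G x - G y, x - y⟫ := by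
  have h1 := h.coco_aux hr hR hx hy
  have h2 := h.coco_aux hr hR hy hx
  rw [norm_sub_rev, ← neg_sub (G x), inner_neg_left] at h2
  rw [inner_sub_right]
  rw [div_le_iff₀ (by positivity)] at h1 h2
  nlinarith

theorem lipG (h : Sand r R H G) (hr : 0 ≤ r) (hR : 0 < R) {x y : Euc n} (hx : ‖x‖ = 1)
    (hy : ‖y‖ = 1) : ‖G x - G y‖ ≤ R * ‖x - y‖ := by
  have h1 := h.coco hr hR hx hy
  have h2 := real_inner_le_norm (G x - G y) (x - y)
  by_contra hcon
  push Not at hcon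
  have h3 : 0 ≤ R * ‖x - y‖ := by positivity
  nlinarith

theorem odd (h : Sand r R H G) {y : Euc n} (hy : ‖y‖ = 1) : G (-y) = -G y := by
  have hy' : ‖-y‖ = 1 := by rw [norm_neg, hy]
  have e : -G (-y) = G y := by
    refine grad_uniq (H := H) (r := r) (R := R) hy (fun x => ?_) (fun x => h.hi x y hy) ?_
    · have := h.lo (-x) (-y) hy'
      rw [h.even, norm_neg, inner_neg_neg, inner_neg_right] at this
      rwa [inner_neg_left]
    · have := h.euler hy'
      rw [h.even, inner_neg_right] at this
      rw [inner_neg_left, this, h.euler hy]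
  rw [← e, neg_neg]

/-- The gradient of the perturbation `H - ‖·‖` is Lipschitz on the sphere, with a small constant. -/
theorem lipE {η : ℝ} (h : Sand (1 - η) (1 + η) H G) (hη : 0 < η) {x y : Euc n} (hx : ‖x‖ = 1)
    (hy : ‖y‖ = 1) : ‖(G x - x) - (G y - y)‖ ≤ 3 * η * ‖x - y‖ := by
  have h1 := (h.shift (1 - η)).lipG (by linarith) (by linarith) hx hy
  have e : (G x - x) - (G y - y) = (G x - (1 - η) • x - (G y - (1 - η) • y)) - η • (x - y) := by
    module
  rw [e]
  refine (norm_sub_le _ _).trans ?_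
  rw [norm_smul, Real.norm_eq_abs, abs_of_pos hη]
  linarith

/-- The gradient of the perturbation is odd, so the Lipschitz bound between antipodal points makes
it small. -/
theorem near {η : ℝ} (h : Sand (1 - η) (1 + η) H G) (hη : 0 < η) {y : Euc n} (hy : ‖y‖ = 1) :
    ‖G y - y‖ ≤ 3 * η := by
  have h1 := h.lipE hη hy (y := -y) (by rw [norm_neg, hy])
  rw [h.odd hy] at h1
  have e : G y - y - (-G y - -y) = (2 : ℝ) • (G y - y) := by module
  have e' : y - -y = (2 : ℝ) • y := by module
  rw [e, e', norm_smul, norm_smul, hy] at h1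
  norm_num at h1
  linarith

theorem abs_sub_one_le_E (h : Sand r R H G) {y : Euc n} (hy : ‖y‖ = 1) :
    |H y - 1| ≤ ‖G y - y‖ := by
  have e : H y - 1 = ⟪G y - y, y⟫ := by
    rw [inner_sub_left, h.euler hy, inner_self_one hy]
  rw [e]
  have := abs_real_inner_le_norm (G y - y) y
  rwa [hy, mul_one] at this

theorem near_one {η : ℝ} (h : Sand (1 - η) (1 + η) H G) (hη : 0 < η) {y : Euc n} (hy : ‖y‖ = 1) :
    |H y - 1| ≤ 3 * η := (h.abs_sub_one_le_E hy).trans (h.near hη hy)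

theorem mem_body (h : Sand r R H G) (hr : 0 ≤ r) {y : Euc n} (hy : ‖y‖ = 1) : G y ∈ bodyOf H := by
  intro u hu
  have := h.lo u y hy
  have := inner_le_norm_unit hy u
  nlinarith

/-- A ball of radius `r` touches the boundary of the body from inside at every boundary point. -/
theorem ball_sub (h : Sand r R H G) {y : Euc n} (hy : ‖y‖ = 1) :
    closedBall (G y - r • y) r ⊆ bodyOf H := by
  intro z hz u hu
  rw [mem_closedBall, dist_eq_norm] at hz
  rw [mem_sphere_zero_iff_norm] at hu
  have h1 := h.lo u y hy
  have h2 := real_inner_le_norm (z - (G y - r • y)) u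
  rw [hu, mul_one, inner_sub_left, inner_sub_left, inner_smul_left] at h2
  simp only [conj_trivial] at h2
  rw [hu] at h1
  linarith

theorem le_of_mem (h : Sand r R H G) (hn : ∃ y : Euc n, ‖y‖ = 1) {z : Euc n} (hz : z ∈ bodyOf H)
    (x : Euc n) : ⟪z, x⟫ ≤ H x := by
  by_cases hx : x = 0
  · rw [hx, inner_zero_right, h.H_zero hn]
  · obtain ⟨y, hy, hxy⟩ := exists_unit x hx
    rw [hxy, h.hom_unit hy (norm_nonneg _), inner_smul_right]
    exact mul_le_mul_of_nonneg_left (hz y (by simpa using hy)) (norm_nonneg _)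

end Sand

theorem convex_bodyOf {n : ℕ} (f : Euc n → ℝ) : Convex ℝ (bodyOf f) := by
  intro x hx y hy a b ha hb hab u hu
  rw [inner_add_left, inner_smul_left, inner_smul_left]
  simp only [conj_trivial]
  have e1 := mul_le_mul_of_nonneg_left (hx u hu) ha
  have e2 := mul_le_mul_of_nonneg_left (hy u hu) hb
  have : a * f u + b * f u = f u := by rw [← add_mul, hab, one_mul]
  linarith

theorem isClosed_bodyOf {n : ℕ} (f : Euc n → ℝ) : IsClosed (bodyOf f) := by
  have : bodyOf f = ⋂ u ∈ sphere (0 : Euc n) 1, {x | ⟪x, u⟫ ≤ f u} := by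
    ext x; simp [bodyOf]
  rw [this]
  exact isClosed_biInter fun u _ => isClosed_le (by fun_prop) continuous_const

theorem bodyOf_sub_ball {n : ℕ} {f : Euc n → ℝ} {C : ℝ} (hC : 0 ≤ C)
    (h : ∀ u, ‖u‖ = 1 → f u ≤ C) : bodyOf f ⊆ closedBall 0 C := by
  intro x hx
  rw [mem_closedBall_zero_iff]
  by_cases h0 : x = 0
  · rw [h0, norm_zero]; exact hC
  · obtain ⟨y, hy, hxy⟩ := exists_unit x h0
    have h1 := (hx y (by simpa using hy)).trans (h y hy)
    rw [hxy, inner_smul_left, inner_self_one hy] at h1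
    simpa using h1

theorem ball_sub_bodyOf {n : ℕ} {f : Euc n → ℝ} {c : ℝ} (h : ∀ u, ‖u‖ = 1 → c ≤ f u) :
    closedBall 0 c ⊆ bodyOf f := by
  intro x hx u hu
  rw [mem_closedBall_zero_iff] at hx
  rw [mem_sphere_zero_iff_norm] at hu
  have := real_inner_le_norm x u
  rw [hu, mul_one] at this
  exact this.trans (hx.trans (h u hu))

theorem bodyOf_ball {n : ℕ} (R : ℝ) (hR : 0 ≤ R) : bodyOf (fun x : Euc n => R * ‖x‖) = closedBall 0 R := by
  refine Subset.antisymm (bodyOf_sub_ball hR fun u hu => ?_) (ball_sub_bodyOf fun u hu => ?_) <;>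
  rw [hu, mul_one]

theorem sand_ball {n : ℕ} (R : ℝ) : Sand R R (fun x : Euc n => R * ‖x‖) (fun y => R • y) where
  lo x y hy := by rw [inner_smul_left]; simp only [conj_trivial]; linarith
  hi x y hy := by rw [inner_smul_left]; simp only [conj_trivial]; linarith
  even x := by rw [norm_neg]

namespace Sand

variable {n : ℕ} {r R : ℝ} {H : Euc n → ℝ} {G : Euc n → Euc n}

theorem bound (h : Sand r R H G) (hr : 0 ≤ r) {u : Euc n} (hu : ‖u‖ = 1) :
    r ≤ H u ∧ H u ≤ R := by
  -- compare the two bounds at `u` and `-u`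
  have hu' : ‖-u‖ = 1 := by rw [norm_neg, hu]
  have h1 := h.lo (-u) u hu
  have h2 := h.hi (-u) u hu
  rw [h.even, inner_neg_right, inner_neg_right, h.euler hu, inner_self_one hu, norm_neg, hu] at h1 h2
  constructor <;> linarith

theorem isCompact_body (h : Sand r R H G) (hr : 0 ≤ r) (hn : ∃ y : Euc n, ‖y‖ = 1) :
    IsCompact (bodyOf H) := by
  obtain ⟨y, hy⟩ := hn
  have hb := h.bound hr hy
  exact Metric.isCompact_of_isClosed_isBounded (isClosed_bodyOf H)
    (Metric.isBounded_closedBall.subset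
      (bodyOf_sub_ball (hr.trans (hb.1.trans hb.2)) fun u hu => (h.bound hr hu).2))

theorem ball_sub_body (h : Sand r R H G) (hr : 0 ≤ r) : closedBall 0 r ⊆ bodyOf H :=
  ball_sub_bodyOf fun _ hu => (h.bound hr hu).1

end Sand

/-! ### Sublinearity and linear images of sandwiched functions -/

/-- Hahn–Banach: a sublinear function has a supporting linear functional at every point. -/
theorem exists_support {n : ℕ} (N : Euc n → ℝ) (hN : ∀ c : ℝ, 0 < c → ∀ x, N (c • x) = c * N x)
    (hadd : ∀ x y, N (x + y) ≤ N x + N y) (y : Euc n) (hy : y ≠ 0) :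
    ∃ v : Euc n, ⟪v, y⟫ = N y ∧ ∀ x, ⟪v, x⟫ ≤ N x := by
  have h0 : N 0 = 0 := by
    have := hN 2 (by norm_num) 0
    rw [smul_zero] at this; linarith
  obtain ⟨g, hg1, hg2⟩ := exists_extension_of_le_sublinear
    (LinearPMap.mkSpanSingleton y (N y) hy) N hN hadd (by
      rintro ⟨x, hx⟩
      obtain ⟨t, rfl⟩ := Submodule.mem_span_singleton.1 hx
      have e : LinearPMap.mkSpanSingleton (σ := RingHom.id ℝ) y (N y) hy ⟨t • y, hx⟩ = t • N y :=
        LinearPMap.mkSpanSingleton'_apply _ _ _ _ _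
      rw [e]
      change t • N y ≤ N (t • y)
      rcases lt_trichotomy t 0 with ht | ht | ht
      · have h1 := hadd (t • y) ((-t) • y)
        rw [← add_smul, add_neg_cancel, zero_smul, h0, hN (-t) (by linarith) y] at h1
        rw [smul_eq_mul]; linarith
      · rw [ht, zero_smul, zero_smul, h0]
      · rw [hN t ht, smul_eq_mul])
  refine ⟨(InnerProductSpace.toDual ℝ (Euc n)).symm g.toContinuousLinearMap, ?_, fun x => ?_⟩
  · rw [InnerProductSpace.toDual_symm_apply]
    have := hg1 ⟨y, Submodule.mem_span_singleton_self y⟩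
    exact this.trans (LinearPMap.mkSpanSingleton_apply ℝ ℝ hy (N y))
  · rw [InnerProductSpace.toDual_symm_apply]
    exact hg2 x

/-- A positively homogeneous even function `H` such that `H - r‖·‖` and `R‖·‖ - H` are
sublinear is differentiable off the origin with the two-sided bound. -/
theorem Sand.of_sub {n : ℕ} {r R : ℝ} {H : Euc n → ℝ}
    (hhom : ∀ c : ℝ, 0 < c → ∀ x, H (c • x) = c * H x) (hev : ∀ x, H (-x) = H x)
    (h1 : ∀ x y, H (x + y) - r * ‖x + y‖ ≤ (H x - r * ‖x‖) + (H y - r * ‖y‖))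
    (h2 : ∀ x y, R * ‖x + y‖ - H (x + y) ≤ (R * ‖x‖ - H x) + (R * ‖y‖ - H y)) :
    ∃ G, Sand r R H G := by
  have key : ∀ y : Euc n, ∃ g : Euc n, ‖y‖ = 1 → (∀ x, ⟪g, x⟫ + r * (‖x‖ - ⟪y, x⟫) ≤ H x) ∧
      ∀ x, H x ≤ ⟪g, x⟫ + R * (‖x‖ - ⟪y, x⟫) := by
    intro y
    by_cases hy : ‖y‖ = 1
    swap
    · exact ⟨0, fun h => absurd h hy⟩
    have hy0 : y ≠ 0 := by rintro rfl; simp at hy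
    obtain ⟨a, ha1, ha2⟩ := exists_support (fun x => H x - r * ‖x‖) (fun c hc x => by
      simp only [hhom c hc, norm_smul, Real.norm_eq_abs, abs_of_pos hc]; ring) h1 y hy0
    obtain ⟨b, hb1, hb2⟩ := exists_support (fun x => R * ‖x‖ - H x) (fun c hc x => by
      simp only [hhom c hc, norm_smul, Real.norm_eq_abs, abs_of_pos hc]; ring) h2 y hy0
    have e1 : ∀ x, ⟪a + r • y, x⟫ + r * (‖x‖ - ⟪y, x⟫) ≤ H x := fun x => by
      have := ha2 x
      rw [inner_add_left, inner_smul_left]; simp only [conj_trivial]; linarith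
    have e2 : ∀ x, H x ≤ ⟪R • y - b, x⟫ + R * (‖x‖ - ⟪y, x⟫) := fun x => by
      have := hb2 x
      rw [inner_sub_left, inner_smul_left]; simp only [conj_trivial]; linarith
    have e3 : a + r • y = R • y - b := by
      refine grad_uniq hy e1 e2 ?_
      rw [inner_add_left, inner_smul_left, inner_sub_left, inner_smul_left, inner_self_one hy,
        ha1, hb1, hy]
      simp only [conj_trivial]; ring
    exact ⟨a + r • y, fun _ => ⟨e1, by rw [e3]; exact e2⟩⟩
  choose G hG using key
  exact ⟨G, fun x y hy => (hG y hy).1 x, fun x y hy => (hG y hy).2 x, hev⟩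

theorem Sand.le_iff {n : ℕ} {r R : ℝ} {H : Euc n → ℝ} {G : Euc n → Euc n} (h : Sand r R H G)
    (hn : ∃ y : Euc n, ‖y‖ = 1) : r ≤ R := by
  obtain ⟨y, hy⟩ := hn
  have h1 := h.lo (-y) y hy
  have h2 := h.hi (-y) y hy
  rw [inner_neg_right, inner_neg_right, inner_self_one hy, norm_neg, hy] at h1 h2
  linarith

section LinearImage

variable {n : ℕ} {A : Euc n →L[ℝ] Euc n} {ρ : ℝ}

theorem near_isom_norm (hA : ∀ x y, |⟪A x, A y⟫ - ⟪x, y⟫| ≤ ρ * ‖x‖ * ‖y‖)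
    (hρ : ρ ≤ 1 / 2) {y : Euc n} (hy : ‖y‖ = 1) : 1 - ρ ≤ ‖A y‖ ∧ ‖A y‖ ≤ 1 + ρ := by
  have h := hA y y
  rw [real_inner_self_eq_norm_sq, real_inner_self_eq_norm_sq, hy] at h
  have h' := abs_le.1 h
  have := norm_nonneg (A y)
  have hρ0 : 0 ≤ ρ := by have := (abs_nonneg _).trans h; linarith
  constructor <;> nlinarith

/-- The defect in the Cauchy–Schwarz inequality is almost preserved by a near-isometry. -/
theorem near_isom_defect (hA : ∀ x y, |⟪A x, A y⟫ - ⟪x, y⟫| ≤ ρ * ‖x‖ * ‖y‖)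
    (hρ : ρ ≤ 1 / 2) {x y : Euc n} (hx : ‖x‖ = 1) (hy : ‖y‖ = 1) :
    (1 - 3 * ρ) * (1 - ⟪y, x⟫) ≤ ‖A y‖ * ‖A x‖ - ⟪A y, A x⟫ ∧
      ‖A y‖ * ‖A x‖ - ⟪A y, A x⟫ ≤ (1 + ρ) * (1 - ⟪y, x⟫) := by
  have h1 := hA (x - y) (x - y)
  have h2 := hA (x - y) (x + y)
  have hxx := near_isom_norm hA hρ hx
  have hyy := near_isom_norm hA hρ hy
  have hρ0 : 0 ≤ ρ := by linarith
  have hin : ⟪x - y, x + y⟫ = 0 := by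
    rw [inner_sub_left, inner_add_right, inner_add_right, inner_self_one hx, inner_self_one hy,
      real_inner_comm]; ring
  have hn2 : ‖x + y‖ ≤ 2 := (norm_add_le _ _).trans (by rw [hx, hy]; norm_num)
  have hA2 : ⟪A (x - y), A (x + y)⟫ = ‖A x‖ ^ 2 - ‖A y‖ ^ 2 := by
    rw [map_sub, map_add, inner_sub_left, inner_add_right, inner_add_right,
      real_inner_self_eq_norm_sq, real_inner_self_eq_norm_sq, real_inner_comm (A x) (A y)]; ring
  have hA1 : ⟪A (x - y), A (x - y)⟫ = ‖A x‖ ^ 2 - 2 * ⟪A y, A x⟫ + ‖A y‖ ^ 2 := by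
    rw [map_sub, real_inner_self_eq_norm_sq, norm_sub_sq_real, real_inner_comm]
  have hd := norm_sub_inner_eq hx hy
  rw [hA1, real_inner_self_eq_norm_sq] at h1
  rw [hA2, hin, sub_zero] at h2
  set s := ‖x - y‖ with hs
  have hs0 : 0 ≤ s := norm_nonneg _
  have h1' := abs_le.1 h1
  have h3 : |‖A x‖ ^ 2 - ‖A y‖ ^ 2| ≤ 2 * ρ * s := by
    refine h2.trans ?_
    have : 0 ≤ ρ * s := by positivity
    nlinarith
  have h4 : |‖A x‖ - ‖A y‖| ≤ 2 * ρ * s := by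
    refine le_trans ?_ h3
    rw [show ‖A x‖ ^ 2 - ‖A y‖ ^ 2 = (‖A x‖ - ‖A y‖) * (‖A x‖ + ‖A y‖) by ring, abs_mul]
    refine le_mul_of_one_le_right (abs_nonneg _) ?_
    rw [abs_of_nonneg (by positivity)]; linarith
  have h5 : (‖A x‖ - ‖A y‖) ^ 2 ≤ 4 * ρ ^ 2 * s ^ 2 := by
    rw [← sq_abs]
    have := pow_le_pow_left₀ (abs_nonneg _) h4 2
    linarith [this, (by ring : (2 * ρ * s) ^ 2 = 4 * ρ ^ 2 * s ^ 2)]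
  have h6 : 4 * ρ ^ 2 * s ^ 2 ≤ 2 * ρ * s ^ 2 := by
    have : 0 ≤ s ^ 2 * ρ := by positivity
    nlinarith
  have h7 := sq_nonneg (‖A x‖ - ‖A y‖)
  rw [hd]
  constructor <;> nlinarith

/-- Composition with a near-isometry preserves the class `Sand`, with almost the same bounds. -/
theorem Sand.comp {r R : ℝ} {H : Euc n → ℝ} {G : Euc n → Euc n} (h : Sand r R H G)
    (hr : 0 ≤ r) (hR : 0 ≤ R) (hA : ∀ x y, |⟪A x, A y⟫ - ⟪x, y⟫| ≤ ρ * ‖x‖ * ‖y‖)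
    (hρ0 : 0 ≤ ρ) (hρ : ρ ≤ 1 / 2) :
    Sand (r * (1 - 4 * ρ)) (R * (1 + 4 * ρ)) (fun x => H (A x))
      (fun y => A.adjoint (G (‖A y‖⁻¹ • A y))) := by
  have key : ∀ x y, ‖y‖ = 1 →
      (1 - 4 * ρ) * (‖x‖ - ⟪y, x⟫) ≤ ‖A x‖ - ⟪‖A y‖⁻¹ • A y, A x⟫ ∧
        ‖A x‖ - ⟪‖A y‖⁻¹ • A y, A x⟫ ≤ (1 + 4 * ρ) * (‖x‖ - ⟪y, x⟫) := by
    intro x y hy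
    by_cases hx : x = 0
    · simp [hx]
    obtain ⟨z, hz, hxz⟩ := exists_unit x hx
    have h1 := near_isom_defect hA hρ hz hy
    have h2 := near_isom_norm hA hρ hy
    have h3 := inner_le_norm_unit hy z
    rw [hz] at h3
    set a := ‖A y‖
    have ha : 0 < a := by linarith
    have e1 : ‖A x‖ - ⟪a⁻¹ • A y, A x⟫ = ‖x‖ * (a⁻¹ * (a * ‖A z‖ - ⟪A y, A z⟫)) := by
      rw [hxz, norm_smul, norm_norm, hz, map_smul, norm_smul, norm_norm, inner_smul_left,
        inner_smul_right]
      simp only [conj_trivial]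
      field_simp
    have e2 : ‖x‖ - ⟪y, x⟫ = ‖x‖ * (1 - ⟪y, z⟫) := by
      rw [hxz, norm_smul, norm_norm, hz, inner_smul_right]; ring
    rw [e1, e2, mul_left_comm, mul_left_comm (1 + 4 * ρ)]
    constructor
    · refine mul_le_mul_of_nonneg_left ?_ (norm_nonneg _)
      rw [← div_eq_inv_mul, le_div_iff₀ ha]
      refine le_trans ?_ h1.1
      rw [mul_right_comm]
      refine mul_le_mul_of_nonneg_right ?_ (by linarith)
      rcases le_total (1 - 4 * ρ) 0 with h | h
      · nlinarith
      · nlinarith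
    · refine mul_le_mul_of_nonneg_left ?_ (norm_nonneg _)
      rw [← div_eq_inv_mul, div_le_iff₀ ha]
      refine h1.2.trans ?_
      rw [mul_right_comm]
      refine mul_le_mul_of_nonneg_right ?_ (by linarith)
      nlinarith
  have hun : ∀ y, ‖y‖ = 1 → ‖‖A y‖⁻¹ • A y‖ = 1 := by
    intro y hy
    have h2 := near_isom_norm hA hρ hy
    rw [norm_smul, norm_inv, norm_norm, inv_mul_cancel₀ (by linarith)]
  refine ⟨fun x y hy => ?_, fun x y hy => ?_, fun x => ?_⟩
  · rw [ContinuousLinearMap.adjoint_inner_left]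
    have := h.lo (A x) _ (hun y hy)
    have := mul_le_mul_of_nonneg_left (key x y hy).1 hr
    linarith
  · rw [ContinuousLinearMap.adjoint_inner_left]
    have := h.hi (A x) _ (hun y hy)
    have := mul_le_mul_of_nonneg_left (key x y hy).2 hR
    linarith
  · simp only [map_neg, h.even]

end LinearImage

/-! ### Slices and volume increments -/

set_option linter.unusedSectionVars false

section Slice

variable {U V E : Type*}
  [NormedAddCommGroup U] [InnerProductSpace ℝ U] [FiniteDimensional ℝ U] [MeasurableSpace U] [BorelSpace U]
  [NormedAddCommGroup V] [InnerProductSpace ℝ V] [FiniteDimensional ℝ V] [MeasurableSpace V] [BorelSpace V]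
  [NormedAddCommGroup E] [InnerProductSpace ℝ E] [FiniteDimensional ℝ E] [MeasurableSpace E] [BorelSpace E]

/-- `ι` and `j` are isometric inclusions of complementary orthogonal subspaces. -/
structure Frame (ι : U →ₗᵢ[ℝ] E) (j : V →ₗᵢ[ℝ] E) : Prop where
  orth : ∀ u v, ⟪ι u, j v⟫ = 0
  dim : Module.finrank ℝ U + Module.finrank ℝ V = Module.finrank ℝ E

/-- The slice of `S` over `v`. -/
def fib (ι : U →ₗᵢ[ℝ] E) (j : V →ₗᵢ[ℝ] E) (S : Set E) (v : V) : Set U := {u | ι u + j v ∈ S}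

theorem Frame.exists_equiv {ι : U →ₗᵢ[ℝ] E} {j : V →ₗᵢ[ℝ] E} (h : Frame ι j) :
    ∃ e : WithLp 2 (U × V) ≃ₗᵢ[ℝ] E, ∀ u v, e (WithLp.toLp 2 (u, v)) = ι u + j v := by
  let L : WithLp 2 (U × V) →ₗ[ℝ] E :=
    { toFun := fun x => ι x.fst + j x.snd
      map_add' := fun x y => by simp only [WithLp.add_fst, WithLp.add_snd, map_add]; abel
      map_smul' := fun c x => by simp }
  have hL : ∀ x, ‖L x‖ = ‖x‖ := by
    intro x
    have h1 : ‖L x‖ ^ 2 = ‖x‖ ^ 2 := by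
      change ‖ι x.fst + j x.snd‖ ^ 2 = _
      rw [norm_add_sq_real, h.orth, ι.norm_map, j.norm_map, WithLp.prod_norm_sq_eq_of_L2]; ring
    exact (sq_eq_sq₀ (norm_nonneg _) (norm_nonneg _)).1 h1
  let Li : WithLp 2 (U × V) →ₗᵢ[ℝ] E := ⟨L, hL⟩
  have hd : Module.finrank ℝ (WithLp 2 (U × V)) = Module.finrank ℝ E := by
    rw [← h.dim, (WithLp.linearEquiv 2 ℝ (U × V)).finrank_eq, Module.finrank_prod]
  exact ⟨Li.toLinearIsometryEquiv hd, fun u v => rfl⟩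

theorem Frame.mp {ι : U →ₗᵢ[ℝ] E} {j : V →ₗᵢ[ℝ] E} (h : Frame ι j) :
    MeasurePreserving (fun x : U × V => ι x.1 + j x.2) (volume.prod volume) volume := by
  obtain ⟨e, he⟩ := h.exists_equiv
  have := e.measurePreserving.comp (WithLp.volume_preserving_toLp U V)
  have e2 : (fun x : U × V => ι x.1 + j x.2) = ⇑e ∘ WithLp.toLp 2 := by
    ext x; exact (he x.1 x.2).symm
  rw [e2]; exact this

/-- Fubini for the orthogonal decomposition given by a frame. -/
theorem Frame.volume_slice {ι : U →ₗᵢ[ℝ] E} {j : V →ₗᵢ[ℝ] E} (h : Frame ι j) {S : Set E}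
    (hS : MeasurableSet S) : volume S = ∫⁻ v, volume (fib ι j S v) := by
  rw [← h.mp.measure_preimage hS.nullMeasurableSet,
    Measure.prod_apply_symm (h.mp.measurable hS)]
  rfl

theorem Frame.meas {ι : U →ₗᵢ[ℝ] E} {j : V →ₗᵢ[ℝ] E} (h : Frame ι j) {S : Set E}
    (hS : MeasurableSet S) : Measurable fun v => volume (fib ι j S v) :=
  measurable_measure_prodMk_right (h.mp.measurable hS)

theorem Frame.integrable {ι : U →ₗᵢ[ℝ] E} {j : V →ₗᵢ[ℝ] E} (h : Frame ι j) {S : Set E}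
    (hS : IsCompact S) : Integrable fun v => (volume (fib ι j S v)).toReal := by
  refine integrable_toReal_of_lintegral_ne_top (h.meas hS.measurableSet).aemeasurable ?_
  rw [← h.volume_slice hS.measurableSet]
  exact hS.measure_lt_top.ne

theorem isCompact_fib {ι : U →ₗᵢ[ℝ] E} {j : V →ₗᵢ[ℝ] E} {S : Set E}
    (hS : IsCompact S) (v : V) : IsCompact (fib ι j S v) := by
  have : Topology.IsClosedEmbedding fun u => ι u + j v :=
    (Homeomorph.addRight (j v)).isClosedEmbedding.comp ι.isometry.isClosedEmbedding
  exact this.isCompact_preimage hS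

theorem convex_fib {ι : U →ₗᵢ[ℝ] E} {j : V →ₗᵢ[ℝ] E} {S : Set E}
    (hS : Convex ℝ S) (v : V) : Convex ℝ (fib ι j S v) := by
  intro x hx y hy a b ha hb hab
  have := hS hx hy ha hb hab
  have e : ι (a • x + b • y) + j v = a • (ι x + j v) + b • (ι y + j v) := by
    rw [map_add, map_smul, map_smul, smul_add, smul_add, add_add_add_comm, ← add_smul, hab, one_smul]
  change ι (a • x + b • y) + j v ∈ S
  rwa [e]

theorem Frame.vol_slice {ι : U →ₗᵢ[ℝ] E} {j : V →ₗᵢ[ℝ] E} (h : Frame ι j) {S : Set E}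
    (hS : IsCompact S) : (volume S).toReal = ∫ v, (volume (fib ι j S v)).toReal := by
  rw [h.volume_slice hS.measurableSet, integral_toReal (h.meas hS.measurableSet).aemeasurable]
  exact Eventually.of_forall fun v => (isCompact_fib hS v).measure_lt_top

/-- Volume increment under Minkowski addition of a segment. -/
def HP (K : Set E) (v : E) : ℝ := (volume (K + segment ℝ 0 v)).toReal - (volume K).toReal

theorem isCompact_seg (v : E) : IsCompact (segment ℝ 0 v) := by
  rw [segment_eq_image']
  exact isCompact_Icc.image (by fun_prop)

theorem fib_add_seg {ι : U →ₗᵢ[ℝ] E} {j : V →ₗᵢ[ℝ] E} (S : Set E) (w : U) (v : V) :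
    fib ι j (S + segment ℝ 0 (ι w)) v = fib ι j S v + segment ℝ 0 w := by
  ext u
  simp only [fib, Set.mem_ofPred_eq, Set.mem_add, segment_eq_image', sub_zero, zero_add]
  constructor
  · rintro ⟨a, ha, _, ⟨t, ht, rfl⟩, hab⟩
    refine ⟨u - t • w, ?_, t • w, ⟨t, ht, rfl⟩, by abel⟩
    have : ι (u - t • w) + j v = a := by
      rw [map_sub, map_smul, sub_add_eq_add_sub, ← hab]; abel
    rwa [this]
  · rintro ⟨a, ha, _, ⟨t, ht, rfl⟩, rfl⟩
    exact ⟨_, ha, t • ι w, ⟨t, ht, rfl⟩, by rw [map_add, map_smul]; abel⟩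

theorem Frame.HP_integrable {ι : U →ₗᵢ[ℝ] E} {j : V →ₗᵢ[ℝ] E} (h : Frame ι j) {K : Set E}
    (hK : IsCompact K) (w : U) : Integrable fun v => HP (fib ι j K v) w := by
  have := (h.integrable (hK.add (isCompact_seg (ι w)))).sub (h.integrable hK)
  simp only [fib_add_seg] at this
  exact this

/-- The volume increment is the integral of the increments of the slices parallel to the segment. -/
theorem Frame.HP_slice {ι : U →ₗᵢ[ℝ] E} {j : V →ₗᵢ[ℝ] E} (h : Frame ι j) {K : Set E}
    (hK : IsCompact K) (w : U) : HP K (ι w) = ∫ v, HP (fib ι j K v) w := by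
  have hc := hK.add (isCompact_seg (ι w))
  unfold HP
  rw [h.vol_slice hc, h.vol_slice hK, ← integral_sub (h.integrable hc) (h.integrable hK)]
  simp only [fib_add_seg]

theorem HP_empty (v : E) : HP (∅ : Set E) v = 0 := by simp [HP]

/-- In dimension one the increment is the length of the segment. -/
theorem HP_real {Q : Set ℝ} (hQ : IsCompact Q) (hc : Convex ℝ Q) (hne : Q.Nonempty) (t : ℝ)
    (ht : 0 ≤ t) : HP Q t = t := by
  have hle : sInf Q ≤ sSup Q := by
    obtain ⟨x, hx⟩ := hne
    exact (csInf_le hQ.bddBelow hx).trans (le_csSup hQ.bddAbove hx)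
  have h1 : Q = Icc (sInf Q) (sSup Q) :=
    eq_Icc_of_connected_compact ⟨hne, hc.isPreconnected⟩ hQ
  unfold HP
  rw [h1, segment_eq_Icc ht, Set.Icc_add_Icc hle ht, Real.volume_Icc, Real.volume_Icc,
    ENNReal.toReal_ofReal (by linarith), ENNReal.toReal_ofReal (by linarith)]
  ring

theorem Frame.isCompact_shadow {ι : U →ₗᵢ[ℝ] E} {j : V →ₗᵢ[ℝ] E} (h : Frame ι j) {K : Set E}
    (hK : IsCompact K) : IsCompact {v | (fib ι j K v).Nonempty} := by
  obtain ⟨e, he⟩ := h.exists_equiv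
  have : {v | (fib ι j K v).Nonempty} = (fun x => (e.symm x).snd) '' K := by
    ext v
    constructor
    · rintro ⟨u, hu⟩
      refine ⟨_, hu, ?_⟩
      simp only [← he, LinearIsometryEquiv.symm_apply_apply]
      rfl
    · rintro ⟨x, hx, rfl⟩
      refine ⟨(e.symm x).fst, ?_⟩
      change ι _ + j _ ∈ K
      rw [← he]
      change e (e.symm x) ∈ K
      rwa [LinearIsometryEquiv.apply_symm_apply]
  rw [this]
  refine hK.image ?_
  exact (WithLp.prod_continuous_ofLp 2 U V).snd.comp e.symm.continuous

/-- The volume increment in direction `u` is the volume of the shadow along `u`. -/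
theorem Frame.HP_shadow {ι : ℝ →ₗᵢ[ℝ] E} {j : V →ₗᵢ[ℝ] E} (h : Frame ι j) {K : Set E}
    (hK : IsCompact K) (hc : Convex ℝ K)
    (t : ℝ) (ht : 0 ≤ t) :
    HP K (ι t) = t * (volume {v | (fib ι j K v).Nonempty}).toReal := by
  rw [h.HP_slice hK]
  have : (fun v => HP (fib ι j K v) t) =
      indicator {v | (fib ι j K v).Nonempty} (fun _ => t) := by
    ext v
    by_cases hv : (fib ι j K v).Nonempty
    · rw [indicator_of_mem (by exact hv), HP_real (isCompact_fib hK v) (convex_fib hc v) hv t ht]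
    · rw [indicator_of_notMem (by exact hv), not_nonempty_iff_eq_empty.1 hv, HP_empty]
  rw [this, integral_indicator_const _ (h.isCompact_shadow hK).measurableSet, smul_eq_mul, mul_comm]; rfl

end Slice

/-! ### Shadows along a direction -/

/-- `Jm` as a linear isometry. -/
def JmL {d : ℕ} : Euc d →ₗᵢ[ℝ] Euc (d + 1) where
  toFun := Jm
  map_add' := Jm_add
  map_smul' := Jm_smul
  norm_map' := norm_Jm

/-- The isometry `ℝ^d → ℝ^{d+1}` onto the hyperplane orthogonal to `g e0`. -/
def gJ {d : ℕ} (g : OG (d + 1)) : Euc d →ₗᵢ[ℝ] Euc (d + 1) :=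
  (Unitary.linearIsometryEquiv g).toLinearIsometry.comp JmL

theorem gJ_apply {d : ℕ} (g : OG (d + 1)) (y : Euc d) : gJ g y = g.1 (Jm y) := rfl

theorem norm_ge0 {d : ℕ} (g : OG (d + 1)) : ‖g.1 e0‖ = 1 := by rw [OG_norm, norm_e0]

/-- The isometry `ℝ → ℝ^{d+1}` onto the line spanned by `g e0`. -/
def gL {d : ℕ} (g : OG (d + 1)) : ℝ →ₗᵢ[ℝ] Euc (d + 1) :=
  LinearIsometry.toSpanSingleton ℝ (Euc (d + 1)) (norm_ge0 g)

theorem gL_apply {d : ℕ} (g : OG (d + 1)) (t : ℝ) : gL g t = t • g.1 e0 := rfl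

theorem frame_line {d : ℕ} (g : OG (d + 1)) : Frame (gL g) (gJ g) where
  orth t y := by rw [gL_apply, gJ_apply, inner_smul_left, OG_inner, Jm_orth, mul_zero]
  dim := by simp [add_comm]

/-- The shadow of `K` along `g e0`, as a subset of `ℝ^d`. -/
def shadow {d : ℕ} (g : OG (d + 1)) (K : Set (Euc (d + 1))) : Set (Euc d) :=
  {v | (fib (gL g) (gJ g) K v).Nonempty}

theorem HP_line {d : ℕ} {K : Set (Euc (d + 1))} (hK : IsCompact K) (hc : Convex ℝ K)
    (g : OG (d + 1)) {t : ℝ} (ht : 0 ≤ t) :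
    HP K (t • g.1 e0) = t * (volume (shadow g K)).toReal :=
  (frame_line g).HP_shadow hK hc t ht

theorem exists_OG_e0 {d : ℕ} {u : Euc (d + 1)} (hu : ‖u‖ = 1) : ∃ g : OG (d + 1), g.1 e0 = u := by
  obtain ⟨k, hk, -⟩ := exists_OG_swap (a := (e0 : Euc (d + 1))) (b := u) (by rw [hu, norm_e0])
  exact ⟨k, hk⟩

theorem HP_shadow_one {d : ℕ} {K : Set (Euc (d + 1))} (hK : IsCompact K) (hc : Convex ℝ K)
    (g : OG (d + 1)) : HP K (g.1 e0) = (volume (shadow g K)).toReal := by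
  have := HP_line hK hc g zero_le_one
  rwa [one_smul, one_mul] at this

theorem HP_zero {d : ℕ} (K : Set (Euc d)) : HP K 0 = 0 := by simp [HP]

theorem HP_smul {d : ℕ} {K : Set (Euc (d + 1))} (hK : IsCompact K) (hc : Convex ℝ K)
    {t : ℝ} (ht : 0 ≤ t) (v : Euc (d + 1)) : HP K (t • v) = t * HP K v := by
  by_cases hv : v = 0
  · rw [hv, smul_zero, HP_zero, mul_zero]
  obtain ⟨u, hu, hvu⟩ := exists_unit v hv
  obtain ⟨g, rfl⟩ := exists_OG_e0 hu
  rw [hvu, smul_smul, HP_line hK hc g (by positivity), HP_line hK hc g (by positivity), mul_assoc]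

theorem HP_neg {d : ℕ} (K : Set (Euc d)) (v : Euc d) : HP K (-v) = HP K v := by
  unfold HP
  have : K + segment ℝ 0 (-v) = (fun x => -v + x) '' (K + segment ℝ 0 v) := by
    have e : segment ℝ 0 (-v) = (fun x => -v + x) '' segment ℝ 0 v := by
      rw [segment_translate_image, add_zero, neg_add_cancel, segment_symm]
    rw [e, ← singleton_add, ← singleton_add, add_left_comm]
  rw [this, image_add_left, measure_preimage_add]

/-- Linear covariance of the increment: this is what makes the projection body equivariant. -/
theorem HP_image {d : ℕ} (φ : Euc d ≃ₗ[ℝ] Euc d) (K : Set (Euc d)) (v : Euc d) :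
    HP (φ '' K) (φ v) = |LinearMap.det (φ : Euc d →ₗ[ℝ] Euc d)| * HP K v := by
  unfold HP
  have h1 : φ '' K + segment ℝ 0 (φ v) = φ '' (K + segment ℝ 0 v) := by
    rw [Set.image_add, ← map_zero φ]
    congr 1
    exact (image_segment ℝ (φ : Euc d →ₗ[ℝ] Euc d).toAffineMap 0 v).symm.trans (by simp)
  have h2 : ∀ S : Set (Euc d), (volume (φ '' S)).toReal =
      |LinearMap.det (φ : Euc d →ₗ[ℝ] Euc d)| * (volume S).toReal := by
    intro S
    have := Measure.addHaar_image_linearMap volume (φ : Euc d →ₗ[ℝ] Euc d) S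
    rw [show φ '' S = (φ : Euc d →ₗ[ℝ] Euc d) '' S from rfl, this, ENNReal.toReal_mul,
      ENNReal.toReal_ofReal (abs_nonneg _)]
  rw [h1, h2, h2, mul_sub]

/-- The `(n-1)`-dimensional measure of projections is a universal multiple of `HP`. -/
theorem exists_projSupp_const (d : ℕ) : ∃ c : ℝ, 0 < c ∧ ∀ K : Set (Euc (d + 1)), IsCompact K →
    Convex ℝ K → ∀ u, ‖u‖ = 1 → projSupp K u = c * HP K u := by
  have hc := Measure.isAddLeftInvariant_eq_smul
    (Measure.hausdorffMeasure (d : ℝ) : Measure (Euc d)) volume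
  set c := Measure.addHaarScalarFactor (Measure.hausdorffMeasure (d : ℝ) : Measure (Euc d)) volume
  have hc0 : 0 < c := Measure.addHaarScalarFactor_pos_of_isAddHaarMeasure _ _
  refine ⟨c, hc0, fun K hK hcv u hu => ?_⟩
  obtain ⟨g, rfl⟩ := exists_OG_e0 hu
  rw [HP_shadow_one hK hcv]
  have him : (fun x : Euc (d + 1) => x - ⟪x, g.1 e0⟫ • g.1 e0) '' K = gJ g '' shadow g K := by
    have hdec : ∀ (s : ℝ) (v : Euc d), gL g s + gJ g v - ⟪gL g s + gJ g v, g.1 e0⟫ • g.1 e0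
        = gJ g v := by
      intro s v
      have h0 : ⟪gJ g v, g.1 e0⟫ = 0 := by
        rw [gJ_apply, OG_inner, real_inner_comm, Jm_orth]
      rw [inner_add_left, h0, gL_apply, inner_smul_left, inner_self_one (norm_ge0 g)]
      simp
    ext y
    constructor
    · rintro ⟨x, hx, rfl⟩
      obtain ⟨e, he⟩ := (frame_line g).exists_equiv
      have hx' : x = gL g (e.symm x).fst + gJ g (e.symm x).snd := by
        rw [← he]
        exact (e.apply_symm_apply x).symm
      refine ⟨(e.symm x).snd, ⟨(e.symm x).fst, ?_⟩, ?_⟩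
      · change _ + _ ∈ K
        rwa [← hx']
      · conv_rhs => rw [hx']
        exact (hdec _ _).symm
    · rintro ⟨v, ⟨s, hs⟩, rfl⟩
      exact ⟨_, hs, hdec s v⟩
  unfold projSupp
  rw [him, show (((d + 1 : ℕ) : ℝ) - 1) = (d : ℝ) by push_cast; ring,
    (gJ g).isometry.hausdorffMeasure_image (Or.inl (by positivity)), hc]
  simp [ENNReal.toReal_mul]

/-! ### Projection bodies of linear images -/

theorem projBody_eq_bodyOf {n : ℕ} (K : Set (Euc n)) : projBody K = bodyOf (projSupp K) := rfl

theorem convex_projBody {n : ℕ} (K : Set (Euc n)) : Convex ℝ (projBody K) := convex_bodyOf _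

theorem isCompact_projBody {n : ℕ} (K : Set (Euc n)) : IsCompact (projBody K) := by
  refine Metric.isCompact_of_isClosed_isBounded (isClosed_bodyOf _) ?_
  let B : Fin n → ℝ := fun i => max (projSupp K (EuclideanSpace.single i 1))
    (projSupp K (-EuclideanSpace.single i 1))
  refine (Metric.isBounded_closedBall (x := (0 : Euc n)) (r := √(∑ i, B i ^ 2))).subset ?_
  intro x hx
  rw [mem_closedBall_zero_iff, EuclideanSpace.norm_eq]
  refine Real.sqrt_le_sqrt (Finset.sum_le_sum fun i _ => ?_)
  have h1 := hx (EuclideanSpace.single i 1) (by simp)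
  have h2 := hx (-EuclideanSpace.single i 1) (by simp)
  rw [EuclideanSpace.inner_single_right] at h1
  rw [inner_neg_right, EuclideanSpace.inner_single_right] at h2
  simp only [conj_trivial, one_mul] at h1 h2
  rw [Real.norm_eq_abs, sq_abs]
  refine sq_le_sq' ?_ (h1.trans (le_max_left _ _))
  have := h2.trans (le_max_right (projSupp K (EuclideanSpace.single i 1)) _)
  change -max _ _ ≤ _
  linarith

/-- Up to the universal factor `c`, the volume increment is the support function of the projection
body on the whole space, not only on the unit sphere. -/
theorem mem_projBody_iff {d : ℕ} {c : ℝ} (hcK : ∀ K : Set (Euc (d + 1)), IsCompact K →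
    Convex ℝ K → ∀ u, ‖u‖ = 1 → projSupp K u = c * HP K u) {K : Set (Euc (d + 1))}
    (hK : IsCompact K) (hc : Convex ℝ K) (x : Euc (d + 1)) :
    x ∈ projBody K ↔ ∀ v, ⟪x, v⟫ ≤ c * HP K v := by
  constructor
  · intro h v
    by_cases hv : v = 0
    · rw [hv, HP_zero, inner_zero_right, mul_zero]
    obtain ⟨u, hu, hvu⟩ := exists_unit v hv
    have h1 := h u (by simpa using hu)
    rw [hcK K hK hc u hu] at h1
    rw [hvu, HP_smul hK hc (norm_nonneg _), inner_smul_right, mul_left_comm]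
    exact mul_le_mul_of_nonneg_left h1 (norm_nonneg _)
  · intro h u hu
    rw [mem_sphere_zero_iff_norm] at hu
    rw [hcK K hK hc u hu]
    exact h u

theorem exists_contragredient {n : ℕ} (φ : Euc n ≃ₗ[ℝ] Euc n) {s : ℝ} (hs : s ≠ 0) :
    ∃ ψ : Euc n ≃ₗ[ℝ] Euc n, ∀ x v, ⟪ψ x, φ v⟫ = s * ⟪x, v⟫ := by
  have h1 : (LinearMap.adjoint (φ.symm : Euc n →ₗ[ℝ] Euc n)) ∘ₗ
      (LinearMap.adjoint (φ : Euc n →ₗ[ℝ] Euc n)) = LinearMap.id := by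
    rw [← LinearMap.adjoint_comp]; simp
  have h2 : (LinearMap.adjoint (φ : Euc n →ₗ[ℝ] Euc n)) ∘ₗ
      (LinearMap.adjoint (φ.symm : Euc n →ₗ[ℝ] Euc n)) = LinearMap.id := by
    rw [← LinearMap.adjoint_comp]; simp
  refine ⟨LinearEquiv.ofLinearMap (s • LinearMap.adjoint (φ.symm : Euc n →ₗ[ℝ] Euc n))
    (s⁻¹ • LinearMap.adjoint (φ : Euc n →ₗ[ℝ] Euc n)) ?_ ?_, fun x v => ?_⟩
  · rw [LinearMap.smul_comp, LinearMap.comp_smul, h1, smul_smul, mul_inv_cancel₀ hs, one_smul]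
  · rw [LinearMap.smul_comp, LinearMap.comp_smul, h2, smul_smul, inv_mul_cancel₀ hs, one_smul]
  · rw [LinearEquiv.coe_ofLinearMap, LinearMap.smul_apply, inner_smul_left,
      LinearMap.adjoint_inner_left]
    simp

/-- Projection bodies of linear images: `Π(φK)` is the contragredient image of `ΠK`. -/
theorem projBody_image {d : ℕ} {K : Set (Euc (d + 1))} (hK : IsCompact K) (hc : Convex ℝ K)
    (φ : Euc (d + 1) ≃ₗ[ℝ] Euc (d + 1)) : ∃ (s : ℝ) (ψ : Euc (d + 1) ≃ₗ[ℝ] Euc (d + 1)), 0 < s ∧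
      (∀ x v, ⟪ψ x, φ v⟫ = s * ⟪x, v⟫) ∧ projBody (φ '' K) = ψ '' projBody K := by
  obtain ⟨c, hc0, hcK⟩ := exists_projSupp_const d
  have hdet : 0 < |LinearMap.det (φ : Euc (d + 1) →ₗ[ℝ] Euc (d + 1))| :=
    abs_pos.2 φ.isUnit_det'.ne_zero
  obtain ⟨ψ, hψ⟩ := exists_contragredient φ hdet.ne'
  refine ⟨_, ψ, hdet, hψ, ?_⟩
  have hφK : IsCompact (φ '' K) := hK.image φ.toContinuousLinearEquiv.continuous
  have hφc : Convex ℝ (φ '' K) := hc.linear_image (φ : Euc (d + 1) →ₗ[ℝ] Euc (d + 1))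
  ext x
  obtain ⟨y, rfl⟩ := ψ.surjective x
  rw [ψ.injective.mem_set_image, mem_projBody_iff hcK hφK hφc, mem_projBody_iff hcK hK hc,
    φ.surjective.forall]
  refine forall_congr' fun v => ?_
  rw [hψ, HP_image, mul_left_comm, mul_le_mul_iff_right₀ hdet]

theorem projBody_smul {d : ℕ} {K : Set (Euc (d + 1))} (hK : IsCompact K) (hc : Convex ℝ K)
    {t : ℝ} (ht : 0 < t) : ∃ s : ℝ, 0 < s ∧ projBody (t • K) = s • projBody K := by
  obtain ⟨s, ψ, hs, h1, h2⟩ := projBody_image hK hc (LinearEquiv.smulOfNeZero ℝ _ t ht.ne')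
  refine ⟨s / t, by positivity, ?_⟩
  have : ∀ x, ψ x = (s / t) • x := by
    intro x
    refine ext_inner_right ℝ fun v => ?_
    have := h1 x v
    rw [LinearEquiv.smulOfNeZero_apply, inner_smul_right] at this
    rw [inner_smul_left]
    simp only [conj_trivial]
    field_simp
    linarith
  rw [show t • K = (LinearEquiv.smulOfNeZero ℝ (Euc (d + 1)) t ht.ne') '' K from rfl, h2]
  exact image_congr fun x _ => this x

/-- The contragredient of the contragredient is the original map, so `Π²` commutes with linear maps
up to dilation. -/
theorem projBody_two {d : ℕ} {K : Set (Euc (d + 1))} (hK : IsCompact K) (hc : Convex ℝ K)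
    (φ : Euc (d + 1) ≃ₗ[ℝ] Euc (d + 1)) : ∃ s : ℝ, 0 < s ∧
      projBody (projBody (φ '' K)) = s • (φ '' projBody (projBody K)) := by
  obtain ⟨s, ψ, hs, h1, h2⟩ := projBody_image hK hc φ
  obtain ⟨s', ψ', hs', h1', h2'⟩ := projBody_image (isCompact_projBody K) (convex_projBody K) ψ
  refine ⟨s' / s, by positivity, ?_⟩
  rw [h2, h2', ← image_smul, image_image]
  refine image_congr fun x _ => ?_
  refine ext_inner_right ℝ fun w => ?_
  obtain ⟨v, rfl⟩ := ψ.surjective w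
  have := h1 v x
  rw [real_inner_comm] at this
  rw [h1', inner_smul_left, this, real_inner_comm v x]
  simp only [conj_trivial]
  field_simp

/-- Even iterates of `Π` commute with linear maps up to dilation. -/
theorem projBody_iter_image {d : ℕ} (m : ℕ) : ∀ {K : Set (Euc (d + 1))}, IsCompact K → Convex ℝ K →
    ∀ φ : Euc (d + 1) ≃ₗ[ℝ] Euc (d + 1), ∃ s : ℝ, 0 < s ∧
      (projBody (n := d + 1))^[2 * m] (φ '' K) = s • (φ '' (projBody (n := d + 1))^[2 * m] K) := by
  induction m with
  | zero => intro K _ _ φ; exact ⟨1, one_pos, by simp⟩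
  | succ m ih =>
    intro K hK hc φ
    obtain ⟨s, hs, h⟩ := projBody_two hK hc φ
    obtain ⟨s', hs', h'⟩ := ih (isCompact_projBody (projBody K)) (convex_projBody (projBody K))
      (φ.trans (LinearEquiv.smulOfNeZero ℝ _ s hs.ne'))
    refine ⟨s' * s, by positivity, ?_⟩
    rw [mul_add, mul_one, Function.iterate_add_apply, Function.iterate_add_apply]
    change projBody^[2 * m] (projBody (projBody (φ '' K))) =
      (s' * s) • (φ '' projBody^[2 * m] (projBody (projBody K)))
    have e : ∀ S : Set (Euc (d + 1)),
        (φ.trans (LinearEquiv.smulOfNeZero ℝ (Euc (d + 1)) s hs.ne')) '' S = s • (φ '' S) := by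
      intro S
      rw [← image_smul, image_image]; rfl
    rw [e, e] at h'
    rw [h, h', smul_smul]

/-! ### Planar sections of sandwiched bodies -/

theorem Sand.sub_ball {n : ℕ} {r R : ℝ} {H : Euc n → ℝ} {G : Euc n → Euc n} (h : Sand r R H G)
    {y : Euc n} (hy : ‖y‖ = 1) (hR : 0 ≤ R) : bodyOf H ⊆ closedBall (G y - R • y) R := by
  intro k hk
  rw [mem_closedBall, dist_eq_norm]
  set u := k - (G y - R • y) with hu
  have h1 := (h.le_of_mem ⟨y, hy⟩ hk u).trans (h.hi u y hy)
  have h2 : ⟪u, u⟫ = ⟪k, u⟫ - ⟪G y, u⟫ + R * ⟪y, u⟫ := by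
    conv_lhs => rw [hu]
    rw [inner_sub_left, inner_sub_left, inner_smul_left]
    simp only [conj_trivial]; ring
  rw [real_inner_self_eq_norm_sq] at h2
  have h3 : ‖u‖ * ‖u‖ ≤ R * ‖u‖ := by nlinarith
  by_contra hcon
  push Not at hcon
  have : 0 < ‖u‖ := by linarith
  nlinarith

section Planar

variable {n p : ℕ} {r R η : ℝ} {H : Euc n → ℝ} {G : Euc n → Euc n}
  {ι : Euc 2 →ₗᵢ[ℝ] Euc n} {j : Euc p →ₗᵢ[ℝ] Euc n}

theorem Frame.norm_sq (hF : Frame ι j) (a : Euc 2) (b : Euc p) :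
    ‖ι a + j b‖ ^ 2 = ‖a‖ ^ 2 + ‖b‖ ^ 2 := by
  rw [norm_add_sq_real, hF.orth, ι.norm_map, j.norm_map]; ring

/-- At the support point `q` of a planar section in direction `θ` the body has an outer unit normal
`ν` whose planar component is a nonnegative multiple of `θ`. -/
theorem Sand.touch (h : Sand r R H G) (hr : 0 < r) (hF : Frame ι j) {y : Euc p}
    (hne : (fib ι j (bodyOf H) y).Nonempty) {θ : Euc 2} (hθ : ‖θ‖ = 1) :
    ∃ (q : Euc 2) (κ : ℝ) (z : Euc p), 0 ≤ κ ∧ κ ^ 2 + ‖z‖ ^ 2 = 1 ∧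
      G (ι (κ • θ) + j z) = ι q + j y := by
  have hn : ∃ y : Euc n, ‖y‖ = 1 := ⟨ι θ, by rw [ι.norm_map, hθ]⟩
  have hK := h.isCompact_body hr.le hn
  have hQ := isCompact_fib (ι := ι) (j := j) hK y
  obtain ⟨q, hqQ, hqmax⟩ := hQ.exists_isMaxOn hne
    (f := fun u => ⟪u, θ⟫) (by fun_prop)
  have hqmax' : ∀ u ∈ fib ι j (bodyOf H) y, ⟪u, θ⟫ ≤ ⟪q, θ⟫ := fun u hu => hqmax hu
  have h0 : (0 : Euc n) ∈ interior (bodyOf H) :=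
    interior_mono (h.ball_sub_body hr.le) (by
      rw [interior_closedBall _ hr.ne']; exact mem_ball_self hr)
  let t : Set (Euc n) := (fun u => ι u + j y) '' {u : Euc 2 | ⟪q, θ⟫ < ⟪u, θ⟫}
  have ht : Convex ℝ t := by
    have h1 : Convex ℝ {u : Euc 2 | ⟪q, θ⟫ < ⟪u, θ⟫} := by
      have := convex_halfSpace_gt (𝕜 := ℝ) (f := fun u : Euc 2 => ⟪u, θ⟫)
        ⟨fun a b => inner_add_left _ _ _, fun c a => by
          rw [inner_smul_left]; rfl⟩ (⟪q, θ⟫)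
      exact this
    have h2 := (h1.linear_image ι.toLinearMap).add (convex_singleton (𝕜 := ℝ) (j y))
    have e : t = (ι.toLinearMap '' {u : Euc 2 | ⟪q, θ⟫ < ⟪u, θ⟫}) + {j y} := by
      rw [add_singleton, image_image]; rfl
    rw [e]; exact h2
  have hdisj : Disjoint (interior (bodyOf H)) t := by
    rw [Set.disjoint_left]
    rintro x hx ⟨u, hu, rfl⟩
    exact absurd (hqmax' u (show ι u + j y ∈ bodyOf H from interior_subset hx)) (not_le.2 hu)
  obtain ⟨f, c, hf1, hf2⟩ := geometric_hahn_banach_open (convex_bodyOf H).interior isOpen_interior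
    ht hdisj
  obtain ⟨a, rfl⟩ := (InnerProductSpace.toDual ℝ (Euc n)).surjective f
  simp only [InnerProductSpace.toDual_apply_apply] at hf1 hf2
  have hc0 : 0 < c := by simpa using hf1 0 h0
  set b := ι q + j y with hb
  have hcK : ∀ k ∈ bodyOf H, ⟪a, k⟫ ≤ c := by
    intro k hk
    have hcl : k ∈ closure (interior (bodyOf H)) := by
      rw [(convex_bodyOf H).closure_interior_eq_closure_of_nonempty_interior ⟨0, h0⟩]
      exact subset_closure hk
    exact closure_minimal (fun x hx => (hf1 x hx).le)
      (isClosed_le (by fun_prop) continuous_const : IsClosed {x | ⟪a, x⟫ ≤ c}) hcl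
  have hdir : ∀ w : Euc 2, 0 < ⟪w, θ⟫ → c ≤ ⟪a, b⟫ + ⟪a, ι w⟫ := by
    intro w hw
    have := hf2 (ι (q + w) + j y) ⟨q + w, by
      change ⟪q, θ⟫ < ⟪q + w, θ⟫
      rw [inner_add_left]; linarith, rfl⟩
    rw [map_add] at this
    rw [hb, ← inner_add_right]
    convert this using 2; abel
  have hab : ⟪a, b⟫ = c := by
    refine le_antisymm (hcK b hqQ) ?_
    refine le_of_forall_pos_le_add fun ε hε => ?_
    have h1 := hdir ((ε / (|⟪a, ι θ⟫| + 1)) • θ) (by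
      rw [inner_smul_left, inner_self_one hθ]; simp; positivity)
    rw [map_smul, inner_smul_right] at h1
    have h2 : ε / (|⟪a, ι θ⟫| + 1) * ⟪a, ι θ⟫ ≤ ε := by
      rw [div_mul_eq_mul_div, div_le_iff₀ (by positivity)]
      nlinarith [le_abs_self ⟪a, ι θ⟫]
    linarith
  obtain ⟨e, he⟩ := hF.exists_equiv
  -- decompose the normal along the frame
  obtain ⟨a1, a2, ha⟩ : ∃ a1 a2, a = ι a1 + j a2 :=
    ⟨(e.symm a).fst, (e.symm a).snd, by rw [← he]; exact (e.apply_symm_apply a).symm⟩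
  have hin : ∀ w, ⟪a, ι w⟫ = ⟪a1, w⟫ := by
    intro w
    rw [ha, inner_add_left, ι.inner_map_map, real_inner_comm (ι w) (j a2), hF.orth, add_zero]
  have hpos : ∀ w : Euc 2, 0 < ⟪w, θ⟫ → 0 ≤ ⟪a1, w⟫ := by
    intro w hw
    have := hdir w hw
    rw [hab, hin] at this; linarith
  set κ := ⟪a1, θ⟫ with hκ
  have hκ0 : 0 ≤ κ := hpos θ (by rw [inner_self_one hθ]; norm_num)
  have ha1 : a1 = κ • θ := by
    set a' := a1 - κ • θ with ha'
    have h1 : ⟪a', θ⟫ = 0 := by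
      rw [ha', inner_sub_left, inner_smul_left, inner_self_one hθ]; simp [hκ]
    have h2 : ⟪a1, a'⟫ = ‖a'‖ ^ 2 := by
      have e1 : a1 = a' + κ • θ := by rw [ha']; abel
      rw [← real_inner_self_eq_norm_sq]
      conv_lhs => rw [e1, inner_add_left, inner_smul_left, real_inner_comm a' θ, h1, mul_zero,
        add_zero]
    have h3 : ‖a'‖ ^ 2 ≤ 0 := by
      refine le_of_forall_pos_le_add fun ε hε => ?_
      have := hpos ((ε / (κ + 1)) • θ - a') (by
        rw [inner_sub_left, h1, inner_smul_left, inner_self_one hθ]; simp; positivity)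
      rw [inner_sub_right, inner_smul_right, h2, ← hκ] at this
      have : ε / (κ + 1) * κ ≤ ε := by
        rw [div_mul_eq_mul_div, div_le_iff₀ (by positivity)]; nlinarith
      linarith
    have h4 : a' = 0 := by
      have := sq_nonneg ‖a'‖
      exact norm_eq_zero.1 (pow_eq_zero_iff (two_ne_zero)|>.1 (le_antisymm h3 this))
    exact sub_eq_zero.1 h4
  have ha0 : a ≠ 0 := by
    rintro rfl
    rw [inner_zero_left] at hab; linarith
  have hN : 0 < ‖a‖ := norm_pos_iff.2 ha0
  have hNsq := hF.norm_sq a1 a2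
  rw [← ha, ha1, norm_smul, hθ, mul_one, Real.norm_eq_abs, sq_abs] at hNsq
  set ν := ‖a‖⁻¹ • a with hν
  have hν1 : ‖ν‖ = 1 := by rw [hν, norm_smul, norm_inv, norm_norm, inv_mul_cancel₀ hN.ne']
  have hGb : b = G ν := by
    refine grad_uniq (H := H) (r := 0) (R := R) hν1 (fun x => ?_) (fun x => h.hi x ν hν1) ?_
    · rw [zero_mul, add_zero]; exact h.le_of_mem hn hqQ x
    · rw [h.euler hν1]
      refine le_antisymm (h.le_of_mem hn hqQ ν) ?_
      have h1 := hcK _ (h.mem_body hr.le hν1)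
      rw [← hab] at h1
      rw [← h.euler hν1, hν, inner_smul_right, inner_smul_right, real_inner_comm, ← hν,
        real_inner_comm a b]
      exact mul_le_mul_of_nonneg_left h1 (by positivity)
  refine ⟨q, ‖a‖⁻¹ * κ, ‖a‖⁻¹ • a2, by positivity, ?_, ?_⟩
  · rw [norm_smul, norm_inv, norm_norm]
    field_simp
    linarith
  · have e2 : ι ((‖a‖⁻¹ * κ) • θ) + j (‖a‖⁻¹ • a2) = ν := by
      rw [mul_smul, ← ha1, map_smul, map_smul, ← smul_add, ← ha]
    rw [e2]; exact hGb.symm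


/-- The planar section `Q` is enclosed between two discs touching at the support point `q`, whose
radii are `r κ` and `R κ`, where `κ` is the length of the planar part of the normal. -/
theorem Sand.discs (h : Sand (1 - η) (1 + η) H G) (hη : 0 < η) (hη1 : η < 1) (hF : Frame ι j)
    {y : Euc p} (hne : (fib ι j (bodyOf H) y).Nonempty) {θ : Euc 2} (hθ : ‖θ‖ = 1) :
    ∃ (q : Euc 2) (κ : ℝ) (z : Euc p), 0 ≤ κ ∧ κ ^ 2 + ‖z‖ ^ 2 = 1 ∧ ‖y - z‖ ≤ 3 * η ∧ ∀ w : Euc 2,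
      (∃ x ∈ fib ι j (bodyOf H) y, ⟪q, w⟫ + (1 - η) * κ * (‖w‖ - ⟪θ, w⟫) ≤ ⟪x, w⟫) ∧
      ∀ x ∈ fib ι j (bodyOf H) y, ⟪x, w⟫ ≤ ⟪q, w⟫ + (1 + η) * κ * (‖w‖ - ⟪θ, w⟫) := by
  obtain ⟨q, κ, z, hκ, hκz, hG⟩ := h.touch (by linarith) hF hne hθ
  set ν := ι (κ • θ) + j z with hν
  have hν1 : ‖ν‖ = 1 := by
    have := hF.norm_sq (κ • θ) z
    rw [norm_smul, hθ, mul_one, Real.norm_eq_abs, sq_abs, hκz, ← hν] at this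
    exact (pow_eq_one_iff_of_nonneg (norm_nonneg _) two_ne_zero).1 this
  refine ⟨q, κ, z, hκ, hκz, ?_, fun w => ⟨?_, ?_⟩⟩
  · have h1 := h.near hη hν1
    have e : G ν - ν = ι (q - κ • θ) + j (y - z) := by
      rw [hG, hν, map_sub, map_sub]; abel
    have h2 := hF.norm_sq (q - κ • θ) (y - z)
    rw [← e] at h2
    refine le_trans ?_ h1
    exact abs_le_of_sq_le_sq' (by nlinarith [sq_nonneg ‖q - κ • θ‖]) (norm_nonneg _) |>.2
  · refine ⟨q - ((1 - η) * κ) • θ + ((1 - η) * κ * ‖w‖⁻¹) • w, ?_, ?_⟩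
    · refine h.ball_sub hν1 ?_
      rw [mem_closedBall, dist_eq_norm]
      have e : ι (q - ((1 - η) * κ) • θ + ((1 - η) * κ * ‖w‖⁻¹) • w) + j y - (G ν - (1 - η) • ν)
          = (1 - η) • (ι ((κ * ‖w‖⁻¹) • w) + j z) := by
        rw [hG, hν]; simp only [map_add, map_sub, map_smul]; module
      rw [e, norm_smul, Real.norm_eq_abs, abs_of_pos (by linarith : 0 < 1 - η)]
      refine mul_le_of_le_one_right (by linarith) ?_
      have h1 := hF.norm_sq ((κ * ‖w‖⁻¹) • w) z
      rw [norm_smul, norm_mul, norm_inv, norm_norm, Real.norm_eq_abs, mul_assoc, mul_pow, sq_abs] at h1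
      have h2 : ‖w‖⁻¹ * ‖w‖ ≤ 1 := inv_mul_le_one
      have h3 : (‖w‖⁻¹ * ‖w‖) ^ 2 ≤ 1 := pow_le_one₀ (by positivity) h2
      have h4 : ‖ι ((κ * ‖w‖⁻¹) • w) + j z‖ ^ 2 ≤ 1 := by nlinarith [sq_nonneg κ]
      exact (sq_le_one_iff₀ (norm_nonneg _)).1 h4
    · rw [inner_add_left, inner_sub_left, inner_smul_left, inner_smul_left,
        real_inner_self_eq_norm_sq]
      simp only [conj_trivial]
      have : ‖w‖⁻¹ * ‖w‖ ^ 2 = ‖w‖ := by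
        by_cases hw : ‖w‖ = 0
        · rw [hw]; simp
        · field_simp
      rw [mul_assoc _ ‖w‖⁻¹, this]
      exact le_of_eq (by ring)
  · intro x hx
    have h1 := h.sub_ball hν1 (by linarith) hx
    rw [mem_closedBall, dist_eq_norm] at h1
    have e : ι x + j y - (G ν - (1 + η) • ν) = ι (x - q + ((1 + η) * κ) • θ) + j ((1 + η) • z) := by
      rw [hG, hν]; simp only [map_add, map_sub, map_smul]; module
    have h2 := hF.norm_sq (x - q + ((1 + η) * κ) • θ) ((1 + η) • z)
    rw [← e, norm_smul, mul_pow, Real.norm_eq_abs, sq_abs] at h2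
    have h3 : ‖x - q + ((1 + η) * κ) • θ‖ ≤ (1 + η) * κ := by
      refine abs_le_of_sq_le_sq' ?_ (by positivity) |>.2
      have : ‖ι x + j y - (G ν - (1 + η) • ν)‖ ^ 2 ≤ (1 + η) ^ 2 := pow_le_pow_left₀ (norm_nonneg _) h1 2
      nlinarith
    have h4 := real_inner_le_norm (x - q + ((1 + η) * κ) • θ) w
    rw [inner_add_left, inner_sub_left, inner_smul_left] at h4
    simp only [conj_trivial] at h4
    have h5 := mul_le_mul_of_nonneg_right h3 (norm_nonneg w)
    linarith

end Planar

/-! ### Planar sections and the curvature of the volume increment -/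

theorem le_suppFn {n : ℕ} {K : Set (Euc n)} (hK : IsCompact K) {x : Euc n} (hx : x ∈ K) (a : Euc n) :
    ⟪x, a⟫ ≤ suppFn K a :=
  le_csSup ((hK.image (f := fun y => ⟪y, a⟫) (by fun_prop)).bddAbove) ⟨x, hx, rfl⟩

theorem suppFn_le {n : ℕ} {K : Set (Euc n)} (hne : K.Nonempty) {a : Euc n} {C : ℝ}
    (h : ∀ x ∈ K, ⟪x, a⟫ ≤ C) : suppFn K a ≤ C :=
  csSup_le (hne.image _) (by rintro _ ⟨x, hx, rfl⟩; exact h x hx)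

theorem suppFn_smul {n : ℕ} (K : Set (Euc n)) {t : ℝ} (ht : 0 ≤ t) (a : Euc n) :
    suppFn K (t • a) = t * suppFn K a := by
  unfold suppFn
  rw [← smul_eq_mul, ← Real.sSup_smul_of_nonneg ht]
  congr 1
  ext z
  simp only [Set.mem_image, Set.mem_smul_set, inner_smul_right, smul_eq_mul]
  constructor
  · rintro ⟨x, hx, rfl⟩; exact ⟨_, ⟨x, hx, rfl⟩, rfl⟩
  · rintro ⟨_, ⟨x, hx, rfl⟩, rfl⟩; exact ⟨x, hx, rfl⟩

/-- Rotation of the plane by a right angle. -/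
def rot2 : Euc 2 →ₗᵢ[ℝ] Euc 2 where
  toFun x := !₂[-x 1, x 0]
  map_add' x y := by ext i; fin_cases i <;> simp [add_comm]
  map_smul' c x := by ext i; fin_cases i <;> simp
  norm_map' x := by simp [EuclideanSpace.norm_eq, Fin.sum_univ_two, add_comm]

theorem rot2_orth (x : Euc 2) : ⟪x, rot2 x⟫ = 0 := by
  simp [rot2, PiLp.inner_apply, Fin.sum_univ_two]; ring

theorem frame_plane {u : Euc 2} (hu : ‖u‖ = 1) :
    Frame (LinearIsometry.toSpanSingleton ℝ (Euc 2) hu)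
      (LinearIsometry.toSpanSingleton ℝ (Euc 2) (v := rot2 u) (by rw [rot2.norm_map, hu])) where
  orth s t := by
    rw [LinearIsometry.toSpanSingleton_apply, LinearIsometry.toSpanSingleton_apply,
      inner_smul_left, inner_smul_right, rot2_orth, mul_zero, mul_zero]
  dim := by simp

/-- For planar bodies the increment is the width in the orthogonal direction. -/
theorem HP_planar {Q : Set (Euc 2)} (hQ : IsCompact Q) (hc : Convex ℝ Q) (hne : Q.Nonempty)
    (v : Euc 2) : HP Q v = suppFn Q (rot2 v) + suppFn Q (-rot2 v) := by
  by_cases hv : v = 0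
  · have e : suppFn Q 0 = 0 := by
      have := suppFn_smul Q (le_refl (0 : ℝ)) (0 : Euc 2)
      rwa [zero_smul, zero_mul] at this
    rw [hv, HP_zero, map_zero, neg_zero, e, add_zero]
  obtain ⟨u, hu, hvu⟩ := exists_unit v hv
  have hF := frame_plane hu
  have h1 := hF.HP_shadow hQ hc ‖v‖ (norm_nonneg _)
  rw [LinearIsometry.toSpanSingleton_apply, ← hvu] at h1
  rw [h1]
  have h2 : suppFn Q (rot2 v) + suppFn Q (-rot2 v)
      = ‖v‖ * (suppFn Q (rot2 u) + suppFn Q (-rot2 u)) := by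
    conv_lhs => rw [hvu, map_smul, ← smul_neg, suppFn_smul _ (norm_nonneg _),
      suppFn_smul _ (norm_nonneg _), ← mul_add]
  rw [h2]
  congr 1
  set e := rot2 u with he
  have he1 : ‖e‖ = 1 := by rw [he, rot2.norm_map, hu]
  set S := {v | (fib (LinearIsometry.toSpanSingleton ℝ (Euc 2) hu)
    (LinearIsometry.toSpanSingleton ℝ (Euc 2) he1) Q v).Nonempty} with hS
  have hcoord : ∀ s t : ℝ, ⟪s • u + t • e, e⟫ = t := by
    intro s t
    rw [inner_add_left, inner_smul_left, inner_smul_left, inner_self_one he1, he, rot2_orth]; simp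
  have hSim : S = (fun x => ⟪x, e⟫) '' Q := by
    ext t
    constructor
    · rintro ⟨s, hs⟩
      exact ⟨_, hs, hcoord s t⟩
    · rintro ⟨x, hx, rfl⟩
      obtain ⟨E, hE⟩ := hF.exists_equiv
      obtain ⟨s, t, hst⟩ : ∃ s t : ℝ, x = s • u + t • e :=
        ⟨(E.symm x).fst, (E.symm x).snd, by
          have := hE (E.symm x).fst (E.symm x).snd
          rw [LinearIsometry.toSpanSingleton_apply, LinearIsometry.toSpanSingleton_apply] at this
          rw [← this]; exact (E.apply_symm_apply x).symm⟩
      refine ⟨s, ?_⟩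
      change s • u + ⟪x, e⟫ • e ∈ Q
      rwa [hst, hcoord, ← hst]
  have hSc : IsCompact S := by rw [hSim]; exact hQ.image (by fun_prop)
  have hSne : S.Nonempty := by rw [hSim]; exact hne.image _
  have hSconv : Convex ℝ S := by
    rw [hSim]
    exact hc.is_linear_image ⟨fun a b => inner_add_left _ _ _, fun c a => by
      rw [inner_smul_left]; rfl⟩
  have e1 : suppFn Q e = sSup S := by rw [hSim]; rfl
  have e2 : suppFn Q (-e) = - sInf S := by
    unfold suppFn
    rw [← Real.sSup_neg, hSim]
    congr 1
    ext z
    simp only [Set.mem_image, Set.mem_neg, inner_neg_right]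
    constructor
    · rintro ⟨x, hx, rfl⟩; exact ⟨x, hx, by ring⟩
    · rintro ⟨x, hx, h⟩; exact ⟨x, hx, by linarith⟩
  have hle : sInf S ≤ sSup S := by
    obtain ⟨x, hx⟩ := hSne
    exact (csInf_le hSc.bddBelow hx).trans (le_csSup hSc.bddAbove hx)
  have hIcc : S = Icc (sInf S) (sSup S) :=
    eq_Icc_of_connected_compact ⟨hSne, hSconv.isPreconnected⟩ hSc
  rw [e1, e2]
  conv_lhs => rw [hIcc]
  rw [Real.volume_Icc, ENNReal.toReal_ofReal (by linarith)]
  ring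

/-- `kap t y = √(1 - (‖y‖ + t)²)` is (for `t = 0`) the radius of the planar section of the unit ball
at height `y`. -/
def kap {p : ℕ} (t : ℝ) (y : Euc p) : ℝ := √(1 - (max 0 (‖y‖ + t)) ^ 2)

theorem kap_nonneg {p : ℕ} (t : ℝ) (y : Euc p) : 0 ≤ kap t y := Real.sqrt_nonneg _

theorem kap_le_one {p : ℕ} (t : ℝ) (y : Euc p) : kap t y ≤ 1 := by
  unfold kap
  rw [Real.sqrt_le_one]
  nlinarith [sq_nonneg (max 0 (‖y‖ + t))]

theorem continuous_kap {p : ℕ} (t : ℝ) : Continuous (kap t : Euc p → ℝ) := by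
  unfold kap; fun_prop

theorem continuous_kap' {p : ℕ} (y : Euc p) : Continuous fun t => kap t y := by
  unfold kap; fun_prop

theorem kap_eq_zero {p : ℕ} {t : ℝ} {y : Euc p} (h : 1 ≤ ‖y‖ + t) : kap t y = 0 := by
  unfold kap
  rw [max_eq_right (by linarith)]
  exact Real.sqrt_eq_zero_of_nonpos (by nlinarith)

theorem kap_le_indicator {p : ℕ} {t : ℝ} (ht : -1 ≤ t) (y : Euc p) :
    kap t y ≤ (closedBall (0 : Euc p) 2).indicator 1 y := by
  by_cases hy : y ∈ closedBall (0 : Euc p) 2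
  · rw [indicator_of_mem hy]; exact kap_le_one t y
  · rw [indicator_of_notMem hy]
    rw [mem_closedBall_zero_iff, not_le] at hy
    rw [kap_eq_zero (by linarith)]

theorem integrable_ind2 (p : ℕ) :
    Integrable ((closedBall (0 : Euc p) 2).indicator (1 : Euc p → ℝ)) :=
  (integrable_indicator_iff measurableSet_closedBall).2
    (integrableOn_const (measure_closedBall_lt_top.ne))

theorem integrable_kap {p : ℕ} {t : ℝ} (ht : -1 ≤ t) : Integrable (kap t : Euc p → ℝ) := by
  refine (integrable_ind2 p).mono' (continuous_kap t).aestronglyMeasurable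
    (Eventually.of_forall fun y => ?_)
  rw [Real.norm_eq_abs, abs_of_nonneg (kap_nonneg t y)]
  exact kap_le_indicator ht y

/-- The integral of `kap t` over `ℝ^p`. -/
def kapI (p : ℕ) (t : ℝ) : ℝ := ∫ y : Euc p, kap t y

theorem tendsto_kapI (p : ℕ) : Tendsto (kapI p) (𝓝 0) (𝓝 (kapI p 0)) := by
  refine tendsto_integral_filter_of_dominated_convergence _
    (Eventually.of_forall fun t => (continuous_kap t).aestronglyMeasurable) ?_ (integrable_ind2 p)
    (Eventually.of_forall fun y => (continuous_kap' y).tendsto 0)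
  filter_upwards [lt_mem_nhds (show (-1 : ℝ) < 0 by norm_num)] with t ht
  refine Eventually.of_forall fun y => ?_
  rw [Real.norm_eq_abs, abs_of_nonneg (kap_nonneg t y)]
  exact kap_le_indicator ht.le y

theorem kapI_pos (p : ℕ) : 0 < kapI p 0 := by
  refine (continuous_kap 0).integral_pos_of_hasCompactSupport_nonneg_nonzero (x := 0) ?_
    (fun y => kap_nonneg 0 y) ?_
  · refine HasCompactSupport.intro (isCompact_closedBall (0 : Euc p) 2) fun y hy => ?_
    rw [mem_closedBall_zero_iff, not_le] at hy
    exact kap_eq_zero (by linarith)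
  · simp [kap]

section Planar

variable {n p : ℕ} {r R η : ℝ} {H : Euc n → ℝ} {G : Euc n → Euc n}
  {ι : Euc 2 →ₗᵢ[ℝ] Euc n} {j : Euc p →ₗᵢ[ℝ] Euc n}

/-- The subadditivity defect of the support function of a planar section of the body is comparable to
that of a disc, because the section is enclosed between touching discs in every direction. -/
theorem Sand.supp_defect (h : Sand (1 - η) (1 + η) H G) (hη : 0 < η) (hη1 : η < 1) (hF : Frame ι j)
    {y : Euc p} (hne : (fib ι j (bodyOf H) y).Nonempty) (a b : Euc 2) :
    (1 - η) * kap (3 * η) y * (‖a‖ + ‖b‖ - ‖a + b‖) ≤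
      suppFn (fib ι j (bodyOf H) y) a + suppFn (fib ι j (bodyOf H) y) b
        - suppFn (fib ι j (bodyOf H) y) (a + b) ∧
    suppFn (fib ι j (bodyOf H) y) a + suppFn (fib ι j (bodyOf H) y) b
        - suppFn (fib ι j (bodyOf H) y) (a + b) ≤
      (1 + η) * kap (-(3 * η)) y * (‖a‖ + ‖b‖ - ‖a + b‖) := by
  obtain ⟨θ, hθ, hθab⟩ : ∃ θ : Euc 2, ‖θ‖ = 1 ∧ ⟪θ, a + b⟫ = ‖a + b‖ := by
    by_cases hab : a + b = 0
    · exact ⟨e0, norm_e0, by rw [hab, inner_zero_right, norm_zero]⟩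
    · obtain ⟨θ, hθ, e⟩ := exists_unit _ hab
      refine ⟨θ, hθ, ?_⟩
      conv_lhs => rw [e, inner_smul_right, inner_self_one hθ, mul_one]
  have hn : ∃ y : Euc n, ‖y‖ = 1 := ⟨ι θ, by rw [ι.norm_map, hθ]⟩
  have hQ := isCompact_fib (ι := ι) (j := j) (h.isCompact_body (by linarith) hn) y
  obtain ⟨q, κ, z, hκ, hκz, hyz, hw⟩ := h.discs hη hη1 hF hne hθ
  set Q := fib ι j (bodyOf H) y
  have hz1 : ‖z‖ ≤ ‖y‖ + 3 * η := by
    have := norm_sub_norm_le z y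
    rw [norm_sub_rev] at this; linarith
  have hz2 : ‖y‖ - 3 * η ≤ ‖z‖ := by
    have := norm_sub_norm_le y z
    linarith
  have hk1 : kap (3 * η) y ≤ κ := by
    unfold kap
    rw [max_eq_right (by positivity), Real.sqrt_le_iff]
    refine ⟨hκ, ?_⟩
    nlinarith [norm_nonneg z]
  have hk2 : κ ≤ kap (-(3 * η)) y := by
    unfold kap
    refine Real.le_sqrt_of_sq_le ?_
    have : max 0 (‖y‖ + -(3 * η)) ≤ ‖z‖ := max_le (norm_nonneg _) (by linarith)
    have := pow_le_pow_left₀ (le_max_left _ _) this 2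
    linarith
  have hD : 0 ≤ ‖a‖ + ‖b‖ - ‖a + b‖ := by linarith [norm_add_le a b]
  have hDe : (‖a‖ - ⟪θ, a⟫) + (‖b‖ - ⟪θ, b⟫) = ‖a‖ + ‖b‖ - ‖a + b‖ := by
    rw [← hθab, inner_add_right]; ring
  have hab : suppFn Q (a + b) = ⟪q, a⟫ + ⟪q, b⟫ := by
    rw [← inner_add_right]
    obtain ⟨⟨x, hx, h1⟩, h2⟩ := hw (a + b)
    rw [hθab, sub_self, mul_zero, add_zero] at h1 h2
    exact le_antisymm (suppFn_le hne h2) (h1.trans (le_suppFn hQ hx _))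
  have hlow : ∀ w, ⟪q, w⟫ + (1 - η) * κ * (‖w‖ - ⟪θ, w⟫) ≤ suppFn Q w := fun w => by
    obtain ⟨⟨x, hx, h1⟩, h2⟩ := hw w
    exact h1.trans (le_suppFn hQ hx _)
  have hup : ∀ w, suppFn Q w ≤ ⟪q, w⟫ + (1 + η) * κ * (‖w‖ - ⟪θ, w⟫) := fun w =>
    suppFn_le hne (hw w).2
  rw [hab]
  constructor
  · have h1 : (1 - η) * kap (3 * η) y * (‖a‖ + ‖b‖ - ‖a + b‖) ≤ (1 - η) * κ * (‖a‖ + ‖b‖ - ‖a + b‖) :=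
      mul_le_mul_of_nonneg_right (mul_le_mul_of_nonneg_left hk1 (by linarith)) hD
    rw [← hDe] at h1 ⊢
    have h2 := hlow a
    have h3 := hlow b
    nlinarith
  · have h1 : (1 + η) * κ * (‖a‖ + ‖b‖ - ‖a + b‖) ≤
        (1 + η) * kap (-(3 * η)) y * (‖a‖ + ‖b‖ - ‖a + b‖) :=
      mul_le_mul_of_nonneg_right (mul_le_mul_of_nonneg_left hk2 (by linarith)) hD
    rw [← hDe] at h1 ⊢
    have h2 := hup a
    have h3 := hup b
    nlinarith

/-- The same comparison for the increments of the planar sections, which are their widths. -/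
theorem Sand.fib_defect (h : Sand (1 - η) (1 + η) H G) (hη : 0 < η) (hη1 : η < 1) (hF : Frame ι j)
    (y : Euc p) (a b : Euc 2) :
    2 * (1 - η) * (‖a‖ + ‖b‖ - ‖a + b‖) * kap (3 * η) y ≤
      HP (fib ι j (bodyOf H) y) a + HP (fib ι j (bodyOf H) y) b - HP (fib ι j (bodyOf H) y) (a + b) ∧
    HP (fib ι j (bodyOf H) y) a + HP (fib ι j (bodyOf H) y) b - HP (fib ι j (bodyOf H) y) (a + b) ≤
      2 * (1 + η) * (‖a‖ + ‖b‖ - ‖a + b‖) * kap (-(3 * η)) y := by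
  have hD : 0 ≤ ‖a‖ + ‖b‖ - ‖a + b‖ := by linarith [norm_add_le a b]
  by_cases hne : (fib ι j (bodyOf H) y).Nonempty
  · have hn : ∃ y : Euc n, ‖y‖ = 1 := ⟨ι e0, by rw [ι.norm_map, norm_e0]⟩
    have hQ := isCompact_fib (ι := ι) (j := j) (h.isCompact_body (by linarith) hn) y
    have hc := convex_fib (ι := ι) (j := j) (convex_bodyOf H) y
    rw [HP_planar hQ hc hne, HP_planar hQ hc hne, HP_planar hQ hc hne, map_add, neg_add]
    have h1 := h.supp_defect hη hη1 hF hne (rot2 a) (rot2 b)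
    have h2 := h.supp_defect hη hη1 hF hne (-rot2 a) (-rot2 b)
    rw [← neg_add, norm_neg, norm_neg, norm_neg, ← map_add, rot2.norm_map, rot2.norm_map,
      rot2.norm_map] at h2
    rw [← map_add, rot2.norm_map, rot2.norm_map, rot2.norm_map] at h1
    rw [← neg_add, ← map_add]
    constructor <;> linarith [h1.1, h1.2, h2.1, h2.2]
  · rw [Set.not_nonempty_iff_eq_empty.1 hne]
    simp only [HP_empty]
    have hy : 1 - η < ‖y‖ := by
      by_contra hcon
      push Not at hcon
      refine hne ⟨0, ?_⟩
      refine h.ball_sub_body (by linarith) ?_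
      rw [map_zero, zero_add, mem_closedBall_zero_iff, j.norm_map]; exact hcon
    rw [kap_eq_zero (by linarith)]
    have := kap_nonneg (-(3 * η)) y
    have h1 : 0 ≤ 2 * (1 + η) * (‖a‖ + ‖b‖ - ‖a + b‖) * kap (-(3 * η)) y := by positivity
    constructor <;> linarith

/-- Integration of `Sand.fib_defect` over all sections parallel to a plane. -/
theorem Sand.frame_defect (h : Sand (1 - η) (1 + η) H G) (hη : 0 < η) (hη1 : η < 1 / 3)
    (hF : Frame ι j) (a b : Euc 2) :
    2 * (1 - η) * (‖a‖ + ‖b‖ - ‖a + b‖) * kapI p (3 * η) ≤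
      HP (bodyOf H) (ι a) + HP (bodyOf H) (ι b) - HP (bodyOf H) (ι a + ι b) ∧
    HP (bodyOf H) (ι a) + HP (bodyOf H) (ι b) - HP (bodyOf H) (ι a + ι b) ≤
      2 * (1 + η) * (‖a‖ + ‖b‖ - ‖a + b‖) * kapI p (-(3 * η)) := by
  have hn : ∃ y : Euc n, ‖y‖ = 1 := ⟨ι e0, by rw [ι.norm_map, norm_e0]⟩
  have hK := h.isCompact_body (by linarith) hn
  have ia := hF.HP_integrable hK a
  have ib := hF.HP_integrable hK b
  have iab := hF.HP_integrable hK (a + b)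
  have is : Integrable fun v => HP (fib ι j (bodyOf H) v) a + HP (fib ι j (bodyOf H) v) b := ia.add ib
  rw [← map_add, hF.HP_slice hK, hF.HP_slice hK, hF.HP_slice hK, ← integral_add ia ib,
    ← integral_sub is iab, kapI, kapI, ← integral_const_mul, ← integral_const_mul]
  constructor
  · exact integral_mono ((integrable_kap (by linarith)).const_mul _) (is.sub iab)
      fun y => (h.fib_defect hη (by linarith) hF y a b).1
  · exact integral_mono (is.sub iab) ((integrable_kap (by linarith)).const_mul _)
      fun y => (h.fib_defect hη (by linarith) hF y a b).2

end Planar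

/-! ### The projection operator preserves closeness to the ball -/

/-- The isometry `ℝ² → ℝ^{p+2}` onto the plane spanned by `g e0` and `g (Jm (k e0))`. -/
def planeI {p : ℕ} (g : OG (p + 2)) (k : OG (p + 1)) : Euc 2 →ₗᵢ[ℝ] Euc (p + 2) where
  toFun u := g.1 (u 0 • e0 + u 1 • Jm (k.1 e0))
  map_add' u v := by rw [← map_add]; congr 1; simp only [PiLp.add_apply]; module
  map_smul' c u := by
    rw [RingHom.id_apply, ← map_smul]; congr 1; simp only [PiLp.smul_apply, smul_eq_mul]; module
  norm_map' u := by
    change ‖g.1 (u 0 • e0 + u 1 • Jm (k.1 e0))‖ = ‖u‖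
    rw [OG_norm, ← sq_eq_sq₀ (norm_nonneg _) (norm_nonneg _), norm_add_sq_real, inner_smul_left,
      inner_smul_right, Jm_orth, norm_smul, norm_smul, norm_e0, norm_Jm, norm_ge0,
      EuclideanSpace.norm_sq_eq, Fin.sum_univ_two]
    simp

theorem planeI_apply {p : ℕ} (g : OG (p + 2)) (k : OG (p + 1)) (u : Euc 2) :
    planeI g k u = g.1 (u 0 • e0 + u 1 • Jm (k.1 e0)) := rfl

theorem frame_planeI {p : ℕ} (g : OG (p + 2)) (k : OG (p + 1)) :
    Frame (planeI g k) ((gJ g).comp (gJ k)) where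
  orth u z := by
    change ⟪planeI g k u, gJ g (gJ k z)⟫ = 0
    rw [gJ_apply, gJ_apply, planeI_apply, OG_inner, inner_add_left,
      inner_smul_left, inner_smul_left, Jm_orth, inner_Jm, Tl_Jm, OG_inner, Jm_orth]
    simp
  dim := by simp [add_comm]

/-- Any two vectors lie in the plane of some frame. -/
theorem exists_frame {p : ℕ} (x y : Euc (p + 2)) : ∃ (ι : Euc 2 →ₗᵢ[ℝ] Euc (p + 2))
    (j : Euc p →ₗᵢ[ℝ] Euc (p + 2)), Frame ι j ∧ ∃ a b, ι a = x ∧ ι b = y := by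
  have hx : ∀ {d : ℕ} (x : Euc (d + 1)), ∃ g : OG (d + 1), g.1 (‖x‖ • e0) = x := fun x =>
    let ⟨g, hg, _⟩ := exists_OG_swap (a := ‖x‖ • (e0 : Euc _)) (b := x) (by simp [norm_smul])
    ⟨g, hg⟩
  obtain ⟨g, hg⟩ := hx x
  set y' := (g⁻¹).1 y with hy'
  obtain ⟨k, hk⟩ := hx (Tl y')
  refine ⟨planeI g k, (gJ g).comp (gJ k), frame_planeI g k, !₂[‖x‖, 0], !₂[⟪y', e0⟫, ‖Tl y'‖], ?_, ?_⟩
  · rw [planeI_apply]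
    simpa using hg
  · rw [planeI_apply]
    have e : ‖Tl y'‖ • Jm (k.1 e0) = y' - ⟪y', e0⟫ • e0 := by
      rw [← Jm_Tl, ← Jm_smul, ← map_smul, hk]
    have e2 : (!₂[⟪y', e0⟫, ‖Tl y'‖] : Euc 2) 0 • (e0 : Euc (p + 2)) +
        (!₂[⟪y', e0⟫, ‖Tl y'‖] : Euc 2) 1 • Jm (k.1 e0) = y' := by
      simp only [Matrix.cons_val_zero, Matrix.cons_val_one]
      rw [e]; abel
    rw [e2, hy', ← OG_mul_apply, mul_inv_cancel]; rfl

/-- The subadditivity defect of the support function of the projection body is comparable to that of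
the norm. -/
theorem Sand.defect {p : ℕ} {η : ℝ} {H : Euc (p + 2) → ℝ} {G : Euc (p + 2) → Euc (p + 2)}
    (h : Sand (1 - η) (1 + η) H G) (hη : 0 < η) (hη1 : η < 1 / 3) (x y : Euc (p + 2)) :
    2 * (1 - η) * (‖x‖ + ‖y‖ - ‖x + y‖) * kapI p (3 * η) ≤
      HP (bodyOf H) x + HP (bodyOf H) y - HP (bodyOf H) (x + y) ∧
    HP (bodyOf H) x + HP (bodyOf H) y - HP (bodyOf H) (x + y) ≤
      2 * (1 + η) * (‖x‖ + ‖y‖ - ‖x + y‖) * kapI p (-(3 * η)) := by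
  obtain ⟨ι, j, hF, a, b, rfl, rfl⟩ := exists_frame x y
  have := h.frame_defect hη hη1 hF a b
  rwa [← ι.norm_map a, ← ι.norm_map b, ← ι.norm_map (a + b), map_add] at this

theorem tendsto_low (p : ℕ) : Tendsto (fun η => (1 - η) * kapI p (3 * η)) (𝓝 0) (𝓝 (kapI p 0)) := by
  have h1 : Tendsto (fun η : ℝ => 3 * η) (𝓝 0) (𝓝 0) := by
    have : Continuous fun η : ℝ => 3 * η := by fun_prop
    simpa using this.tendsto 0
  have h2 : Tendsto (fun η : ℝ => 1 - η) (𝓝 0) (𝓝 1) := by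
    have : Continuous fun η : ℝ => 1 - η := by fun_prop
    simpa using this.tendsto 0
  simpa using h2.mul ((tendsto_kapI p).comp h1)

theorem tendsto_high (p : ℕ) :
    Tendsto (fun η => (1 + η) * kapI p (-(3 * η))) (𝓝 0) (𝓝 (kapI p 0)) := by
  have h1 : Tendsto (fun η : ℝ => -(3 * η)) (𝓝 0) (𝓝 0) := by
    have : Continuous fun η : ℝ => -(3 * η) := by fun_prop
    simpa using this.tendsto 0
  have h2 : Tendsto (fun η : ℝ => 1 + η) (𝓝 0) (𝓝 1) := by
    have : Continuous fun η : ℝ => 1 + η := by fun_prop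
    simpa using this.tendsto 0
  simpa using h2.mul ((tendsto_kapI p).comp h1)

theorem HP_ball {p : ℕ} {u : Euc (p + 2)} (hu : ‖u‖ = 1) :
    HP (closedBall (0 : Euc (p + 2)) 1) u = 2 * kapI p 0 := by
  have h0 : bodyOf (fun x : Euc (p + 2) => 1 * ‖x‖) = closedBall 0 1 := bodyOf_ball 1 zero_le_one
  have key : ∀ᶠ η : ℝ in 𝓝[>] 0, 2 * ((1 - η) * kapI p (3 * η)) ≤ HP (closedBall (0 : Euc (p + 2)) 1) u ∧
      HP (closedBall (0 : Euc (p + 2)) 1) u ≤ 2 * ((1 + η) * kapI p (-(3 * η))) := by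
    filter_upwards [Ioo_mem_nhdsGT (show (0 : ℝ) < 1 / 3 by norm_num)] with η hη
    have h1 := ((sand_ball (n := p + 2) 1).mono (r' := 1 - η) (R' := 1 + η) (by linarith [hη.1])
      (by linarith [hη.1])).defect hη.1 hη.2 u (-u)
    rw [h0, HP_neg, add_neg_cancel, HP_zero, norm_neg, hu, norm_zero] at h1
    constructor <;> linarith [h1.1, h1.2]
  refine le_antisymm ?_ ?_
  · exact ge_of_tendsto (((tendsto_high p).mono_left nhdsWithin_le_nhds).const_mul 2)
      (key.mono fun η h => h.2)
  · exact le_of_tendsto (((tendsto_low p).mono_left nhdsWithin_le_nhds).const_mul 2)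
      (key.mono fun η h => h.1)

/-- The support function of `Π K`, normalised so that it is `1` for the unit ball. -/
def nxt {p : ℕ} (H : Euc (p + 2) → ℝ) (x : Euc (p + 2)) : ℝ := HP (bodyOf H) x / (2 * kapI p 0)

/-- The projection body of a body close to the ball is close to the ball, in the same sandwich
sense: this is the regularity which permits the operator to be iterated. -/
theorem step_sand (p : ℕ) {η' : ℝ} (hη' : 0 < η') : ∃ η0 : ℝ, 0 < η0 ∧ ∀ (H : Euc (p + 2) → ℝ)
    (G : Euc (p + 2) → Euc (p + 2)), Sand (1 - η0) (1 + η0) H G →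
    ∃ G', Sand (1 - η') (1 + η') (nxt H) G' := by
  have hI := kapI_pos p
  have e1 : ∀ᶠ η in 𝓝 (0 : ℝ), (1 - η') * kapI p 0 < (1 - η) * kapI p (3 * η) :=
    (tendsto_low p).eventually (lt_mem_nhds (by nlinarith))
  have e2 : ∀ᶠ η in 𝓝 (0 : ℝ), (1 + η) * kapI p (-(3 * η)) < (1 + η') * kapI p 0 :=
    (tendsto_high p).eventually (gt_mem_nhds (by nlinarith))
  obtain ⟨η, ⟨h1, h2⟩, h3⟩ := ((((e1.and e2).filter_mono nhdsWithin_le_nhds).and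
    (Ioo_mem_nhdsGT (show (0 : ℝ) < 1 / 3 by norm_num)))).exists (f := 𝓝[>] (0 : ℝ))
  refine ⟨η, h3.1, fun H G h => ?_⟩
  have hn : ∃ y : Euc (p + 2), ‖y‖ = 1 := ⟨e0, norm_e0⟩
  have hK := h.isCompact_body (by linarith [h3.2]) hn
  have hc := convex_bodyOf H
  have hlo : ∀ x y, (1 - η') * (‖x‖ + ‖y‖ - ‖x + y‖) ≤ nxt H x + nxt H y - nxt H (x + y) := by
    intro x y
    have hD : 0 ≤ ‖x‖ + ‖y‖ - ‖x + y‖ := by linarith [norm_add_le x y]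
    have := (h.defect h3.1 h3.2 x y).1
    unfold nxt
    rw [← add_div, ← sub_div, le_div_iff₀ (by positivity)]
    nlinarith
  have hhi : ∀ x y, nxt H x + nxt H y - nxt H (x + y) ≤ (1 + η') * (‖x‖ + ‖y‖ - ‖x + y‖) := by
    intro x y
    have hD : 0 ≤ ‖x‖ + ‖y‖ - ‖x + y‖ := by linarith [norm_add_le x y]
    have := (h.defect h3.1 h3.2 x y).2
    unfold nxt
    rw [← add_div, ← sub_div, div_le_iff₀ (by positivity)]
    nlinarith
  refine Sand.of_sub ?_ ?_ ?_ ?_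
  · intro c hc0 x
    unfold nxt
    rw [HP_smul hK hc hc0.le]; ring
  · intro x; unfold nxt; rw [HP_neg]
  · intro x y; linarith [hlo x y]
  · intro x y; linarith [hhi x y]

/-! ### Expansion of the normalised projection operator -/

theorem exists_projBody_const (p : ℕ) : ∃ c : ℝ, 0 < c ∧ ∀ (H : Euc (p + 2) → ℝ)
    (G : Euc (p + 2) → Euc (p + 2)) (r R : ℝ), 0 ≤ r → Sand r R H G →
    projBody (bodyOf H) = c • bodyOf (nxt H) := by
  obtain ⟨c, hc, h⟩ := exists_projSupp_const (p + 1)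
  have hI := kapI_pos p
  refine ⟨c * (2 * kapI p 0), by positivity, fun H G r R hr hS => ?_⟩
  have hK := hS.isCompact_body hr ⟨e0, norm_e0⟩
  have h1 := h _ hK (convex_bodyOf H)
  ext x
  rw [mem_smul_set_iff_inv_smul_mem₀ (by positivity), projBody_eq_bodyOf]
  refine forall₂_congr fun u hu => ?_
  rw [mem_sphere_zero_iff_norm] at hu
  rw [h1 u hu, inner_smul_left, nxt]
  simp only [conj_trivial]
  rw [inv_mul_le_iff₀ (by positivity)]
  have : c * (2 * kapI p 0) * (HP (bodyOf H) u / (2 * kapI p 0)) = c * HP (bodyOf H) u := by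
    field_simp
  rw [this]

theorem exists_cont_ext {n : ℕ} {f : Euc n → ℝ} (hf : ContinuousOn f (sphere 0 1)) :
    ∃ W : C(Euc n, ℝ), ∀ u, ‖u‖ = 1 → W u = f u := by
  obtain ⟨W, hW⟩ := ContinuousMap.exists_restrict_eq (X := Euc n) (s := sphere 0 1) isClosed_sphere
    ⟨(sphere (0 : Euc n) 1).domRestrict f, hf.domRestrict⟩
  exact ⟨W, fun u hu => by
    have := DFunLike.congr_fun hW ⟨u, by simpa using hu⟩
    exact this⟩

/-- Volume of a star body as an average over rotations. -/
theorem star_volume {d : ℕ} (ρ : C(Euc (d + 1), ℝ)) (h0 : ∀ u, ‖u‖ = 1 → 0 ≤ ρ u) :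
    (volume {v : Euc (d + 1) | ‖v‖ ≤ ρ (‖v‖⁻¹ • v)}).toReal =
      uball (d + 1) * ∫ k : OG (d + 1), ρ (k.1 e0) ^ (d + 1) ∂(haarO (d + 1)) := by
  set S := {v : Euc (d + 1) | ‖v‖ ≤ ρ (‖v‖⁻¹ • v)} with hS
  have hρm : Measurable fun v : Euc (d + 1) => ρ (‖v‖⁻¹ • v) :=
    ρ.continuous.measurable.comp (measurable_norm.inv.smul measurable_id)
  have hSm : MeasurableSet S := measurableSet_le measurable_norm hρm
  have hmeas : Measurable fun q : OG (d + 1) × Euc (d + 1) => S.indicator (1 : Euc (d + 1) → ℝ≥0∞) (q.1.1 q.2) :=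
    ((measurable_one).indicator hSm).comp continuous_OG_apply.measurable
  have e1 : volume S = ∫⁻ k : OG (d + 1), (∫⁻ v : Euc (d + 1), S.indicator 1 (k.1 v)) ∂(haarO (d + 1)) := by
    have : ∀ k : OG (d + 1), ∫⁻ v : Euc (d + 1), S.indicator (1 : Euc (d + 1) → ℝ≥0∞) (k.1 v) = volume S := by
      intro k
      have := (Unitary.linearIsometryEquiv k).measurePreserving.lintegral_comp
        ((measurable_one (α := ℝ≥0∞)).indicator hSm)
      rw [lintegral_indicator_one hSm] at this
      exact this
    simp only [this, lintegral_const, measure_univ, mul_one]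
  have e2 : ∀ v : Euc (d + 1), v ≠ 0 → ∫⁻ k : OG (d + 1), S.indicator (1 : Euc (d + 1) → ℝ≥0∞) (k.1 v) ∂(haarO (d + 1))
      = ∫⁻ k : OG (d + 1), (closedBall (0 : Euc (d + 1)) (ρ (k.1 e0))).indicator 1 v ∂(haarO (d + 1)) := by
    intro v hv
    obtain ⟨u, hu, hvu⟩ := exists_unit v hv
    obtain ⟨l, rfl⟩ := exists_OG_e0 hu
    have hv0 : ‖v‖ ≠ 0 := norm_ne_zero_iff.2 hv
    rw [← lintegral_mul_right_eq_self (μ := haarO (d + 1))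
      (fun k : OG (d + 1) => (closedBall (0 : Euc (d + 1)) (ρ (k.1 e0))).indicator 1 v) l]
    refine lintegral_congr fun k => ?_
    have hiff : k.1 v ∈ S ↔ v ∈ closedBall (0 : Euc (d + 1)) (ρ ((k * l).1 e0)) := by
      rw [hS, Set.mem_ofPred_eq, OG_norm, mem_closedBall_zero_iff, OG_mul_apply]
      have : ‖v‖⁻¹ • k.1 v = k.1 (l.1 e0) := by
        conv_lhs => rw [hvu, map_smul, smul_smul, norm_smul, norm_norm, hu, mul_one,
          inv_mul_cancel₀ hv0, one_smul]
      rw [this]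
    by_cases hk : k.1 v ∈ S
    · rw [indicator_of_mem hk, indicator_of_mem (hiff.1 hk)]; rfl
    · rw [indicator_of_notMem hk, indicator_of_notMem (fun h => hk (hiff.2 h))]
  have hcont : Continuous fun k : OG (d + 1) => ρ (k.1 e0) :=
    ρ.continuous.comp (continuous_OG_apply.comp (Continuous.prodMk continuous_id continuous_const))
  have hball : MeasurableSet {q : Euc (d + 1) × OG (d + 1) | ‖q.1‖ ≤ ρ (q.2.1 e0)} :=
    (isClosed_le (by fun_prop) (hcont.comp continuous_snd)).measurableSet
  have e3 : volume S = ∫⁻ k : OG (d + 1), volume (closedBall (0 : Euc (d + 1)) (ρ (k.1 e0))) ∂(haarO (d + 1)) := by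
    rw [e1, lintegral_lintegral_swap hmeas.aemeasurable]
    rw [lintegral_congr_ae (g := fun v => ∫⁻ k : OG (d + 1),
      (closedBall (0 : Euc (d + 1)) (ρ (k.1 e0))).indicator 1 v ∂(haarO (d + 1)))]
    · rw [lintegral_lintegral_swap]
      · refine lintegral_congr fun k => ?_
        rw [lintegral_indicator_one measurableSet_closedBall]
      · have : Measurable ({q : Euc (d + 1) × OG (d + 1) | ‖q.1‖ ≤ ρ (q.2.1 e0)}.indicator
            (1 : Euc (d + 1) × OG (d + 1) → ℝ≥0∞)) := measurable_one.indicator hball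
        refine Measurable.aemeasurable ?_
        convert this using 2 with q
        simp only [indicator, mem_closedBall_zero_iff]
        rfl
    · have : ∀ᵐ v : Euc (d + 1), v ≠ 0 := by
        have := measure_singleton (μ := (volume : Measure (Euc (d + 1)))) 0
        exact (measure_eq_zero_iff_ae_notMem.1 this).mono fun v hv => hv
      filter_upwards [this] with v hv using e2 v hv
  have e4 : ∀ k : OG (d + 1), volume (closedBall (0 : Euc (d + 1)) (ρ (k.1 e0)))
      = ENNReal.ofReal (uball (d + 1) * ρ (k.1 e0) ^ (d + 1)) := by
    intro k
    have hk := h0 (k.1 e0) (norm_ge0 k)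
    rw [Measure.addHaar_closedBall _ _ hk, uball, ENNReal.ofReal_mul (by positivity),
      ENNReal.ofReal_toReal measure_closedBall_lt_top.ne, mul_comm]
    have e := Measure.addHaar_closedBall (volume : Measure (Euc (d + 1))) 0 zero_le_one
    rw [one_pow, ENNReal.ofReal_one, one_mul] at e
    rw [e]; simp
  rw [e3, lintegral_congr e4, ← integral_eq_lintegral_of_nonneg_ae, integral_const_mul]
  · exact Eventually.of_forall fun k => mul_nonneg ENNReal.toReal_nonneg (pow_nonneg (h0 _ (norm_ge0 k)) _)
  · exact (continuous_const.mul (hcont.pow _)).aestronglyMeasurable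

namespace Sand

variable {n : ℕ} {r R η : ℝ} {H : Euc n → ℝ} {G : Euc n → Euc n}

theorem continuous (h : Sand (1 - η) (1 + η) H G) (hη : 0 < η) (hη1 : η ≤ 1)
    (hn : ∃ y : Euc n, ‖y‖ = 1) : Continuous H := by
  have key : ∀ x z, H x - H z ≤ 4 * ‖x - z‖ := by
    intro x z
    have hz : ∀ y, ‖y‖ = 1 → ⟪G y, z⟫ ≤ H z := fun y hy => by
      have h1 := h.lo z y hy
      have h2 := inner_le_norm_unit hy z
      nlinarith
    have hG : ∀ y, ‖y‖ = 1 → ‖G y‖ ≤ 4 := fun y hy => by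
      have h1 := h.near hη hy
      have h2 := norm_add_le (G y - y) y
      rw [sub_add_cancel, hy] at h2; linarith
    have hfin : ∀ y, ‖y‖ = 1 → H x = ⟪G y, x⟫ → H x - H z ≤ 4 * ‖x - z‖ := fun y hy e => by
      have h1 := real_inner_le_norm (G y) (x - z)
      rw [inner_sub_right] at h1
      have h2 := mul_le_mul_of_nonneg_right (hG y hy) (norm_nonneg (x - z))
      linarith [hz y hy]
    by_cases hx : x = 0
    · obtain ⟨y, hy⟩ := hn
      exact hfin y hy (by rw [hx, inner_zero_right, h.H_zero ⟨y, hy⟩])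
    · obtain ⟨y, hy, hxy⟩ := exists_unit x hx
      refine hfin y hy ?_
      conv_lhs => rw [hxy, h.hom_unit hy (norm_nonneg _), ← h.euler hy]
      conv_rhs => rw [hxy, inner_smul_right]
  refine (LipschitzWith.of_dist_le_mul (K := 4) fun x z => ?_).continuous
  rw [Real.dist_eq, dist_eq_norm, abs_le]
  have h1 := key x z
  have h2 := key z x
  rw [norm_sub_rev] at h2
  constructor <;> push_cast <;> linarith

theorem continuousOn_G (h : Sand (1 - η) (1 + η) H G) (hη : 0 < η) (hη1 : η ≤ 1) :
    ContinuousOn G (sphere 0 1) := by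
  refine LipschitzOnWith.continuousOn (K := (1 + η).toNNReal) (LipschitzOnWith.of_dist_le_mul ?_)
  intro x hx y hy
  rw [dist_eq_norm, dist_eq_norm, Real.coe_toNNReal _ (by linarith)]
  exact h.lipG (by linarith) (by linarith) (by simpa using hx) (by simpa using hy)

/-- The radial function of the body is `H` up to the square of the spherical gradient. -/
theorem radial_mem (h : Sand (1 - η) (1 + η) H G) (hη : 0 < η) (hη1 : η ≤ 1 / 12) {x : Euc n}
    (hx : ‖x‖ = 1) : (H x - ‖G x - x‖ ^ 2) • x ∈ bodyOf H := by
  intro u hu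
  rw [mem_sphere_zero_iff_norm] at hu
  have h1 := h.lo u x hx
  rw [hu] at h1
  refine le_trans ?_ h1
  have hE := h.near hη hx
  set E := G x - x with hEd
  have hf := abs_le.1 (h.near_one hη hx)
  have hG : G x = E + x := by rw [hEd]; abel
  have hEx : ⟪E, x⟫ = H x - 1 := by rw [hEd, inner_sub_left, h.euler hx, inner_self_one hx]
  have hs := norm_sub_inner_eq hu hx
  have hEu : ⟪E, u⟫ = H x - 1 + ⟪E, u - x⟫ := by rw [inner_sub_right, hEx]; ring
  have hcs := abs_le.1 (abs_real_inner_le_norm E (u - x))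
  have hE2 : ‖E‖ ^ 2 ≤ 1 / 16 := by nlinarith [norm_nonneg E]
  have hs0 : 0 ≤ 1 - ⟪x, u⟫ := by rw [hs]; positivity
  have hamgm : -(‖E‖ ^ 2 + (1 - ⟪x, u⟫) / 2) ≤ ⟪E, u - x⟫ := by
    rw [hs]; nlinarith [sq_nonneg (‖E‖ - ‖u - x‖ / 2)]
  rw [inner_smul_left, hG, inner_add_left, hEu]
  simp only [conj_trivial]
  have : 0 ≤ (1 - ⟪x, u⟫) * (1 / 2 - η + (H x - 1) - ‖E‖ ^ 2) := mul_nonneg hs0 (by linarith [hf.1])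
  nlinarith

end Sand

theorem pow_expansion (d : ℕ) : ∃ C : ℝ, 0 ≤ C ∧ ∀ s : ℝ, |s| ≤ 1 →
    |(1 + s) ^ d - 1 - d * s| ≤ C * s ^ 2 := by
  induction d with
  | zero => exact ⟨0, le_refl _, fun s _ => by simp⟩
  | succ d ih =>
    obtain ⟨C, hC, h⟩ := ih
    refine ⟨2 * C + d, by positivity, fun s hs => ?_⟩
    have e : (1 + s) ^ (d + 1) - 1 - ((d + 1 : ℕ) : ℝ) * s =
        ((1 + s) ^ d - 1 - d * s) * (1 + s) + d * s ^ 2 := by push_cast; ring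
    rw [e]
    refine (abs_add_le _ _).trans ?_
    rw [abs_mul, abs_of_nonneg (a := (d : ℝ) * s ^ 2) (by positivity)]
    have h1 : |1 + s| ≤ 2 := by
      rw [abs_le] at hs ⊢; constructor <;> linarith
    have h2 := mul_le_mul (h s hs) h1 (abs_nonneg _) (by positivity)
    nlinarith

section Expansion

variable {p : ℕ} {η : ℝ} {H : Euc (p + 2) → ℝ} {G : Euc (p + 2) → Euc (p + 2)}

/-- Restriction of a function to the hyperplane orthogonal to `g e0`. -/
def pull {p : ℕ} (g : OG (p + 2)) (w : C(Euc (p + 2), ℝ)) : C(Euc (p + 1), ℝ) :=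
  w.comp ⟨fun v => g.1 (Jm v), (g.1.continuous).comp continuous_Jm⟩

theorem pull_apply {p : ℕ} (g : OG (p + 2)) (w : C(Euc (p + 2), ℝ)) (v : Euc (p + 1)) :
    pull g w v = w (g.1 (Jm v)) := rfl

theorem norm_hat {n : ℕ} {v : Euc n} (hv : v ≠ 0) : ‖‖v‖⁻¹ • v‖ = 1 := by
  rw [norm_smul, norm_inv, norm_norm, inv_mul_cancel₀ (norm_ne_zero_iff.2 hv)]

/-- The projection of the body along `g e0` lies between the star bodies with radial functions
`1 + F - W` and `1 + F`: it contains the section of the body, and is bounded by its support function. -/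
theorem Sand.HP_bounds (h : Sand (1 - η) (1 + η) H G) (hη : 0 < η) (hη1 : η ≤ 1 / 12)
    {F W : C(Euc (p + 2), ℝ)} (hF : ∀ u, ‖u‖ = 1 → F u = H u - 1)
    (hW : ∀ u, ‖u‖ = 1 → W u = ‖G u - u‖ ^ 2) (g : OG (p + 2)) :
    uball (p + 1) * ∫ k : OG (p + 1), (1 + (F (g.1 (Jm (k.1 e0))) - W (g.1 (Jm (k.1 e0))))) ^ (p + 1)
      ∂(haarO (p + 1)) ≤ HP (bodyOf H) (g.1 e0) ∧
    HP (bodyOf H) (g.1 e0) ≤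
      uball (p + 1) * ∫ k : OG (p + 1), (1 + F (g.1 (Jm (k.1 e0)))) ^ (p + 1) ∂(haarO (p + 1)) := by
  have hn : ∃ y : Euc (p + 2), ‖y‖ = 1 := ⟨e0, norm_e0⟩
  have hK := h.isCompact_body (by linarith) hn
  have hc := convex_bodyOf H
  have hsh : IsCompact (shadow g (bodyOf H)) := (frame_line g).isCompact_shadow hK
  have h00 : (0 : Euc (p + 2)) ∈ bodyOf H :=
    h.ball_sub_body (by linarith) (by simp; linarith)
  have hnJ : ∀ v : Euc (p + 1), ‖g.1 (Jm v)‖ = ‖v‖ := fun v => by rw [OG_norm, norm_Jm]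
  have hWs : ∀ u, ‖u‖ = 1 → 0 ≤ W u ∧ W u ≤ 1 / 16 := fun u hu => by
    rw [hW u hu]
    exact ⟨by positivity, by nlinarith [h.near hη hu, norm_nonneg (G u - u)]⟩
  have hFs : ∀ u, ‖u‖ = 1 → |F u| ≤ 1 / 4 := fun u hu => by
    rw [hF u hu]; linarith [h.near_one hη hu]
  rw [HP_shadow_one hK hc]
  constructor
  · have h1 := star_volume (pull g (1 + (F - W))) (fun u hu => by
      rw [pull_apply]
      have h1 := hWs _ ((hnJ u).trans hu)
      have h2 := abs_le.1 (hFs _ ((hnJ u).trans hu))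
      simp only [ContinuousMap.add_apply, ContinuousMap.one_apply, ContinuousMap.sub_apply]
      linarith [h1.2, h2.1])
    simp only [pull_apply, ContinuousMap.add_apply, ContinuousMap.one_apply,
      ContinuousMap.sub_apply] at h1
    rw [← h1]
    refine ENNReal.toReal_mono hsh.measure_lt_top.ne (measure_mono ?_)
    intro v hv
    refine ⟨0, ?_⟩
    change gL g 0 + gJ g v ∈ bodyOf H
    rw [map_zero, zero_add, gJ_apply]
    by_cases hv0 : v = 0
    · rw [hv0]
      have : Jm (0 : Euc (p + 1)) = 0 := by rw [← norm_eq_zero, norm_Jm, norm_zero]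
      rw [this, map_zero]; exact h00
    have hu := norm_hat hv0
    set u := ‖v‖⁻¹ • v with hud
    rw [Set.mem_ofPred_eq, hF _ ((hnJ u).trans hu), hW _ ((hnJ u).trans hu)] at hv
    have h2 := h.radial_mem hη hη1 ((hnJ u).trans hu)
    set x := g.1 (Jm u) with hx
    set t := H x - ‖G x - x‖ ^ 2 with ht
    have hvt : ‖v‖ ≤ t := by rw [ht]; linarith
    have hvpos : 0 < ‖v‖ := norm_pos_iff.2 hv0
    have e : g.1 (Jm v) = (‖v‖ / t) • (t • x) := by
      have : v = ‖v‖ • u := by rw [hud, smul_smul, mul_inv_cancel₀ hvpos.ne', one_smul]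
      conv_lhs => rw [this, Jm_smul, map_smul]
      rw [smul_smul, div_mul_cancel₀ _ (by linarith)]
    rw [e]
    exact hc.smul_mem_of_zero_mem h00 h2 ⟨div_nonneg (norm_nonneg _) (by linarith), (div_le_one (by linarith)).2 hvt⟩
  · have h0 : ∀ u, ‖u‖ = 1 → 0 ≤ pull g (1 + F) u := (fun u hu => by
      rw [pull_apply]
      have h2 := abs_le.1 (hFs _ ((hnJ u).trans hu))
      simp only [ContinuousMap.add_apply, ContinuousMap.one_apply]
      linarith [h2.1])
    have h1 := star_volume (pull g (1 + F)) h0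
    simp only [pull_apply, ContinuousMap.add_apply, ContinuousMap.one_apply] at h1
    rw [← h1]
    refine ENNReal.toReal_mono ?_ (measure_mono_ae ?_)
    · refine ((measure_mono (t := closedBall 0 (5 / 4) ∪ {0}) ?_).trans_lt
        ((isCompact_closedBall _ _).union isCompact_singleton).measure_lt_top).ne
      intro v hv
      by_cases hv0 : v = 0
      · right; exact hv0
      · left
        rw [Set.mem_ofPred_eq] at hv
        rw [mem_closedBall_zero_iff]
        have h2 := abs_le.1 (hFs _ ((hnJ _).trans (norm_hat hv0)))
        linarith [h2.2]
    · have : ∀ᵐ v : Euc (p + 1), v ≠ 0 := by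
        have := measure_singleton (μ := (volume : Measure (Euc (p + 1)))) 0
        exact (measure_eq_zero_iff_ae_notMem.1 this).mono fun v hv => hv
      filter_upwards [this] with v hv0 hv
      obtain ⟨t, ht⟩ := hv
      change ‖v‖ ≤ _
      have hu := norm_hat hv0
      rw [hF _ ((hnJ _).trans hu)]
      have h2 := h.le_of_mem hn ht (g.1 (Jm (‖v‖⁻¹ • v)))
      rw [gL_apply, gJ_apply, inner_add_left, inner_smul_left, OG_inner, OG_inner, Jm_orth, mul_zero,
        zero_add, inner_Jm, Tl_Jm, inner_smul_right, real_inner_self_eq_norm_sq] at h2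
      have : ‖v‖⁻¹ * ‖v‖ ^ 2 = ‖v‖ := by
        have := norm_ne_zero_iff.2 hv0
        field_simp
      linarith

/-- Both sides are the volume increment of the unit ball in a unit direction. -/
theorem uball_eq (p : ℕ) : uball (p + 1) = 2 * kapI p 0 := by
  have h0 : bodyOf (fun x : Euc (p + 2) => 1 * ‖x‖) = closedBall 0 1 := bodyOf_ball 1 zero_le_one
  have h := ((sand_ball (n := p + 2) 1).mono (r' := 1 - 1 / 12) (R' := 1 + 1 / 12) (by norm_num)
      (by norm_num)).HP_bounds (by norm_num) le_rfl (F := 0) (W := 0) (fun u hu => by simp [hu])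
      (fun u hu => by simp) 1
  rw [h0, HP_ball (norm_ge0 1)] at h
  simp at h
  exact le_antisymm h.1 h.2

/-- First order expansion of the normalised projection operator at the unit ball: the linear part is
`p + 1` times the Radon transform, and the error is an average of the squared gradient. -/
theorem exists_expansion (p : ℕ) : ∃ C : ℝ, 0 ≤ C ∧ ∀ (H : Euc (p + 2) → ℝ)
    (G : Euc (p + 2) → Euc (p + 2)) (η : ℝ), Sand (1 - η) (1 + η) H G → 0 < η → η ≤ 1 / 12 →
    ∀ F W : C(Euc (p + 2), ℝ), (∀ u, ‖u‖ = 1 → F u = H u - 1) →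
      (∀ u, ‖u‖ = 1 → W u = ‖G u - u‖ ^ 2) → ∀ g : OG (p + 2),
      |nxt H (g.1 e0) - 1 - (p + 1) * radO F g| ≤ C * radO W g := by
  obtain ⟨C, hC, hpow⟩ := pow_expansion (p + 1)
  refine ⟨p + 1 + 4 * C, by positivity, fun H G η h hη hη1 F W hF hW g => ?_⟩
  have hb := h.HP_bounds hη hη1 hF hW g
  have hI := kapI_pos p
  rw [uball_eq] at hb
  have hc : ∀ w : C(Euc (p + 2), ℝ), Continuous fun k : OG (p + 1) => w (g.1 (Jm (k.1 e0))) :=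
    fun w => (pull g w).continuous.comp
      (continuous_OG_apply.comp (Continuous.prodMk continuous_id continuous_const))
  have hi : ∀ w : C(Euc (p + 2), ℝ), Integrable (fun k : OG (p + 1) => w (g.1 (Jm (k.1 e0))))
      (haarO (p + 1)) := fun w => integrable_OG (hc w)
  have hu : ∀ k : OG (p + 1), ‖g.1 (Jm (k.1 e0))‖ = 1 := fun k => by
    rw [OG_norm, norm_Jm, norm_ge0]
  have hW1 : ∀ u, ‖u‖ = 1 → 0 ≤ W u ∧ W u ≤ 1 / 16 := fun u hu => by
    rw [hW u hu]
    exact ⟨by positivity, by nlinarith [h.near hη hu, norm_nonneg (G u - u)]⟩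
  have hF1 : ∀ u, ‖u‖ = 1 → |F u| ≤ 1 / 4 := fun u hu => by
    rw [hF u hu]; linarith [h.near_one hη hu]
  have hFW : ∀ u, ‖u‖ = 1 → F u ^ 2 ≤ W u := fun u hu => by
    rw [hF u hu, hW u hu, ← sq_abs]
    exact pow_le_pow_left₀ (abs_nonneg _) (h.abs_sub_one_le_E hu) 2
  have hlin : ∀ c : ℝ, ∫ k : OG (p + 1), (1 + (p + 1) * F (g.1 (Jm (k.1 e0))) + c * W (g.1 (Jm (k.1 e0))))
      ∂(haarO (p + 1)) = 1 + (p + 1) * radO F g + c * radO W g := by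
    intro c
    have i1 : Integrable (fun k : OG (p + 1) => (1 : ℝ) + ((p : ℝ) + 1) * F (g.1 (Jm (k.1 e0))))
        (haarO (p + 1)) := (integrable_const _).add ((hi F).const_mul _)
    rw [integral_add i1 ((hi W).const_mul _),
      integral_add (integrable_const _) ((hi F).const_mul _), integral_const_mul, integral_const_mul,
      radO_apply, radO_apply]
    simp
  have hWn : 0 ≤ radO W g := by
    rw [radO_apply]
    exact integral_nonneg fun k => (hW1 _ (hu k)).1
  have hlow : 1 + (p + 1) * radO F g + (-(p + 1 + 4 * C)) * radO W g ≤
      ∫ k : OG (p + 1), (1 + (F (g.1 (Jm (k.1 e0))) - W (g.1 (Jm (k.1 e0))))) ^ (p + 1) ∂(haarO (p + 1)) := by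
    rw [← hlin]
    refine integral_mono (((integrable_const _).add ((hi F).const_mul _)).add ((hi W).const_mul _))
      (integrable_OG ((continuous_const.add ((hc F).sub (hc W))).pow _)) fun k => ?_
    have h1 := hW1 _ (hu k)
    have h2 := hF1 _ (hu k)
    have h3 := hFW _ (hu k)
    dsimp only
    generalize W (g.1 (Jm (k.1 e0))) = w at *
    generalize F (g.1 (Jm (k.1 e0))) = f at *
    have h4 := abs_le.1 h2
    have h5 := (abs_le.1 (hpow (f - w) (abs_le.2 ⟨by linarith, by linarith⟩))).1
    push_cast at h5
    have h6 : (f - w) ^ 2 ≤ 4 * w := by nlinarith [sq_nonneg (f + w)]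
    have h7 := mul_le_mul_of_nonneg_left h6 hC
    nlinarith
  have hhigh : ∫ k : OG (p + 1), (1 + F (g.1 (Jm (k.1 e0)))) ^ (p + 1) ∂(haarO (p + 1)) ≤
      1 + (p + 1) * radO F g + C * radO W g := by
    rw [← hlin]
    refine integral_mono (integrable_OG ((continuous_const.add (hc F)).pow _))
      (((integrable_const _).add ((hi F).const_mul _)).add ((hi W).const_mul _)) fun k => ?_
    have h2 := hF1 _ (hu k)
    have h3 := hFW _ (hu k)
    dsimp only
    generalize W (g.1 (Jm (k.1 e0))) = w at *
    generalize F (g.1 (Jm (k.1 e0))) = f at *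
    have h5 := (abs_le.1 (hpow f (h2.trans (by norm_num)))).2
    push_cast at h5
    have h7 := mul_le_mul_of_nonneg_left h3 hC
    nlinarith
  have hn1 : 1 + (p + 1) * radO F g + (-(p + 1 + 4 * C)) * radO W g ≤ nxt H (g.1 e0) := by
    unfold nxt
    rw [le_div_iff₀ (by positivity)]
    have := mul_le_mul_of_nonneg_left hlow (show 0 ≤ 2 * kapI p 0 by positivity)
    linarith [hb.1]
  have hn2 : nxt H (g.1 e0) ≤ 1 + (p + 1) * radO F g + C * radO W g := by
    unfold nxt
    rw [div_le_iff₀ (by positivity)]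
    have := mul_le_mul_of_nonneg_left hhigh (show 0 ≤ 2 * kapI p 0 by positivity)
    linarith [hb.2]
  have hp : 0 ≤ ((p : ℝ) + 1 + 3 * C) * radO W g := by positivity
  rw [abs_le]
  constructor <;> linarith

end Expansion

/-! ### The interpolation inequality -/

/-- A reflection in the plane of two orthonormal vectors `e0`, `b`. -/
theorem exists_OG_plane {n : ℕ} {b : Euc (n + 1)} (hb : ‖b‖ = 1) (hb0 : ⟪(e0 : Euc (n + 1)), b⟫ = 0)
    {c s : ℝ} (hcs : c ^ 2 + s ^ 2 = 1) (hs : s ≠ 0) :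
    ∃ k : OG (n + 1), k.1 e0 = c • e0 + s • b ∧ k.1 (k.1 e0) = e0 ∧ k.1 b = s • e0 - c • b := by
  have hu : ‖(e0 : Euc (n + 1))‖ = ‖c • (e0 : Euc (n + 1)) + s • b‖ := by
    rw [norm_e0]
    have : ‖c • (e0 : Euc (n + 1)) + s • b‖ ^ 2 = 1 := by
      rw [norm_add_sq_real, norm_smul, norm_smul, inner_smul_left, inner_smul_right, hb0, hb, norm_e0]
      simp [hcs]
    nlinarith [norm_nonneg (c • (e0 : Euc (n + 1)) + s • b)]
  obtain ⟨k, h1, h2⟩ := exists_OG_swap hu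
  refine ⟨k, h1, by rw [h1, h2], ?_⟩
  have h3 : s • k.1 b = s • (s • e0 - c • b) := by
    have : k.1 (c • (e0 : Euc (n + 1)) + s • b) = c • k.1 e0 + s • k.1 b := by
      rw [map_add, map_smul, map_smul]
    rw [h2, h1] at this
    have e : s • k.1 b = e0 - c • (c • (e0 : Euc (n + 1)) + s • b) :=
      eq_sub_of_add_eq ((add_comm _ _).trans this.symm)
    have hs2 : s ^ 2 = 1 - c ^ 2 := by linarith
    rw [e, smul_sub, smul_smul, ← sq, hs2]
    module
  exact smul_right_injective _ hs h3

/-- The Young inequality for the difference quotients in the discrete integration by parts; here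
`x` and `y` are derivatives at points at distance about `s`. -/
theorem cube_diff {η s x y z : ℝ} (hη : 0 < η) (hs : 0 < s) (a1 : |x - y| ≤ 12 * η * s) :
    x ^ 3 * z - y ^ 3 * z ≤ s / 2 * x ^ 4 + s / 2 * y ^ 4 + 324 * η ^ 2 * s * z ^ 2 := by
  have e1 : x ^ 3 * z - y ^ 3 * z = (x - y) * ((x ^ 2 + x * y + y ^ 2) * z) := by ring
  have hq : 0 ≤ x ^ 2 + x * y + y ^ 2 := by nlinarith [sq_nonneg (x + y), sq_nonneg x, sq_nonneg y]
  have e2 : |(x ^ 2 + x * y + y ^ 2) * z| ≤ (3 / 2 * (x ^ 2 + y ^ 2)) * |z| := by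
    rw [abs_mul, abs_of_nonneg hq]
    exact mul_le_mul_of_nonneg_right (by nlinarith [sq_nonneg (x - y)]) (abs_nonneg _)
  have e3 := mul_le_mul a1 e2 (abs_nonneg _) (by positivity)
  rw [← abs_mul] at e3
  rw [e1]
  refine (le_abs_self _).trans (e3.trans ?_)
  have hz : z ^ 2 = |z| ^ 2 := (sq_abs z).symm
  rw [hz]
  have f1 : 18 * η * x ^ 2 * |z| ≤ 1 / 2 * x ^ 4 + 162 * η ^ 2 * |z| ^ 2 := by
    nlinarith [sq_nonneg (x ^ 2 - 18 * η * |z|)]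
  have f2 : 18 * η * y ^ 2 * |z| ≤ 1 / 2 * y ^ 4 + 162 * η ^ 2 * |z| ^ 2 := by
    nlinarith [sq_nonneg (y ^ 2 - 18 * η * |z|)]
  have f3 := mul_le_mul_of_nonneg_left (add_le_add f1 f2) hs.le
  nlinarith

set_option maxHeartbeats 1000000 in
/-- Discrete integration by parts along one direction, giving the interpolation inequality
between `f`, its derivative `D` and its second derivative, for one component of the gradient. -/
theorem Sand.gn_dir {n : ℕ} {H : Euc (n + 1) → ℝ} {G : Euc (n + 1) → Euc (n + 1)} {η : ℝ}
    (h : Sand (1 - η) (1 + η) H G) (hη : 0 < η) (hη1 : η ≤ 1) {F : C(Euc (n + 1), ℝ)}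
    (hF : ∀ u, ‖u‖ = 1 → F u = H u - 1) {b : Euc (n + 1)} (hb : ‖b‖ = 1)
    (hb0 : ⟪(e0 : Euc (n + 1)), b⟫ = 0) :
    ∫ g : OG (n + 1), ⟪G (g.1 e0) - g.1 e0, g.1 b⟫ ^ 4 ∂(haarO (n + 1)) ≤
      324 * η ^ 2 * ∫ g : OG (n + 1), F (g.1 e0) ^ 2 ∂(haarO (n + 1)) := by
  have hue : ∀ g : OG (n + 1), ‖g.1 e0‖ = 1 := fun g => by rw [OG_norm, norm_e0]
  have hub : ∀ g : OG (n + 1), ‖g.1 b‖ = 1 := fun g => by rw [OG_norm, hb]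
  have hcx : ∀ x : Euc (n + 1), Continuous fun g : OG (n + 1) => g.1 x := fun x =>
    continuous_OG_apply.comp (Continuous.prodMk continuous_id continuous_const)
  set D : OG (n + 1) → ℝ := fun g => ⟪G (g.1 e0) - g.1 e0, g.1 b⟫ with hD
  set f : OG (n + 1) → ℝ := fun g => F (g.1 e0) with hf
  have hcD : Continuous D := by
    refine Continuous.inner ?_ (hcx b)
    refine Continuous.sub ?_ (hcx e0)
    exact (h.continuousOn_G hη hη1).comp_continuous (hcx e0) fun g => by
      rw [mem_sphere_zero_iff_norm, hue]
  have hcf : Continuous f := F.continuous.comp (hcx e0)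
  have hDb : ∀ g, |D g| ≤ 3 * η := fun g => by
    refine (abs_real_inner_le_norm _ _).trans ?_
    rw [hub, mul_one]; exact h.near hη (hue g)
  have key : ∀ s : ℝ, 0 < s → s ≤ 1 → ∫ g, D g ^ 4 ∂(haarO (n + 1)) ≤
      324 * η ^ 2 * (∫ g, f g ^ 2 ∂(haarO (n + 1))) + 54 * η ^ 4 * s := by
    intro s hs hs1
    set c := √(1 - s ^ 2) with hc
    have hc0 : 0 ≤ c := Real.sqrt_nonneg _
    have hc2 : c ^ 2 = 1 - s ^ 2 := Real.sq_sqrt (by nlinarith)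
    have hc1 : c ≤ 1 := by nlinarith
    have h1c : 1 - c ≤ s ^ 2 := by nlinarith
    obtain ⟨k, k1, k2, k3⟩ := exists_OG_plane hb hb0 (c := c) (s := s) (by linarith) hs.ne'
    obtain ⟨l, l1, l2, l3⟩ := exists_OG_plane hb hb0 (c := c) (s := -s) (by nlinarith)
      (neg_ne_zero.2 hs.ne')
    have hkf : ∀ g, f (g * k * k) = f g := fun g => by
      simp only [hf, OG_mul_apply, k2]
    have hlf : ∀ g, f (g * l * l) = f g := fun g => by
      simp only [hf, OG_mul_apply, l2]
    -- first order expansion of `f` at `g`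
    have hexp : ∀ g, |f (g * k) - f (g * l) - 2 * s * D g| ≤ 2 * η * s ^ 2 := by
      intro g
      have hx : ∀ (t : ℝ) (j : OG (n + 1)), j.1 e0 = c • e0 + t • b →
          |f (g * j) - c * f g - t * D g| ≤ η * s ^ 2 := by
        intro t j hj
        have hgj : (g * j).1 e0 = c • g.1 e0 + t • g.1 b := by
          rw [OG_mul_apply, hj, map_add, map_smul, map_smul]
        have hi1 : ⟪g.1 e0, (g * j).1 e0⟫ = c := by
          rw [hgj, inner_add_right, inner_smul_right, inner_smul_right, inner_self_one (hue g),
            OG_inner, hb0]; ring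
        have hi2 : ⟪G (g.1 e0), (g * j).1 e0⟫ = c * H (g.1 e0) + t * D g := by
          rw [hgj, inner_add_right, inner_smul_right, inner_smul_right, h.euler (hue g)]
          simp only [hD]
          rw [inner_sub_left, OG_inner, hb0]; ring
        have a1 := h.lo ((g * j).1 e0) (g.1 e0) (hue g)
        have a2 := h.hi ((g * j).1 e0) (g.1 e0) (hue g)
        rw [hi1, hi2, hue] at a1 a2
        simp only [hf]
        rw [hF _ (hue _), hF _ (hue _), abs_le]
        constructor <;> nlinarith
      have b1 := abs_le.1 (hx s k k1)
      have b2 := abs_le.1 (hx (-s) l l1)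
      rw [abs_le]; constructor <;> linarith [b1.1, b1.2, b2.1, b2.2]
    have hdiff : ∀ g, |D (g * k) - D (g * l)| ≤ 12 * η * s := by
      intro g
      have e1 : (g * k).1 b = s • g.1 e0 - c • g.1 b := by
        rw [OG_mul_apply, k3, map_sub, map_smul, map_smul]
      have e2 : (g * l).1 b = (g * k).1 b - (2 * s) • g.1 e0 := by
        rw [e1, OG_mul_apply, l3, map_sub, map_smul, map_smul]; module
      have e3 : (g * k).1 e0 - (g * l).1 e0 = (2 * s) • g.1 b := by
        rw [OG_mul_apply, OG_mul_apply, k1, l1, map_add, map_add, map_smul, map_smul,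
          map_smul]; module
      have e4 : D (g * k) - D (g * l) =
          ⟪(G ((g * k).1 e0) - (g * k).1 e0) - (G ((g * l).1 e0) - (g * l).1 e0), (g * k).1 b⟫ +
            (2 * s) * ⟪G ((g * l).1 e0) - (g * l).1 e0, g.1 e0⟫ := by
        simp only [hD]
        rw [e2, inner_sub_right _ _ ((2 * s) • g.1 e0), inner_smul_right, inner_sub_left (G ((g * k).1 e0) - (g * k).1 e0)]
        ring
      have n1 := h.lipE hη (hue (g * k)) (hue (g * l))
      rw [e3, norm_smul, hub, Real.norm_of_nonneg (by linarith)] at n1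
      have n2 := abs_real_inner_le_norm ((G ((g * k).1 e0) - (g * k).1 e0) -
        (G ((g * l).1 e0) - (g * l).1 e0)) ((g * k).1 b)
      have n3 := abs_real_inner_le_norm (G ((g * l).1 e0) - (g * l).1 e0) (g.1 e0)
      rw [hub, mul_one] at n2
      rw [hue, mul_one] at n3
      have n4 := h.near hη (hue (g * l))
      rw [e4]
      refine (abs_add_le _ _).trans ?_
      rw [abs_mul, abs_of_nonneg (by linarith : 0 ≤ 2 * s)]
      nlinarith
    have hcmul : ∀ (q : OG (n + 1) → ℝ) (j : OG (n + 1)), Continuous q → Continuous fun g => q (g * j) :=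
      fun q j hq => hq.comp (continuous_mul_const j)
    have i1 : ∀ j : OG (n + 1), (∀ g, f (g * j * j) = f g) →
        ∫ g, D g ^ 3 * f (g * j) ∂(haarO (n + 1)) = ∫ g, D (g * j) ^ 3 * f g ∂(haarO (n + 1)) := by
      intro j hj
      rw [← integral_OG_mul_right (fun g => D g ^ 3 * f (g * j)) j]
      simp only [hj]
    have j1 : ∀ j : OG (n + 1), Integrable (fun g => D g ^ 3 * f (g * j)) (haarO (n + 1)) := fun j =>
      integrable_OG ((hcD.pow 3).mul (hcmul f j hcf))
    have j2 : ∀ j : OG (n + 1), Integrable (fun g => D (g * j) ^ 3 * f g) (haarO (n + 1)) := fun j =>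
      integrable_OG (((hcmul D j hcD).pow 3).mul hcf)
    have j4 : Integrable (fun g => D g ^ 4) (haarO (n + 1)) := integrable_OG (hcD.pow 4)
    have j5 : ∀ j : OG (n + 1), Integrable (fun g => D (g * j) ^ 4) (haarO (n + 1)) := fun j =>
      integrable_OG ((hcmul D j hcD).pow 4)
    have jf : Integrable (fun g => f g ^ 2) (haarO (n + 1)) := integrable_OG (hcf.pow 2)
    have hparts : ∫ g, (D g ^ 3 * f (g * k) - D g ^ 3 * f (g * l)) ∂(haarO (n + 1)) =
        ∫ g, (D (g * k) ^ 3 * f g - D (g * l) ^ 3 * f g) ∂(haarO (n + 1)) := by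
      rw [integral_sub (j1 k) (j1 l), integral_sub (j2 k) (j2 l), i1 k hkf, i1 l hlf]
    have hlow : 2 * s * (∫ g, D g ^ 4 ∂(haarO (n + 1))) - 54 * η ^ 4 * s ^ 2 ≤
        ∫ g, (D g ^ 3 * f (g * k) - D g ^ 3 * f (g * l)) ∂(haarO (n + 1)) := by
      have : 2 * s * (∫ g, D g ^ 4 ∂(haarO (n + 1))) - 54 * η ^ 4 * s ^ 2 =
          ∫ g, (2 * s * D g ^ 4 - 54 * η ^ 4 * s ^ 2) ∂(haarO (n + 1)) := by
        rw [integral_sub (j4.const_mul _) (integrable_const _), integral_const_mul]; simp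
      rw [this]
      refine integral_mono ((j4.const_mul _).sub (integrable_const _)) ((j1 k).sub (j1 l)) fun g => ?_
      dsimp only
      have a1 := hexp g
      have a2 : |D g ^ 3| ≤ 27 * η ^ 3 := by
        rw [abs_pow]
        calc |D g| ^ 3 ≤ (3 * η) ^ 3 := pow_le_pow_left₀ (abs_nonneg _) (hDb g) 3
          _ = 27 * η ^ 3 := by ring
      have a3 := mul_le_mul a2 a1 (abs_nonneg _) (by positivity)
      rw [← abs_mul] at a3
      have a4 := (abs_le.1 a3).1
      have e1 : D g ^ 3 * (f (g * k) - f (g * l) - 2 * s * D g) =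
        D g ^ 3 * f (g * k) - D g ^ 3 * f (g * l) - 2 * s * D g ^ 4 := by ring
      have e2 : 27 * η ^ 3 * (2 * η * s ^ 2) = 54 * η ^ 4 * s ^ 2 := by ring
      rw [e1, e2] at a4
      linarith
    have hhigh : ∫ g, (D (g * k) ^ 3 * f g - D (g * l) ^ 3 * f g) ∂(haarO (n + 1)) ≤
        s * (∫ g, D g ^ 4 ∂(haarO (n + 1))) + 324 * η ^ 2 * s * ∫ g, f g ^ 2 ∂(haarO (n + 1)) := by
      have jj : Integrable (fun g => s / 2 * D (g * k) ^ 4 + s / 2 * D (g * l) ^ 4) (haarO (n + 1)) :=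
        ((j5 k).const_mul _).add ((j5 l).const_mul _)
      have : s * (∫ g, D g ^ 4 ∂(haarO (n + 1))) + 324 * η ^ 2 * s * (∫ g, f g ^ 2 ∂(haarO (n + 1))) =
          ∫ g, (s / 2 * D (g * k) ^ 4 + s / 2 * D (g * l) ^ 4 + 324 * η ^ 2 * s * f g ^ 2)
            ∂(haarO (n + 1)) := by
        rw [integral_add jj (jf.const_mul _), integral_add ((j5 k).const_mul _) ((j5 l).const_mul _),
          integral_const_mul, integral_const_mul, integral_const_mul,
          integral_OG_mul_right (fun g => D g ^ 4) k, integral_OG_mul_right (fun g => D g ^ 4) l]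
        ring
      rw [this]
      refine integral_mono ((j2 k).sub (j2 l)) (jj.add (jf.const_mul _)) fun g => ?_
      dsimp only
      exact cube_diff hη hs (hdiff g)
    rw [hparts] at hlow
    have h3 := hlow.trans hhigh
    have h4 : s * (∫ g, D g ^ 4 ∂(haarO (n + 1))) ≤
        s * (324 * η ^ 2 * (∫ g, f g ^ 2 ∂(haarO (n + 1))) + 54 * η ^ 4 * s) := by
      nlinarith
    exact le_of_mul_le_mul_left h4 hs
  refine le_of_forall_pos_le_add fun ε hε => ?_
  have hs : 0 < min 1 (ε / (54 * η ^ 4)) := lt_min one_pos (by positivity)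
  have h1 := key _ hs (min_le_left _ _)
  have h2 : 54 * η ^ 4 * min 1 (ε / (54 * η ^ 4)) ≤ ε := by
    calc _ ≤ 54 * η ^ 4 * (ε / (54 * η ^ 4)) := by gcongr; exact min_le_right _ _
      _ = ε := by field_simp
  linarith

/-- The interpolation inequality `‖∇f‖₄² ≤ C ‖∇²f‖_∞ ‖f‖₂` for the perturbation `f = H - 1`: the
squared gradient is small in `L²` relative to the perturbation itself. -/
theorem Sand.gn {n : ℕ} {H : Euc (n + 1) → ℝ} {G : Euc (n + 1) → Euc (n + 1)} {η : ℝ}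
    (h : Sand (1 - η) (1 + η) H G) (hη : 0 < η) (hη1 : η ≤ 1) {F W : C(Euc (n + 1), ℝ)}
    (hF : ∀ u, ‖u‖ = 1 → F u = H u - 1) (hW : ∀ u, ‖u‖ = 1 → W u = ‖G u - u‖ ^ 2) :
    ‖ioH W‖ ≤ 18 * (n + 1) * η * ‖ioH F‖ := by
  have hue : ∀ g : OG (n + 1), ‖g.1 e0‖ = 1 := fun g => by rw [OG_norm, norm_e0]
  have hcx : ∀ x : Euc (n + 1), Continuous fun g : OG (n + 1) => g.1 x := fun x =>
    continuous_OG_apply.comp (Continuous.prodMk continuous_id continuous_const)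
  refine abs_le_of_sq_le_sq' ?_ (by positivity) |>.2
  rw [ioH_eq, ioH_eq, mul_pow, norm_toH_sq, norm_toH_sq]
  simp only [liftO_apply]
  set B := EuclideanSpace.basisFun (Fin (n + 1)) ℝ with hB
  have hD : ∀ i : Fin (n + 1), ∫ g : OG (n + 1), ⟪G (g.1 e0) - g.1 e0, g.1 (B i)⟫ ^ 4 ∂(haarO (n + 1)) ≤
      324 * η ^ 2 * ∫ g : OG (n + 1), F (g.1 e0) ^ 2 ∂(haarO (n + 1)) := by
    intro i
    by_cases hi : i = 0
    · have e : B i = e0 := by rw [hi, hB, EuclideanSpace.basisFun_apply]; rfl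
      rw [← integral_const_mul]
      refine integral_mono (integrable_OG ?_) (integrable_OG ?_) fun g => ?_
      · refine Continuous.pow (Continuous.inner (Continuous.sub ?_ (hcx e0)) (hcx _)) 4
        exact (h.continuousOn_G hη hη1).comp_continuous (hcx e0) fun g => by
          rw [mem_sphere_zero_iff_norm, hue]
      · exact continuous_const.mul ((F.continuous.comp (hcx e0)).pow 2)
      · have e1 : ⟪G (g.1 e0) - g.1 e0, g.1 e0⟫ = F (g.1 e0) := by
          rw [inner_sub_left, h.euler (hue g), inner_self_one (hue g), hF _ (hue g)]
        have e2 := h.near_one hη (hue g)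
        rw [← hF _ (hue g)] at e2
        dsimp only
        rw [e, e1]
        have e3 : F (g.1 e0) ^ 2 ≤ 324 * η ^ 2 := by
          rw [← sq_abs]; nlinarith [abs_nonneg (F (g.1 e0))]
        nlinarith [sq_nonneg (F (g.1 e0))]
    · refine h.gn_dir hη hη1 hF (B.orthonormal.1 i) ?_
      have e : (e0 : Euc (n + 1)) = B 0 := by rw [hB, EuclideanSpace.basisFun_apply]; rfl
      rw [e]
      exact B.orthonormal.2 (Ne.symm hi)
  have hcD : ∀ i : Fin (n + 1), Continuous fun g : OG (n + 1) => ⟪G (g.1 e0) - g.1 e0, g.1 (B i)⟫ ^ 4 := by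
    intro i
    refine Continuous.pow (Continuous.inner (Continuous.sub ?_ (hcx e0)) (hcx _)) 4
    exact (h.continuousOn_G hη hη1).comp_continuous (hcx e0) fun g => by
      rw [mem_sphere_zero_iff_norm, hue]
  calc ∫ g : OG (n + 1), W (g.1 e0) ^ 2 ∂(haarO (n + 1))
      ≤ ∫ g : OG (n + 1), (n + 1 : ℝ) * ∑ i, ⟪G (g.1 e0) - g.1 e0, g.1 (B i)⟫ ^ 4 ∂(haarO (n + 1)) := by
        refine integral_mono (integrable_OG ((W.continuous.comp (hcx e0)).pow 2))
          (integrable_OG (continuous_const.mul (continuous_finsetSum _ fun i _ => hcD i))) fun g => ?_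
        dsimp only
        rw [hW _ (hue g)]
        have e : ‖G (g.1 e0) - g.1 e0‖ ^ 2 = ∑ i, ⟪G (g.1 e0) - g.1 e0, g.1 (B i)⟫ ^ 2 := by
          have := B.sum_sq_norm_inner_left ((star g).1 (G (g.1 e0) - g.1 e0))
          rw [OG_norm] at this
          rw [← this]
          refine Finset.sum_congr rfl fun i _ => ?_
          rw [Real.norm_eq_abs, sq_abs, ← OG_inner g, ← OG_mul_apply]
          simp
        rw [e]
        have := sq_sum_le_card_mul_sum_sq (s := (Finset.univ : Finset (Fin (n + 1))))
          (f := fun i => ⟪G (g.1 e0) - g.1 e0, g.1 (B i)⟫ ^ 2)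
        simp only [Finset.card_univ, Fintype.card_fin, ← pow_mul] at this
        simpa using this
    _ = (n + 1 : ℝ) * ∑ i, ∫ g : OG (n + 1), ⟪G (g.1 e0) - g.1 e0, g.1 (B i)⟫ ^ 4 ∂(haarO (n + 1)) := by
        rw [integral_const_mul, integral_finsetSum _ fun i _ => integrable_OG (hcD i)]
    _ ≤ (n + 1 : ℝ) * ∑ i : Fin (n + 1), (324 * η ^ 2 * ∫ g : OG (n + 1), F (g.1 e0) ^ 2 ∂(haarO (n + 1))) := by
        gcongr with i _; exact hD i
    _ = _ := by
        simp only [Finset.sum_const, Finset.card_univ, Fintype.card_fin, nsmul_eq_mul]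
        push_cast; ring

/-! ### Linearisation of the iterates -/

open Classical in
/-- The perturbation `H - ‖·‖` of the support function of the unit ball as a continuous function
(zero when `H` is not continuous). -/
def pert {n : ℕ} (H : Euc n → ℝ) : C(Euc n, ℝ) :=
  if h : Continuous H then ⟨fun x => H x - ‖x‖, h.sub continuous_norm⟩ else 0

theorem Sand.pert_apply {n : ℕ} {H : Euc (n + 1) → ℝ} {G : Euc (n + 1) → Euc (n + 1)} {η : ℝ}
    (h : Sand (1 - η) (1 + η) H G) (hη : 0 < η) (hη1 : η ≤ 1) (x : Euc (n + 1)) :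
    pert H x = H x - ‖x‖ := by
  unfold pert
  rw [dif_pos (h.continuous hη hη1 ⟨e0, norm_e0⟩)]
  rfl

theorem Sand.pert_unit {n : ℕ} {H : Euc (n + 1) → ℝ} {G : Euc (n + 1) → Euc (n + 1)} {η : ℝ}
    (h : Sand (1 - η) (1 + η) H G) (hη : 0 < η) (hη1 : η ≤ 1) {x : Euc (n + 1)} (hx : ‖x‖ = 1) :
    pert H x = H x - 1 := by
  rw [h.pert_apply hη hη1, hx]

theorem pert_even {n : ℕ} {H : Euc n → ℝ} (h : ∀ x, H (-x) = H x) (x : Euc n) :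
    pert H (-x) = pert H x := by
  unfold pert
  split_ifs
  · simp [h]
  · rfl

/-- The contraction rate of the linearised projection body operator off the quadratic forms. -/
def rate (p : ℕ) : ℝ := (p + 1) * mom p 4

theorem rate_nonneg (p : ℕ) : 0 ≤ rate p := mul_nonneg (by positivity) (mom_nonneg p 2)

theorem toH_sub_le {n : ℕ} {f g w : C(OG n, ℝ)} {c C : ℝ} (h : ∀ x, |f x - c * g x| ≤ |C * w x|) :
    ‖toH f - c • toH g‖ ≤ ‖C • toH w‖ := by
  have e1 : toH f - c • toH g = toH (f - c • g) := by
    rw [ContinuousLinearMap.map_sub, ContinuousLinearMap.map_smul]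
  have e2 : C • toH w = toH (C • w) := (ContinuousLinearMap.map_smul _ _ _).symm
  rw [e1, e2]
  exact toH_mono h

theorem norm_apply_le_of_sub {E : Type*} [NormedAddCommGroup E] [NormedSpace ℝ E] (Q : E →L[ℝ] E)
    (hQ : ∀ z, ‖Q z‖ ≤ ‖z‖) {c : ℝ} (hc : 0 ≤ c) (x y : E) :
    ‖Q x‖ ≤ c * ‖Q y‖ + ‖x - c • y‖ := by
  have e : Q x = c • Q y + Q (x - c • y) := by rw [map_sub, map_smul]; abel
  rw [e]
  refine (norm_add_le _ _).trans ?_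
  rw [norm_smul, Real.norm_of_nonneg hc]
  linarith [hQ (x - c • y)]

set_option maxHeartbeats 1000000 in
/-- One application of the projection body operator: the perturbation is transformed by
`(p + 1)` times the Radon transform up to an error which is small relative to its `L²` norm. -/
theorem step_lin (p : ℕ) {η' : ℝ} (hη' : 0 < η') (hη'1 : η' ≤ 1) :
    ∃ η : ℝ, 0 < η ∧ ∀ (H : Euc (p + 2) → ℝ)
    (G : Euc (p + 2) → Euc (p + 2)), Sand (1 - η) (1 + η) H G →
    (∃ G', Sand (1 - η') (1 + η') (nxt H) G') ∧
    ‖ioH (pert (nxt H)) - ((p : ℝ) + 1) • raH (pert H)‖ ≤ η' * ‖ioH (pert H)‖ := by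
  obtain ⟨η0, hη0, hs⟩ := step_sand p hη'
  obtain ⟨C, hC, hexp⟩ := exists_expansion p
  set η := min (min η0 (1 / 12)) (η' / (18 * (p + 2) * (C + 1))) with hη
  have hpos : 0 < η := lt_min (lt_min hη0 (by norm_num)) (by positivity)
  have hle0 : η ≤ η0 := (min_le_left _ _).trans (min_le_left _ _)
  have hle1 : η ≤ 1 / 12 := (min_le_left _ _).trans (min_le_right _ _)
  have hle2 : η ≤ η' / (18 * (p + 2) * (C + 1)) := min_le_right _ _
  refine ⟨η, hpos, fun H G h => ?_⟩
  obtain ⟨G', hG'⟩ := hs H G (h.mono (by linarith) (by linarith))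
  refine ⟨⟨G', hG'⟩, ?_⟩
  have hcE : ContinuousOn (fun u => ‖G u - u‖ ^ 2) (sphere (0 : Euc (p + 2)) 1) :=
    (((h.continuousOn_G hpos (by linarith)).sub continuousOn_id).norm).pow 2
  obtain ⟨W, hW⟩ := exists_cont_ext hcE
  have hF : ∀ u, ‖u‖ = 1 → pert H u = H u - 1 := fun u hu => h.pert_unit hpos (by linarith) hu
  have e := hexp H G η h hpos hle1 (pert H) W hF hW
  have e1 : ‖ioH (pert (nxt H)) - ((p : ℝ) + 1) • raH (pert H)‖ ≤ ‖C • raH W‖ := by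
    rw [ioH_eq, raH_eq, raH_eq]
    refine toH_sub_le fun g => ?_
    have hg := e g
    rw [liftO_apply, hG'.pert_unit hη' hη'1 (by rw [OG_norm, norm_e0])]
    exact hg.trans (le_abs_self _)
  have e2 := h.gn hpos (by linarith) hF hW
  push_cast at e2
  have e3 := raH_norm_le W
  rw [norm_smul, Real.norm_of_nonneg hC] at e1
  have e4 : C * (18 * (p + 1 + 1) * η) ≤ η' := by
    rw [le_div_iff₀ (by positivity)] at hle2
    have : 0 ≤ 18 * ((p : ℝ) + 2) * η := by positivity
    nlinarith
  calc _ ≤ C * ‖raH W‖ := e1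
    _ ≤ C * (18 * (p + 1 + 1) * η * ‖ioH (pert H)‖) := by gcongr; exact e3.trans e2
    _ = C * (18 * (p + 1 + 1) * η) * ‖ioH (pert H)‖ := by ring
    _ ≤ _ := by gcongr

set_option maxHeartbeats 1000000 in
/-- Iterates of the projection body operator contract the component of the perturbation
orthogonal to the quadratic forms, up to a relatively small error. -/
theorem iter_lin (p : ℕ) (hp : 1 ≤ p) (N : ℕ) : ∀ η' : ℝ, 0 < η' → η' ≤ 1 →
    ∃ η : ℝ, 0 < η ∧ ∀ (H : Euc (p + 2) → ℝ)
    (G : Euc (p + 2) → Euc (p + 2)), Sand (1 - η) (1 + η) H G →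
    (∃ G', Sand (1 - η') (1 + η') (nxt^[N] H) G') ∧
    ‖qperp (p + 1) (ioH (pert (nxt^[N] H)))‖ ≤
      rate p ^ N * ‖qperp (p + 1) (ioH (pert H))‖ + η' * ‖ioH (pert H)‖ ∧
    ‖ioH (pert (nxt^[N] H))‖ ≤ ((p : ℝ) + 2) ^ N * ‖ioH (pert H)‖ ∧
    ∃ c : ℝ, 0 < c ∧ projBody^[N] (bodyOf H) = c • bodyOf (nxt^[N] H) := by
  induction N with
  | zero =>
    intro η' h0 h1
    refine ⟨η', h0, fun H G h => ⟨⟨G, h⟩, ?_, ?_, 1, one_pos, ?_⟩⟩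
    · simp only [pow_zero, one_mul, Function.iterate_zero, id_eq]
      have : 0 ≤ η' * ‖ioH (pert H)‖ := by positivity
      linarith
    · simp
    · simp
  | succ N ih =>
    intro η' h0 h1
    have hr0 := rate_nonneg p
    have hr1 : rate p ≤ 1 := (mom_four_lt hp).le
    set δ := η' / (2 * ((p : ℝ) + 2) ^ N) with hδ
    have hP : (1 : ℝ) ≤ ((p : ℝ) + 2) ^ N := one_le_pow₀ (by linarith [(Nat.cast_nonneg p : (0:ℝ) ≤ p)])
    have hδ0 : 0 < δ := by positivity
    have hδ' : δ ≤ η' := div_le_self h0.le (by linarith)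
    have hδm : δ * ((p : ℝ) + 2) ^ N = η' / 2 := by rw [hδ]; field_simp
    obtain ⟨η1, hη1, hstep⟩ := step_lin p hδ0 (hδ'.trans h1)
    obtain ⟨c1, hc1, hproj⟩ := exists_projBody_const p
    set μ := min (min η1 (η' / 2)) 1 with hμ
    have hμ1 : μ ≤ η1 := (min_le_left _ _).trans (min_le_left _ _)
    have hμ2 : μ ≤ η' / 2 := (min_le_left _ _).trans (min_le_right _ _)
    have hμ3 : μ ≤ 1 := min_le_right _ _
    obtain ⟨η, hη, hih⟩ := ih μ (lt_min (lt_min hη1 (by linarith)) one_pos) hμ3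
    refine ⟨η, hη, fun H G h => ?_⟩
    obtain ⟨⟨G1, hG1⟩, ha, hb, c, hc, hpr⟩ := hih H G h
    obtain ⟨⟨G2, hG2⟩, hlin⟩ := hstep _ _ (hG1.mono (by linarith) (by linarith) : Sand (1 - η1) (1 + η1) _ G1)
    simp only [Function.iterate_succ_apply']
    set HN := nxt^[N] H with hHN
    have ev : ∀ x, pert HN (-x) = pert HN x := pert_even hG1.even
    have gap := raH_gap (pert HN) ev
    have hle := raH_norm_le (pert HN)
    have hp1 : (0 : ℝ) ≤ (p : ℝ) + 1 := by positivity
    refine ⟨⟨G2, hG2.mono (by linarith) (by linarith)⟩, ?_, ?_, ?_⟩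
    · have q1 : ‖qperp (p + 1) (ioH (pert (nxt HN)))‖ ≤
          rate p * ‖qperp (p + 1) (ioH (pert HN))‖ + δ * ‖ioH (pert HN)‖ := by
        refine (norm_apply_le_of_sub (qperp (p + 1)) qperp_norm_le hp1 _ (raH (pert HN))).trans ?_
        refine add_le_add ?_ hlin
        calc _ ≤ ((p : ℝ) + 1) * (mom p 4 * ‖qperp (p + 1) (ioH (pert HN))‖) := by gcongr
          _ = _ := by rw [rate]; ring
      have q2 := mul_le_mul_of_nonneg_left ha hr0
      have q3 := mul_le_mul_of_nonneg_left hb hδ0.le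
      rw [← mul_assoc, hδm] at q3
      have q4 : rate p * (μ * ‖ioH (pert H)‖) ≤ η' / 2 * ‖ioH (pert H)‖ := by
        have hb0 := norm_nonneg (ioH (pert H))
        have : rate p * μ ≤ η' / 2 := by
          have : 0 ≤ μ := (lt_min (lt_min hη1 (by linarith)) one_pos).le
          nlinarith
        nlinarith
      rw [pow_succ']
      linarith
    · have q := norm_apply_le_of_sub (ContinuousLinearMap.id ℝ (HO (p + 2))) (fun z => le_refl _) hp1
        (ioH (pert (nxt HN))) (raH (pert HN))
      have q' : ‖ioH (pert (nxt HN))‖ ≤ ((p : ℝ) + 1) * ‖raH (pert HN)‖ +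
        ‖ioH (pert (nxt HN)) - ((p : ℝ) + 1) • raH (pert HN)‖ := q
      have q1 := mul_le_mul_of_nonneg_left hle hp1
      have q2 : δ * ‖ioH (pert HN)‖ ≤ 1 * ‖ioH (pert HN)‖ := by gcongr; linarith
      rw [pow_succ']
      have hb0 := norm_nonneg (ioH (pert HN))
      have hp2 : (0 : ℝ) ≤ (p : ℝ) + 2 := by positivity
      have := mul_le_mul_of_nonneg_left hb hp2
      linarith
    · obtain ⟨s, hs, hs2⟩ := projBody_smul (hG1.isCompact_body (by linarith) ⟨e0, norm_e0⟩) (convex_bodyOf _) hc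
      refine ⟨s * c1, by positivity, ?_⟩
      rw [hpr, hs2, hproj _ G1 (1 - μ) (1 + μ) (by linarith) hG1, smul_smul]

/-! ### Quadratic forms and the positioning functional -/

/-- On the unit sphere constants are multiples of `‖x‖²`, so `Vk n 1` consists of quadratic forms. -/
theorem quad_of_mem {n : ℕ} {w : C(Euc n, ℝ)} (hw : w ∈ Vk n 1) :
    ∃ S : Euc n →L[ℝ] Euc n, ∀ x, ‖x‖ = 1 → w x = ⟪x, S x⟫ := by
  unfold Vk at hw
  induction hw using Submodule.span_induction with
  | mem w hw =>
    obtain ⟨a, j, hj, rfl⟩ := hw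
    interval_cases j
    · exact ⟨ContinuousLinearMap.id ℝ _, fun x hx => by
        rw [pw_apply, ContinuousLinearMap.id_apply, inner_self_one hx]; simp⟩
    · exact ⟨(innerSL ℝ a).smulRight a, fun x hx => by
        rw [pw_apply]
        simp only [ContinuousLinearMap.smulRight_apply, innerSL_apply_apply, inner_smul_right]
        rw [real_inner_comm a x]; ring⟩
  | zero => exact ⟨0, fun x hx => by simp⟩
  | add v w _ _ hv hw =>
    obtain ⟨S, hS⟩ := hv
    obtain ⟨T, hT⟩ := hw
    exact ⟨S + T, fun x hx => by
      rw [ContinuousMap.add_apply, hS x hx, hT x hx, _root_.add_apply, inner_add_right]⟩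
  | smul c v _ hv =>
    obtain ⟨S, hS⟩ := hv
    exact ⟨c • S, fun x hx => by
      rw [ContinuousMap.smul_apply, hS x hx, _root_.smul_apply, inner_smul_right,
        smul_eq_mul]⟩

theorem norm_le_of_basis {E : Type*} [NormedAddCommGroup E] [InnerProductSpace ℝ E]
    (M : Submodule ℝ E) [M.HasOrthogonalProjection] {ι : Type*} [Fintype ι]
    (b : OrthonormalBasis ι ℝ M) {c : ι → ℝ} (v : E) (h : ∀ i, |⟪v, (b i : E)⟫| ≤ c i) :
    ‖v‖ ≤ ∑ i, c i + ‖Mᗮ.starProjection v‖ := by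
  have hdec : M.starProjection v + Mᗮ.starProjection v = v :=
    Submodule.starProjection_add_starProjection_orthogonal v
  have h1 : ‖M.starProjection v‖ ≤ ∑ i, c i := by
    have e : M.orthogonalProjectionOnto v = ∑ i, ⟪(b i : E), v⟫ • b i := by
      rw [← b.sum_repr' (M.orthogonalProjectionOnto v)]
      refine Finset.sum_congr rfl fun i _ => ?_
      congr 1
      rw [Submodule.inner_orthogonalProjectionOnto_eq_of_mem_left]
    have e2 : ‖M.starProjection v‖ = ‖M.orthogonalProjectionOnto v‖ := rfl
    rw [e2, e]
    refine (norm_sum_le _ _).trans (Finset.sum_le_sum fun i _ => ?_)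
    rw [norm_smul, b.orthonormal.1 i, mul_one, Real.norm_eq_abs, real_inner_comm]
    exact h i
  calc ‖v‖ = ‖M.starProjection v + Mᗮ.starProjection v‖ := by rw [hdec]
    _ ≤ ‖M.starProjection v‖ + ‖Mᗮ.starProjection v‖ := norm_add_le _ _
    _ ≤ _ := add_le_add h1 (le_refl _)

/-- If a vector is almost orthogonal to every quadratic form, its projection to the space of
quadratic forms is small. -/
theorem exists_quad_bound (n : ℕ) : ∃ C : ℝ, 0 ≤ C ∧ ∀ (v : HO (n + 1)) (ε : ℝ), 0 ≤ ε →
    (∀ (w : C(Euc (n + 1), ℝ)) (S : Euc (n + 1) →L[ℝ] Euc (n + 1)),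
      (∀ x, ‖x‖ = 1 → w x = ⟪x, S x⟫) → |⟪v, ioH w⟫| ≤ ε * ‖S‖) →
    ‖v‖ ≤ C * ε + ‖qperp n v‖ := by
  set M : Submodule ℝ (HO (n + 1)) := (Vk (n + 1) 1).map ioH with hM
  set b := stdOrthonormalBasis ℝ M with hb
  have hq : ∀ i, ∃ (w : C(Euc (n + 1), ℝ)) (S : Euc (n + 1) →L[ℝ] Euc (n + 1)),
      (∀ x, ‖x‖ = 1 → w x = ⟪x, S x⟫) ∧ ioH w = (b i : HO (n + 1)) := by
    intro i
    obtain ⟨w, hw, hwb⟩ := (b i).2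
    obtain ⟨S, hS⟩ := quad_of_mem hw
    exact ⟨w, S, hS, hwb⟩
  choose w S hS hw using hq
  refine ⟨∑ i, ‖S i‖, Finset.sum_nonneg fun i _ => norm_nonneg _, fun v ε hε h => ?_⟩
  rw [Finset.sum_mul]
  refine norm_le_of_basis M b v fun i => ?_
  rw [← hw i, mul_comm]
  exact h _ _ (hS i)

/-- The functional minimised in order to put a body in good position. -/
def Jfun {n : ℕ} (H : Euc (n + 1) → ℝ) (A : Euc (n + 1) →L[ℝ] Euc (n + 1)) : ℝ :=
  ∫ g : OG (n + 1), (H (A (g.1 e0)) - 1) ^ 2 ∂(haarO (n + 1))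

theorem continuous_Jfun_aux {n : ℕ} {H : Euc (n + 1) → ℝ} (hH : Continuous H) :
    Continuous fun q : (Euc (n + 1) →L[ℝ] Euc (n + 1)) × OG (n + 1) => (H (q.1 (q.2.1 e0)) - 1) ^ 2 := by
  have : Continuous fun q : (Euc (n + 1) →L[ℝ] Euc (n + 1)) × OG (n + 1) => q.1 (q.2.1 e0) :=
    continuous_fst.clm_apply (continuous_OG_apply.comp (Continuous.prodMk continuous_snd continuous_const))
  exact ((hH.comp this).sub continuous_const).pow 2

theorem continuous_Jfun {n : ℕ} {H : Euc (n + 1) → ℝ} (hH : Continuous H) : Continuous (Jfun H) := by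
  have := continuous_parametric_integral_of_continuous (μ := haarO (n + 1))
    (f := fun (A : Euc (n + 1) →L[ℝ] Euc (n + 1)) (g : OG (n + 1)) => (H (A (g.1 e0)) - 1) ^ 2)
    (continuous_Jfun_aux hH) isCompact_univ
  unfold Jfun
  simpa using this

theorem integrable_Jfun {n : ℕ} {H : Euc (n + 1) → ℝ} (hH : Continuous H)
    (A : Euc (n + 1) →L[ℝ] Euc (n + 1)) :
    Integrable (fun g : OG (n + 1) => (H (A (g.1 e0)) - 1) ^ 2) (haarO (n + 1)) :=
  integrable_OG ((continuous_Jfun_aux hH).comp (Continuous.prodMk continuous_const continuous_id))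

/-- Maps which nearly preserve lengths in the mean are nearly orthogonal, by compactness. -/
theorem near_isom_of_Jfun (n : ℕ) {ρ : ℝ} (hρ : 0 < ρ) : ∃ δ : ℝ, 0 < δ ∧
    ∀ A : Euc (n + 1) →L[ℝ] Euc (n + 1), ‖A‖ ≤ 2 → Jfun (fun x => ‖x‖) A < δ →
      ∀ x y, |⟪A x, A y⟫ - ⟪x, y⟫| ≤ ρ * ‖x‖ * ‖y‖ := by
  set T : Set (Euc (n + 1) →L[ℝ] Euc (n + 1)) :=
    closedBall 0 2 ∩ {A | ρ ≤ ‖A.adjoint ∘L A - ContinuousLinearMap.id ℝ _‖} with hT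
  have hcont : Continuous fun A : Euc (n + 1) →L[ℝ] Euc (n + 1) =>
      ‖A.adjoint ∘L A - ContinuousLinearMap.id ℝ (Euc (n + 1))‖ := by
    refine ((Continuous.clm_comp ?_ continuous_id).sub continuous_const).norm
    exact (ContinuousLinearMap.adjoint (𝕜 := ℝ) (E := Euc (n + 1)) (F := Euc (n + 1))).continuous
  have hTc : IsCompact T := (isCompact_closedBall _ _).inter_right (isClosed_le continuous_const hcont)
  have hJ0 : ∀ A : Euc (n + 1) →L[ℝ] Euc (n + 1), 0 ≤ Jfun (fun x => ‖x‖) A := fun A =>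
    integral_nonneg fun g => sq_nonneg _
  have hpos : ∀ A ∈ T, 0 < Jfun (fun x => ‖x‖) A := by
    intro A hA
    refine lt_of_le_of_ne (hJ0 A) fun h0 => ?_
    have h1 : (fun g : OG (n + 1) => (‖A (g.1 e0)‖ - 1) ^ 2) = 0 := by
      have hi := integrable_Jfun (n := n) continuous_norm A
      have h2 := (integral_eq_zero_iff_of_nonneg (fun g => sq_nonneg _) hi).1 h0.symm
      exact (Continuous.ae_eq_iff_eq _ ((continuous_Jfun_aux continuous_norm).comp
        (Continuous.prodMk continuous_const continuous_id)) continuous_zero).1 h2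
    have h2 : ∀ x, ‖A x‖ = ‖x‖ := by
      intro x
      by_cases hx : x = 0
      · rw [hx, map_zero]
      · obtain ⟨y, hy, hxy⟩ := exists_unit x hx
        obtain ⟨g, hg⟩ := exists_OG_e0 hy
        have h3 := congrFun h1 g
        simp only [hg, Pi.zero_apply] at h3
        have h4 : ‖A y‖ = 1 := by
          have := pow_eq_zero_iff (two_ne_zero) |>.1 h3
          linarith
        rw [hxy, map_smul, norm_smul, norm_smul, h4, hy]
    have h3 : A.adjoint ∘L A = ContinuousLinearMap.id ℝ _ := by
      ext1 x
      refine ext_inner_right ℝ fun y => ?_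
      rw [ContinuousLinearMap.comp_apply, ContinuousLinearMap.adjoint_inner_left]
      exact LinearIsometry.inner_map_map (⟨A.toLinearMap, h2⟩ : Euc (n + 1) →ₗᵢ[ℝ] Euc (n + 1)) x y
    have h4 : ρ ≤ ‖A.adjoint ∘L A - ContinuousLinearMap.id ℝ _‖ := hA.2
    rw [h3, sub_self, norm_zero] at h4
    linarith
  have hδ : ∃ δ : ℝ, 0 < δ ∧ ∀ A ∈ T, δ ≤ Jfun (fun x => ‖x‖) A := by
    rcases T.eq_empty_or_nonempty with he | hne
    · exact ⟨1, one_pos, fun A hA => by rw [he] at hA; exact hA.elim⟩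
    · obtain ⟨A, hA, hmin⟩ := hTc.exists_isMinOn hne (continuous_Jfun continuous_norm).continuousOn
      exact ⟨_, hpos A hA, fun B hB => hmin hB⟩
  obtain ⟨δ, hδ0, hδ⟩ := hδ
  refine ⟨δ, hδ0, fun A hA hJ x y => ?_⟩
  have hn : ‖A.adjoint ∘L A - ContinuousLinearMap.id ℝ (Euc (n + 1))‖ ≤ ρ := by
    by_contra hcon
    exact absurd (hδ A ⟨mem_closedBall_zero_iff.2 hA, (not_le.1 hcon).le⟩) (not_le.2 hJ)
  have e : ⟪A x, A y⟫ - ⟪x, y⟫ = ⟪(A.adjoint ∘L A - ContinuousLinearMap.id ℝ (Euc (n + 1))) x, y⟫ := by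
    rw [_root_.sub_apply, inner_sub_left, ContinuousLinearMap.comp_apply,
      ContinuousLinearMap.adjoint_inner_left, ContinuousLinearMap.id_apply]
  rw [e]
  refine (abs_real_inner_le_norm _ _).trans ?_
  gcongr
  exact (ContinuousLinearMap.le_opNorm _ _).trans (by gcongr)

/-! ### Positioning by a linear map -/

theorem sq_expand {f q θ t s : ℝ} (hf : |f| ≤ 1) (hq : |q| ≤ 2 * s) (h0 : 0 ≤ θ) (h1 : θ ≤ t ^ 2 * s ^ 2)
    (ht : 0 ≤ t) (ht1 : t ≤ 1) (hs : 0 ≤ s) :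
    (f + t * q + θ) ^ 2 ≤ f ^ 2 + 2 * t * (f * q) + t ^ 2 * (2 * s ^ 2 + (2 * s + s ^ 2) ^ 2) := by
  have a1 : |t * q + θ| ≤ t * (2 * s + s ^ 2) := by
    refine (abs_add_le _ _).trans ?_
    rw [abs_mul, abs_of_nonneg ht, abs_of_nonneg h0]
    have : t ^ 2 * s ^ 2 ≤ t * s ^ 2 := by
      have : t ^ 2 ≤ t := by nlinarith
      gcongr
    nlinarith
  have a2 : (t * q + θ) ^ 2 ≤ (t * (2 * s + s ^ 2)) ^ 2 := by
    rw [← sq_abs]; exact pow_le_pow_left₀ (abs_nonneg _) a1 2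
  have a3 : f * θ ≤ t ^ 2 * s ^ 2 := by
    have := (abs_le.1 hf).2
    nlinarith
  nlinarith

/-- First variation of `Jfun` in the direction of a linear map `S`. -/
theorem Sand.first_order {n : ℕ} {H : Euc (n + 1) → ℝ} {G : Euc (n + 1) → Euc (n + 1)} {η : ℝ}
    (h : Sand (1 - η) (1 + η) H G) (hη : 0 < η) (hη1 : η ≤ 1 / 3)
    (S : Euc (n + 1) →L[ℝ] Euc (n + 1)) {t0 : ℝ} (ht0 : 0 < t0)
    (hmin : ∀ t, 0 < t → t ≤ t0 → Jfun H (ContinuousLinearMap.id ℝ _) ≤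
      Jfun H (ContinuousLinearMap.id ℝ _ + t • S)) :
    0 ≤ ∫ g : OG (n + 1), (H (g.1 e0) - 1) * ⟪G (g.1 e0), S (g.1 e0)⟫ ∂(haarO (n + 1)) := by
  have hue : ∀ g : OG (n + 1), ‖g.1 e0‖ = 1 := fun g => by rw [OG_norm, norm_e0]
  have hcx : Continuous fun g : OG (n + 1) => g.1 e0 :=
    continuous_OG_apply.comp (Continuous.prodMk continuous_id continuous_const)
  have hH : Continuous H := h.continuous hη (by linarith) ⟨e0, norm_e0⟩
  have hcq : Continuous fun g : OG (n + 1) => ⟪G (g.1 e0), S (g.1 e0)⟫ :=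
    Continuous.inner ((h.continuousOn_G hη (by linarith)).comp_continuous hcx fun g => by
      rw [mem_sphere_zero_iff_norm, hue]) (S.continuous.comp hcx)
  have hi : Integrable (fun g : OG (n + 1) => (H (g.1 e0) - 1) * ⟪G (g.1 e0), S (g.1 e0)⟫)
      (haarO (n + 1)) := integrable_OG (((hH.comp hcx).sub continuous_const).mul hcq)
  set s := ‖S‖ with hs
  set I := ∫ g : OG (n + 1), (H (g.1 e0) - 1) * ⟪G (g.1 e0), S (g.1 e0)⟫ ∂(haarO (n + 1)) with hI
  set c := 2 * s ^ 2 + (2 * s + s ^ 2) ^ 2 with hc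
  have hs0 : 0 ≤ s := norm_nonneg _
  have key : ∀ t, 0 < t → t ≤ t0 → t ≤ 1 → 0 ≤ 2 * I + t * c := by
    intro t ht htt ht1
    have h1 := hmin t ht htt
    have i0 : Integrable (fun g : OG (n + 1) => (H (g.1 e0) - 1) ^ 2) (haarO (n + 1)) :=
      integrable_Jfun hH (ContinuousLinearMap.id ℝ _)
    have i2 : Integrable (fun g : OG (n + 1) => (H (g.1 e0) - 1) ^ 2 +
        2 * t * ((H (g.1 e0) - 1) * ⟪G (g.1 e0), S (g.1 e0)⟫)) (haarO (n + 1)) :=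
      i0.add (hi.const_mul _)
    have h2 : Jfun H (ContinuousLinearMap.id ℝ _ + t • S) ≤
        Jfun H (ContinuousLinearMap.id ℝ _) + 2 * t * I + t ^ 2 * c := by
      have e : Jfun H (ContinuousLinearMap.id ℝ _) + 2 * t * I + t ^ 2 * c =
          ∫ g : OG (n + 1), ((H (g.1 e0) - 1) ^ 2 +
            2 * t * ((H (g.1 e0) - 1) * ⟪G (g.1 e0), S (g.1 e0)⟫) + t ^ 2 * c) ∂(haarO (n + 1)) := by
        rw [integral_add i2 (integrable_const _),
          integral_add i0 (hi.const_mul _),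
          integral_const_mul]
        simp [Jfun, hI]
      rw [e]
      refine integral_mono (integrable_Jfun hH _) (i2.add (integrable_const _)) fun g => ?_
      dsimp only
      have hu := hue g
      generalize g.1 e0 = u at *
      have ex : (ContinuousLinearMap.id ℝ (Euc (n + 1)) + t • S) u = u + t • S u := rfl
      rw [ex]
      have hSu : ‖S u‖ ≤ s := by have := S.le_opNorm u; rwa [hu, mul_one] at this
      have a1 := h.lo (u + t • S u) u hu
      have a2 := h.hi (u + t • S u) u hu
      have a3 := norm_sub_inner_le hu (u + t • S u)
      have a4 := inner_le_norm_unit hu (u + t • S u)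
      rw [add_sub_cancel_left, norm_smul, Real.norm_of_nonneg ht.le] at a3
      have a5 : ⟪G u, u + t • S u⟫ = H u + t * ⟪G u, S u⟫ := by
        rw [inner_add_right, inner_smul_right, h.euler hu]
      rw [a5] at a1 a2
      have hG : ‖G u‖ ≤ 2 := by
        have b1 := h.near hη hu
        have b2 : ‖G u‖ ≤ ‖G u - u‖ + ‖u‖ := by
          have := norm_add_le (G u - u) u; rwa [sub_add_cancel] at this
        rw [hu] at b2; linarith
      have hq : |⟪G u, S u⟫| ≤ 2 * s := (abs_real_inner_le_norm _ _).trans (by gcongr)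
      have hf : |H u - 1| ≤ 1 := (h.near_one hη hu).trans (by linarith)
      have hθ : H (u + t • S u) - 1 = (H u - 1) + t * ⟪G u, S u⟫ +
        (H (u + t • S u) - H u - t * ⟪G u, S u⟫) := by ring
      rw [hθ]
      refine sq_expand hf hq ?_ ?_ ht.le ht1 hs0
      · nlinarith
      · have : (t * ‖S u‖) ^ 2 ≤ t ^ 2 * s ^ 2 := by
          rw [mul_pow]; gcongr
        nlinarith
    have h3 : 0 ≤ t * (2 * I + t * c) := by nlinarith
    exact nonneg_of_mul_nonneg_right h3 ht
  by_contra hcon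
  push Not at hcon
  have hc0 : 0 ≤ c := by positivity
  set t := min (min t0 1) (-I / (c + 1)) with ht
  have htp : 0 < t := lt_min (lt_min ht0 one_pos) (div_pos (by linarith) (by linarith))
  have h1 := key t htp ((min_le_left _ _).trans (min_le_left _ _)) ((min_le_left _ _).trans (min_le_right _ _))
  have h2 : t * (c + 1) ≤ -I := (le_div_iff₀ (by linarith)).1 (min_le_right _ _)
  nlinarith

/-- At a minimum of `Jfun`, the perturbation is almost orthogonal to quadratic forms. -/
theorem Sand.almost_orth {n : ℕ} {H : Euc (n + 1) → ℝ} {G : Euc (n + 1) → Euc (n + 1)} {η : ℝ}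
    (h : Sand (1 - η) (1 + η) H G) (hη : 0 < η) (hη1 : η ≤ 1 / 3)
    (hmin : ∀ S : Euc (n + 1) →L[ℝ] Euc (n + 1), ∃ t0 : ℝ, 0 < t0 ∧ ∀ t, 0 < t → t ≤ t0 →
      Jfun H (ContinuousLinearMap.id ℝ _) ≤ Jfun H (ContinuousLinearMap.id ℝ _ + t • S))
    (w : C(Euc (n + 1), ℝ)) (S : Euc (n + 1) →L[ℝ] Euc (n + 1))
    (hw : ∀ x, ‖x‖ = 1 → w x = ⟪x, S x⟫) :
    |⟪ioH (pert H), ioH w⟫| ≤ 3 * η * ‖ioH (pert H)‖ * ‖S‖ := by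
  have hue : ∀ g : OG (n + 1), ‖g.1 e0‖ = 1 := fun g => by rw [OG_norm, norm_e0]
  have hcx : Continuous fun g : OG (n + 1) => g.1 e0 :=
    continuous_OG_apply.comp (Continuous.prodMk continuous_id continuous_const)
  have hcG : Continuous fun g : OG (n + 1) => G (g.1 e0) :=
    (h.continuousOn_G hη (by linarith)).comp_continuous hcx fun g => by
      rw [mem_sphere_zero_iff_norm, hue]
  have hzero : ∫ g : OG (n + 1), (H (g.1 e0) - 1) * ⟪G (g.1 e0), S (g.1 e0)⟫ ∂(haarO (n + 1)) = 0 := by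
    obtain ⟨t0, ht0, h0⟩ := hmin S
    obtain ⟨t1, ht1, h1⟩ := hmin (-S)
    have a0 := h.first_order hη hη1 S ht0 h0
    have a1 := h.first_order hη hη1 (-S) ht1 h1
    have e : ∀ g : OG (n + 1), (H (g.1 e0) - 1) * ⟪G (g.1 e0), (-S) (g.1 e0)⟫ =
        -((H (g.1 e0) - 1) * ⟪G (g.1 e0), S (g.1 e0)⟫) := fun g => by
      rw [_root_.neg_apply, inner_neg_right]; ring
    simp only [e, integral_neg] at a1
    linarith
  -- the error made on replacing the gradient `G u` by `u`
  set b : C(OG (n + 1), ℝ) := ⟨fun g => ⟪G (g.1 e0) - g.1 e0, S (g.1 e0)⟫,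
    Continuous.inner (hcG.sub hcx) (S.continuous.comp hcx)⟩ with hb
  have hbn : ‖toH b‖ ≤ 3 * η * ‖S‖ := by
    refine norm_toH_le (by positivity) fun g => ?_
    refine (abs_real_inner_le_norm (G (g.1 e0) - g.1 e0) (S (g.1 e0))).trans ?_
    have h1 := S.le_opNorm (g.1 e0)
    rw [hue, mul_one] at h1
    exact mul_le_mul (h.near hη (hue g)) h1 (norm_nonneg _) (by positivity)
  have e : ⟪ioH (pert H), ioH w⟫ = -⟪ioH (pert H), toH b⟫ := by
    rw [ioH_eq, ioH_eq, inner_toH, inner_toH, eq_neg_iff_add_eq_zero, ← integral_add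
      (integrable_OG (by fun_prop)) (integrable_OG (by fun_prop)), ← hzero]
    congr 1; ext g
    rw [liftO_apply, liftO_apply, hw _ (hue g), h.pert_unit hη (by linarith) (hue g)]
    simp only [hb, ContinuousMap.coe_mk, inner_sub_left]
    ring
  rw [e, abs_neg]
  refine (abs_real_inner_le_norm _ _).trans ?_
  calc _ ≤ ‖ioH (pert H)‖ * (3 * η * ‖S‖) := by gcongr
    _ = _ := by ring

/-- For `H` close to the norm, `Jfun H` is small at the identity and controls `Jfun ‖·‖`; hence its
minimisers are nearly orthogonal. -/
theorem Sand.Jfun_bounds {n : ℕ} {H : Euc (n + 1) → ℝ} {G : Euc (n + 1) → Euc (n + 1)} {η : ℝ}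
    (h : Sand (1 - η) (1 + η) H G) (hη : 0 < η) (hη1 : η ≤ 1) :
    Jfun H (ContinuousLinearMap.id ℝ _) ≤ 9 * η ^ 2 ∧
    ∀ A : Euc (n + 1) →L[ℝ] Euc (n + 1), ‖A‖ ≤ 2 →
      Jfun (fun x => ‖x‖) A ≤ 2 * Jfun H A + 72 * η ^ 2 := by
  have hue : ∀ g : OG (n + 1), ‖g.1 e0‖ = 1 := fun g => by rw [OG_norm, norm_e0]
  have hH : Continuous H := h.continuous hη (by linarith) ⟨e0, norm_e0⟩
  have hb : ∀ x, |H x - ‖x‖| ≤ 3 * η * ‖x‖ := by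
    intro x
    by_cases hx : x = 0
    · rw [hx, h.H_zero ⟨e0, norm_e0⟩]; simp
    · obtain ⟨y, hy, hxy⟩ := exists_unit x hx
      have h1 := h.hom_unit hy (norm_nonneg x)
      rw [← hxy] at h1
      have h2 := h.near_one hη hy
      have e : H x - ‖x‖ = ‖x‖ * (H y - 1) := by rw [h1]; ring
      rw [e, abs_mul, abs_norm]
      nlinarith [norm_nonneg x]
  constructor
  · calc Jfun H (ContinuousLinearMap.id ℝ _) ≤ ∫ g : OG (n + 1), 9 * η ^ 2 ∂(haarO (n + 1)) := by
          refine integral_mono (integrable_Jfun hH _) (integrable_const _) fun g => ?_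
          have := h.near_one hη (hue g)
          change (H (g.1 e0) - 1) ^ 2 ≤ 9 * η ^ 2
          rw [← sq_abs]
          nlinarith [abs_nonneg (H (g.1 e0) - 1)]
      _ = 9 * η ^ 2 := by simp
  · intro A hA
    have e : 2 * Jfun H A + 72 * η ^ 2 = ∫ g : OG (n + 1), (2 * (H (A (g.1 e0)) - 1) ^ 2 + 72 * η ^ 2)
        ∂(haarO (n + 1)) := by
      rw [integral_add ((integrable_Jfun hH A).const_mul _) (integrable_const _), integral_const_mul]
      simp [Jfun]
    rw [e]
    refine integral_mono (integrable_Jfun continuous_norm _)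
      (((integrable_Jfun hH A).const_mul _).add (integrable_const _)) fun g => ?_
    dsimp only
    have h1 := hb (A (g.1 e0))
    have h2 : ‖A (g.1 e0)‖ ≤ 2 := by
      have := A.le_opNorm (g.1 e0); rw [hue, mul_one] at this; linarith
    have h3 : |H (A (g.1 e0)) - ‖A (g.1 e0)‖| ≤ 6 * η := h1.trans (by nlinarith)
    have h4 : (H (A (g.1 e0)) - ‖A (g.1 e0)‖) ^ 2 ≤ 36 * η ^ 2 := by
      rw [← sq_abs]; nlinarith [abs_nonneg (H (A (g.1 e0)) - ‖A (g.1 e0)‖)]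
    nlinarith [sq_nonneg ((H (A (g.1 e0)) - 1) + (H (A (g.1 e0)) - ‖A (g.1 e0)‖))]

/-- Composition of the support function with `A` is the image of the body under the adjoint of `A`. -/
theorem bodyOf_comp {n : ℕ} {H : Euc n → ℝ} {G G' : Euc n → Euc n} {r R r' R' : ℝ}
    (h : Sand r R H G) (hn : ∃ y : Euc n, ‖y‖ = 1) (A : Euc n →L[ℝ] Euc n)
    (B : Euc n ≃ₗ[ℝ] Euc n) (hB : ∀ x, B x = A.adjoint x)
    (hAs : Function.Surjective A) (h' : Sand r' R' (fun x => H (A x)) G') :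
    bodyOf (fun x => H (A x)) = B '' bodyOf H := by
  ext x
  constructor
  · intro hx
    refine ⟨B.symm x, fun u _ => ?_, B.apply_symm_apply x⟩
    obtain ⟨y, rfl⟩ := hAs u
    rw [← ContinuousLinearMap.adjoint_inner_left, ← hB, B.apply_symm_apply]
    exact h'.le_of_mem hn hx y
  · rintro ⟨z, hz, rfl⟩ u _
    rw [hB, ContinuousLinearMap.adjoint_inner_left]
    exact h.le_of_mem hn hz (A u)

/-- After a linear change of variables, the perturbation is almost orthogonal to quadratic forms,
hence dominated by its component orthogonal to them. -/
theorem exists_position (n : ℕ) {η' : ℝ} (hη' : 0 < η') (hη'1 : η' ≤ 1 / 3) :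
    ∃ η : ℝ, 0 < η ∧ ∀ (H : Euc (n + 1) → ℝ) (G : Euc (n + 1) → Euc (n + 1)),
      Sand (1 - η) (1 + η) H G → ∃ (B : Euc (n + 1) ≃ₗ[ℝ] Euc (n + 1)) (H' : Euc (n + 1) → ℝ)
        (G' : Euc (n + 1) → Euc (n + 1)), Sand (1 - η') (1 + η') H' G' ∧
        bodyOf H' = B '' bodyOf H ∧ ‖ioH (pert H')‖ ≤ 2 * ‖qperp n (ioH (pert H'))‖ := by
  obtain ⟨C, hC, hquad⟩ := exists_quad_bound n
  -- the closeness to the ball needed for the almost orthogonality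
  set μ := min η' (1 / (6 * (C + 1))) with hμ
  have hμ0 : 0 < μ := lt_min hη' (by positivity)
  have hμ1 : μ ≤ η' := min_le_left _ _
  have hμ2 : C * (3 * μ) ≤ 1 / 2 := by
    have : μ * (6 * (C + 1)) ≤ 1 := (le_div_iff₀ (by positivity)).1 (min_le_right _ _)
    nlinarith
  set ρ := min (μ / 16) (1 / 4) with hρ
  have hρ0 : 0 < ρ := lt_min (by positivity) (by norm_num)
  have hρ1 : ρ ≤ μ / 16 := min_le_left _ _
  have hρ2 : ρ ≤ 1 / 4 := min_le_right _ _
  obtain ⟨δ, hδ, hnear⟩ := near_isom_of_Jfun n hρ0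
  set η := min (min (μ / 2) 1) (δ / 100) with hη
  have hη0 : 0 < η := lt_min (lt_min (by positivity) one_pos) (by positivity)
  have hηa : η ≤ μ / 2 := (min_le_left _ _).trans (min_le_left _ _)
  have hηb : η ≤ 1 := (min_le_left _ _).trans (min_le_right _ _)
  have hηc : η ≤ δ / 100 := min_le_right _ _
  refine ⟨η, hη0, fun H G h => ?_⟩
  have hH : Continuous H := h.continuous hη0 hηb ⟨e0, norm_e0⟩
  obtain ⟨A, hA, hAmin⟩ := (isCompact_closedBall (0 : Euc (n + 1) →L[ℝ] Euc (n + 1)) 2).exists_isMinOn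
    ⟨0, by simp⟩ (continuous_Jfun hH).continuousOn
  have hA2 : ‖A‖ ≤ 2 := mem_closedBall_zero_iff.1 hA
  have hid : ‖ContinuousLinearMap.id ℝ (Euc (n + 1))‖ ≤ 2 :=
    ContinuousLinearMap.norm_id_le.trans (by norm_num)
  have hJ1 : Jfun H A ≤ 9 * η ^ 2 :=
    (hAmin (mem_closedBall_zero_iff.2 hid)).trans (h.Jfun_bounds hη0 hηb).1
  have hJ2 := (h.Jfun_bounds hη0 hηb).2 A hA2
  have hiso := hnear A hA2 (by nlinarith)
  have hA1 : ‖A‖ ≤ 5 / 4 := by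
    refine ContinuousLinearMap.opNorm_le_bound _ (by norm_num) fun x => ?_
    by_cases hx : x = 0
    · rw [hx]; simp
    · obtain ⟨y, hy, hxy⟩ := exists_unit x hx
      rw [hxy, map_smul, norm_smul, norm_smul, hy, norm_norm]
      nlinarith [(near_isom_norm hiso (by linarith) hy).2, norm_nonneg x]
  have hinj : Function.Injective A := by
    rw [injective_iff_map_eq_zero]
    intro x hx
    by_contra hx0
    obtain ⟨y, hy, hxy⟩ := exists_unit x hx0
    have h1 := (near_isom_norm hiso (by linarith) hy).1
    rw [hxy, map_smul, smul_eq_zero] at hx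
    rcases hx with h2 | h2
    · exact hx0 (norm_eq_zero.1 h2)
    · rw [h2, norm_zero] at h1; linarith
  have hsurj : Function.Surjective A := LinearMap.surjective_of_injective (f := A.toLinearMap) hinj
  have hadj : Function.Injective A.adjoint := by
    rw [injective_iff_map_eq_zero]
    intro x hx
    refine ext_inner_right ℝ fun y => ?_
    obtain ⟨z, rfl⟩ := hsurj y
    rw [← ContinuousLinearMap.adjoint_inner_left, hx, inner_zero_left, inner_zero_left]
  have hS := h.comp (by linarith) (by linarith) hiso hρ0.le (by linarith)
  have hS1 := hS.mono (r' := 1 - μ) (R' := 1 + μ) (by nlinarith) (by nlinarith)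
  refine ⟨LinearEquiv.ofInjectiveEndo A.adjoint.toLinearMap hadj, fun x => H (A x), _,
    hS1.mono (by linarith) (by linarith),
    bodyOf_comp h ⟨e0, norm_e0⟩ A _ (fun x => rfl) hsurj hS, ?_⟩
  have horth := hS1.almost_orth hμ0 (by linarith) (fun S => ?_)
  · have h1 := hquad (ioH (pert fun x => H (A x))) (3 * μ * ‖ioH (pert fun x => H (A x))‖)
      (by positivity) horth
    have h2 : C * (3 * μ * ‖ioH (pert fun x => H (A x))‖) ≤ 1 / 2 * ‖ioH (pert fun x => H (A x))‖ := by
      rw [← mul_assoc]; gcongr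
    linarith
  · refine ⟨1 / (2 * (‖S‖ + 1)), by positivity, fun t ht htt => ?_⟩
    have e1 : Jfun (fun x => H (A x)) (ContinuousLinearMap.id ℝ _) = Jfun H A := rfl
    have e2 : Jfun (fun x => H (A x)) (ContinuousLinearMap.id ℝ _ + t • S) =
      Jfun H (A ∘L (ContinuousLinearMap.id ℝ _ + t • S)) := rfl
    rw [e1, e2]
    refine hAmin (mem_closedBall_zero_iff.2 ?_)
    have hs0 := norm_nonneg S
    have h1 : t * ‖S‖ ≤ 1 / 2 := by
      rw [le_div_iff₀ (by positivity)] at htt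
      nlinarith
    have h2 : ‖ContinuousLinearMap.id ℝ (Euc (n + 1)) + t • S‖ ≤ 3 / 2 := by
      refine (norm_add_le _ _).trans ?_
      rw [norm_smul, Real.norm_of_nonneg ht.le]
      linarith [ContinuousLinearMap.norm_id_le (𝕜 := ℝ) (E := Euc (n + 1))]
    calc _ ≤ ‖A‖ * ‖ContinuousLinearMap.id ℝ (Euc (n + 1)) + t • S‖ := ContinuousLinearMap.opNorm_comp_le _ _
      _ ≤ 5 / 4 * (3 / 2) := by gcongr
      _ ≤ 2 := by norm_num

/-! ### Rigidity -/

/-- The support function is determined by the body: bodies which agree up to a dilation have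
proportional support functions. -/
theorem Sand.eq_of_body_smul {n : ℕ} {r R r' R' : ℝ} {H H' : Euc n → ℝ} {G G' : Euc n → Euc n}
    (h : Sand r R H G) (h' : Sand r' R' H' G') (hr : 0 ≤ r) (hr' : 0 ≤ r') {c : ℝ} (hc : 0 < c)
    (hb : bodyOf H' = c • bodyOf H) {y : Euc n} (hy : ‖y‖ = 1) : H' y = c * H y := by
  refine le_antisymm ?_ ?_
  · have h1 := h'.mem_body hr' hy
    rw [hb] at h1
    obtain ⟨z, hz, hzG⟩ := h1
    have h2 := h.le_of_mem ⟨y, hy⟩ hz y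
    have h3 := h'.euler hy
    rw [← hzG] at h3
    simp only [inner_smul_left, conj_trivial] at h3
    rw [← h3]
    exact mul_le_mul_of_nonneg_left h2 hc.le
  · have h1 : c • G y ∈ bodyOf H' := by rw [hb]; exact Set.smul_mem_smul_set (h.mem_body hr hy)
    have h2 := h'.le_of_mem ⟨y, hy⟩ h1 y
    rwa [inner_smul_left, h.euler hy] at h2

theorem qperp_ioH_eq_zero {n : ℕ} {w : C(Euc (n + 1), ℝ)} (hw : w ∈ Vk (n + 1) 1) :
    qperp n (ioH w) = 0 := by
  unfold qperp
  rw [Submodule.starProjection_orthogonal_apply_eq_zero]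
  exact Submodule.mem_map_of_mem hw

theorem ioH_congr {n : ℕ} {w z : C(Euc (n + 1), ℝ)} (h : ∀ x, ‖x‖ = 1 → w x = z x) :
    ioH w = ioH z := by
  rw [ioH_eq, ioH_eq]
  congr 1
  ext g
  exact h _ ((OG_norm g e0).trans norm_e0)

/-- A map vanishing at `ι u` sends `ι w` to a multiple of `ι z` when `w = c z + d u`. -/
theorem map_affine {V E : Type*} [AddCommGroup V] [Module ℝ V] [NormedAddCommGroup E]
    [NormedSpace ℝ E] (ι : V →ₗ[ℝ] E) (Q : E →L[ℝ] E) {z u : V} (c d : ℝ)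
    (hu : Q (ι u) = 0) (hc : 0 ≤ c) : ‖Q (ι (c • z + d • u))‖ = c * ‖Q (ι z)‖ := by
  rw [map_add, map_smul, map_smul, map_add, map_smul, map_smul, hu, smul_zero, add_zero,
    norm_smul, Real.norm_of_nonneg hc]

theorem eq_zero_of_ioH {n : ℕ} {w : C(Euc (n + 1), ℝ)} (h : ‖ioH w‖ = 0) {x : Euc (n + 1)}
    (hx : ‖x‖ = 1) : w x = 0 := by
  have h1 : toH (liftO w) = 0 := norm_eq_zero.1 h
  have h2 := toH_eq_zero h1
  obtain ⟨g, hg⟩ := exists_OG_e0 hx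
  have h3 := congrArg (fun f : C(OG (n + 1), ℝ) => f g) h2
  rw [← hg]
  exact h3

set_option maxHeartbeats 1000000 in
/-- Bodies close to the ball in the sandwich sense which are fixed, up to dilation, by an even
iterate of the projection body operator are ellipsoids. -/
theorem sand_rigid (p : ℕ) (hp : 1 ≤ p) (m : ℕ) (hm : 1 ≤ m) : ∃ η : ℝ, 0 < η ∧ η ≤ 1 ∧
    ∀ (H : Euc (p + 2) → ℝ) (G : Euc (p + 2) → Euc (p + 2)), Sand (1 - η) (1 + η) H G →
      ∀ c : ℝ, 0 < c → projBody^[2 * m] (bodyOf H) = c • bodyOf H →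
      ∃ ψ : Euc (p + 2) ≃ₗ[ℝ] Euc (p + 2), bodyOf H = ψ '' closedBall 0 1 := by
  have hn : ∃ y : Euc (p + 2), ‖y‖ = 1 := ⟨e0, norm_e0⟩
  have hr1 : rate p < 1 := mom_four_lt hp
  have hr0 := rate_nonneg p
  set δ := (1 - rate p) / 16 with hδ
  have hδ0 : 0 < δ := by rw [hδ]; linarith
  have hδ1 : δ ≤ 1 / 16 := by rw [hδ]; linarith
  obtain ⟨η₁, hη₁, hiter⟩ := iter_lin p hp (2 * m) δ hδ0 (by linarith)
  have hμ0 : 0 < min η₁ δ := lt_min hη₁ hδ0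
  obtain ⟨η, hη, hpos⟩ := exists_position (p + 1) (η' := min η₁ δ) hμ0
    ((min_le_right _ _).trans (by linarith))
  refine ⟨min η 1, lt_min hη one_pos, min_le_right _ _, fun H G h₀ c hc hfix => ?_⟩
  have h : Sand (1 - η) (1 + η) H G :=
    h₀.mono (by linarith [min_le_left η 1]) (by linarith [min_le_left η 1])
  obtain ⟨B, H', G', h', hB, hdom⟩ := hpos H G h
  have hδ' : Sand (1 - δ) (1 + δ) H' G' := h'.mono (by linarith [min_le_right η₁ δ])
    (by linarith [min_le_right η₁ δ])
  obtain ⟨⟨G₂, h₂⟩, hq, -, c₂, hc₂, hN⟩ := hiter H' G'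
    (h'.mono (by linarith [min_le_left η₁ δ]) (by linarith [min_le_left η₁ δ]))
  obtain ⟨s, hs, himg⟩ := projBody_iter_image m
    (h₀.isCompact_body (by linarith [min_le_right η 1]) hn) (convex_bodyOf H) B
  set HN := nxt^[2 * m] H' with hHN
  -- the iterate of `H'` is a multiple of `H'`
  have hcb : bodyOf HN = (c₂⁻¹ * (s * c)) • bodyOf H' := by
    have e1 : c₂ • bodyOf HN = (s * c) • bodyOf H' := by
      rw [← hN, hB, himg, hfix, Set.image_smul_comm _ _ _ (fun x => map_smul B c x), smul_smul]
    rw [← smul_smul, ← e1, smul_smul, inv_mul_cancel₀ hc₂.ne', one_smul]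
  set κ := c₂⁻¹ * (s * c) with hκ
  have hκ0 : 0 < κ := by positivity
  have hprop : ∀ y : Euc (p + 2), ‖y‖ = 1 → HN y = κ * H' y := fun y hy =>
    hδ'.eq_of_body_smul h₂ (by linarith) (by linarith) hκ0 hcb hy
  have hκ1 : 1 - 6 * δ ≤ κ := by
    have e1 := hprop e0 norm_e0
    have e2 := abs_le.1 (h₂.near_one hδ0 norm_e0)
    have e3 := abs_le.1 (hδ'.near_one hδ0 norm_e0)
    by_contra hlt
    push Not at hlt
    nlinarith
  have hpert : ioH (pert HN) = ioH (κ • pert H' + (κ - 1) • pw (e0 : Euc (p + 2)) 0) := by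
    refine ioH_congr fun x hx => ?_
    rw [h₂.pert_unit hδ0 (by linarith) hx, hprop x hx]
    change _ = κ * pert H' x + (κ - 1) * pw (e0 : Euc (p + 2)) 0 x
    rw [hδ'.pert_unit hδ0 (by linarith) hx, pw_apply]
    ring
  have hpq := map_affine ioH (qperp (p + 1)) (z := pert H') κ (κ - 1)
    (qperp_ioH_eq_zero (pw_mem (e0 : Euc (p + 2)) (Nat.zero_le 1))) hκ0.le
  rw [hpert] at hq
  set a := ‖qperp (p + 1) (ioH (pert H'))‖ with ha
  have ha0 : 0 ≤ a := norm_nonneg _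
  have hpow : rate p ^ (2 * m) ≤ rate p := pow_le_of_le_one hr0 hr1.le (by omega)
  have haz : a = 0 := by
    have e1 : κ * a ≤ rate p * a + δ * (2 * a) := by
      refine hpq.symm.le.trans (hq.trans ?_)
      gcongr
    have e2 : rate p = 1 - 16 * δ := by rw [hδ]; ring
    rw [e2] at e1
    nlinarith
  have hz : ‖ioH (pert H')‖ = 0 := le_antisymm (by rw [haz] at hdom; simpa using hdom) (norm_nonneg _)
  have hball : bodyOf H' = closedBall 0 1 := by
    rw [← bodyOf_ball 1 zero_le_one]
    have e : ∀ u : Euc (p + 2), ‖u‖ = 1 → H' u = 1 * ‖u‖ := fun u hu => by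
      have := eq_zero_of_ioH hz hu
      rw [hδ'.pert_unit hδ0 (by linarith) hu] at this
      rw [hu]; linarith
    ext x
    refine forall₂_congr fun u hu => ?_
    rw [e u (mem_sphere_zero_iff_norm.1 hu)]
  refine ⟨B.symm, ?_⟩
  rw [← hball, hB, Set.image_image]
  simp

/-! ### From `C²` closeness to the sandwich condition -/

theorem abs_le_of_second_deriv {f f' f'' : ℝ → ℝ} {M : ℝ} (hf : ∀ t, HasDerivAt f (f' t) t)
    (hf' : ∀ t, HasDerivAt f' (f'' t) t) (h0 : f 0 = 0) (h0' : f' 0 = 0)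
    (hM : ∀ t, |f'' t| ≤ M) {t : ℝ} (ht : 0 ≤ t) : |f t| ≤ M * t ^ 2 := by
  have hM0 : 0 ≤ M := (abs_nonneg _).trans (hM 0)
  have h1 : ∀ s, 0 ≤ s → |f' s| ≤ M * s := by
    intro s hs
    have := convex_univ.norm_image_sub_le_of_norm_hasDerivWithin_le (f := f') (f' := f'') (C := M)
      (fun x _ => (hf' x).hasDerivWithinAt) (fun x _ => hM x) (mem_univ (0 : ℝ)) (mem_univ s)
    simpa [h0', abs_of_nonneg hs] using this
  have h2 := (convex_Icc 0 t).norm_image_sub_le_of_norm_hasDerivWithin_le (f := f) (f' := f')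
      (C := M * t) (fun x _ => (hf x).hasDerivWithinAt)
      (fun x hx => (h1 x hx.1).trans (mul_le_mul_of_nonneg_left hx.2 hM0))
      (left_mem_Icc.2 ht) (right_mem_Icc.2 ht)
  simp only [h0, sub_zero, Real.norm_eq_abs, abs_of_nonneg ht] at h2
  linarith [h2]

/-- A positively homogeneous function whose derivatives up to order two are small on the sphere is
approximated along great circles by its linear parts. -/
theorem great_circle {n : ℕ} {F : Euc n → ℝ} {ε : ℝ} (hF : ContDiffOn ℝ 2 F {(0 : Euc n)}ᶜ)
    (h1 : ∀ y, ‖y‖ = 1 → ‖fderiv ℝ F y‖ ≤ ε)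
    (h2 : ∀ y, ‖y‖ = 1 → ‖iteratedFDeriv ℝ 2 F y‖ ≤ ε)
    (hE : ∀ y, ‖y‖ = 1 → fderiv ℝ F y y = F y) (h0 : ∀ y, ‖y‖ = 1 → |F y| ≤ ε)
    {y w : Euc n} (hy : ‖y‖ = 1) (hw : ‖w‖ = 1) (hyw : ⟪y, w⟫ = 0) {t : ℝ} (ht : 0 ≤ t) :
    |F (Real.cos t • y + Real.sin t • w) - fderiv ℝ F y (Real.cos t • y + Real.sin t • w)|
      ≤ 4 * ε * t ^ 2 := by
  set γ : ℝ → Euc n := fun t => Real.cos t • y + Real.sin t • w with hγ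
  set γ' : ℝ → Euc n := fun t => -Real.sin t • y + Real.cos t • w with hγ'
  have hsq : ∀ a b : ℝ, a ^ 2 + b ^ 2 = 1 → ‖a • y + b • w‖ = 1 := by
    intro a b hab
    have : ‖a • y + b • w‖ ^ 2 = 1 := by
      rw [norm_add_sq_real, norm_smul, norm_smul, inner_smul_left, inner_smul_right, hyw, hy, hw,
        mul_zero, mul_zero, mul_zero, mul_one, mul_one, Real.norm_eq_abs, Real.norm_eq_abs, sq_abs,
        sq_abs]
      linarith
    nlinarith [norm_nonneg (a • y + b • w)]
  have nγ : ∀ t, ‖γ t‖ = 1 := fun t => hsq _ _ (Real.cos_sq_add_sin_sq t)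
  have nγ' : ∀ t, ‖γ' t‖ = 1 := fun t => hsq _ _ (by linarith [Real.cos_sq_add_sin_sq t])
  have dγ : ∀ t, HasDerivAt γ (γ' t) t := fun t =>
    ((Real.hasDerivAt_cos t).smul_const y).add ((Real.hasDerivAt_sin t).smul_const w)
  have dγ' : ∀ t, HasDerivAt γ' (-γ t) t := fun t => by
    have := ((Real.hasDerivAt_sin t).neg.smul_const y).add ((Real.hasDerivAt_cos t).smul_const w)
    refine this.congr_deriv ?_
    simp only [hγ, neg_smul, neg_add]
  have hne : ∀ z : Euc n, ‖z‖ = 1 → z ∈ ({(0 : Euc n)}ᶜ : Set (Euc n)) := by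
    rintro z hz rfl
    simp at hz
  have hopen : IsOpen ({(0 : Euc n)}ᶜ : Set (Euc n)) := isOpen_compl_singleton
  have hC := (contDiffOn_succ_iff_fderiv_of_isOpen (n := 1) hopen).1 hF
  have dF : ∀ z : Euc n, ‖z‖ = 1 → HasFDerivAt F (fderiv ℝ F z) z := fun z hz =>
    ((hC.1 z (hne z hz)).differentiableAt (hopen.mem_nhds (hne z hz))).hasFDerivAt
  have dF' : ∀ z : Euc n, ‖z‖ = 1 → HasFDerivAt (fderiv ℝ F) (fderiv ℝ (fderiv ℝ F) z) z :=
    fun z hz => ((hC.2.2.differentiableOn one_ne_zero z (hne z hz)).differentiableAt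
      (hopen.mem_nhds (hne z hz))).hasFDerivAt
  have lin : ∀ t, HasDerivAt (fun t => fderiv ℝ F y (γ t)) (fderiv ℝ F y (γ' t)) t := fun t =>
    (fderiv ℝ F y).hasFDerivAt.comp_hasDerivAt t (dγ t)
  have lin' : ∀ t, HasDerivAt (fun t => fderiv ℝ F y (γ' t)) (fderiv ℝ F y (-γ t)) t := fun t =>
    (fderiv ℝ F y).hasFDerivAt.comp_hasDerivAt t (dγ' t)
  have g1 : ∀ t, HasDerivAt (fun t => F (γ t)) (fderiv ℝ F (γ t) (γ' t)) t := fun t =>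
    (dF _ (nγ t)).comp_hasDerivAt t (dγ t)
  have g2 : ∀ t, HasDerivAt (fun t => fderiv ℝ F (γ t) (γ' t))
      (fderiv ℝ (fderiv ℝ F) (γ t) (γ' t) (γ' t) + fderiv ℝ F (γ t) (-γ t)) t := fun t =>
    ((dF' _ (nγ t)).comp_hasDerivAt t (dγ t)).clm_apply (dγ' t)
  refine abs_le_of_second_deriv (f := fun t => F (γ t) - fderiv ℝ F y (γ t))
    (fun t => (g1 t).sub (lin t)) (fun t => (g2 t).sub (lin' t)) ?_ ?_ (fun t => ?_) ht
  · simp [hγ, hE y hy]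
  · simp [hγ, hγ']
  · have b1 : |fderiv ℝ (fderiv ℝ F) (γ t) (γ' t) (γ' t)| ≤ ε := by
      have := (iteratedFDeriv ℝ 2 F (γ t)).le_opNorm ![γ' t, γ' t]
      rw [iteratedFDeriv_two_apply] at this
      simp only [Fin.prod_univ_two, Matrix.cons_val_zero, Matrix.cons_val_one, nγ', mul_one,
        Real.norm_eq_abs] at this
      exact this.trans (h2 _ (nγ t))
    have b2 : |fderiv ℝ F (γ t) (γ t)| ≤ ε := by
      rw [hE _ (nγ t)]; exact h0 _ (nγ t)
    have b3 : |fderiv ℝ F y (γ t)| ≤ ε := by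
      have := (fderiv ℝ F y).le_opNorm (γ t)
      rw [nγ, mul_one] at this
      exact this.trans (h1 y hy)
    rw [map_neg, map_neg]
    rw [abs_le] at *
    constructor <;> linarith

/-- Smallness in `C²` gives a bound in terms of `1 - y · x`, for all pairs of unit vectors. -/
theorem c2_unit_bound {n : ℕ} {F : Euc n → ℝ} {ε : ℝ} (hF : ContDiffOn ℝ 2 F {(0 : Euc n)}ᶜ)
    (h1 : ∀ y, ‖y‖ = 1 → ‖fderiv ℝ F y‖ ≤ ε)
    (h2 : ∀ y, ‖y‖ = 1 → ‖iteratedFDeriv ℝ 2 F y‖ ≤ ε)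
    (hE : ∀ y, ‖y‖ = 1 → fderiv ℝ F y y = F y) (h0 : ∀ y, ‖y‖ = 1 → |F y| ≤ ε)
    {x y : Euc n} (hx : ‖x‖ = 1) (hy : ‖y‖ = 1) :
    |F x - fderiv ℝ F y x| ≤ 20 * ε * (1 - ⟪y, x⟫) := by
  have hε : 0 ≤ ε := (abs_nonneg _).trans (h0 y hy)
  set c := ⟪y, x⟫ with hc
  have hc1 : c ≤ 1 := by have := inner_le_norm_unit hy x; rwa [hx] at this
  rcases lt_or_ge c 0 with hneg | hpos
  · have b1 := h0 x hx
    have b2 : |fderiv ℝ F y x| ≤ ε := by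
      have := (fderiv ℝ F y).le_opNorm x
      rw [hx, mul_one] at this
      exact this.trans (h1 y hy)
    have : |F x - fderiv ℝ F y x| ≤ 2 * ε := by
      rw [abs_le] at *; constructor <;> linarith
    nlinarith
  rcases hc1.eq_or_lt with h | hlt
  · have : x = y := by
      have e := norm_sub_inner_eq hx hy
      rw [← hc, h] at e
      have : ‖x - y‖ ^ 2 = 0 := by linarith
      exact sub_eq_zero.1 (norm_eq_zero.1 (pow_eq_zero_iff two_ne_zero |>.1 this))
    rw [this, hE y hy, h]; simp
  set t := Real.arccos c with ht
  have hcos : Real.cos t = c := Real.cos_arccos (by linarith) hc1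
  have hsin2 : Real.sin t ^ 2 = 1 - c ^ 2 := by
    have := Real.cos_sq_add_sin_sq t; rw [hcos] at this; linarith
  have hsin : Real.sin t ≠ 0 := fun h => by rw [h] at hsin2; nlinarith
  set w := (Real.sin t)⁻¹ • (x - c • y) with hw
  have hyw : ⟪y, w⟫ = 0 := by
    rw [hw, inner_smul_right, inner_sub_right, inner_smul_right, inner_self_one hy, ← hc]; ring
  have hnw : ‖w‖ = 1 := by
    have e : ‖x - c • y‖ ^ 2 = 1 - c ^ 2 := by
      rw [norm_sub_sq_real, inner_smul_right, real_inner_comm, ← hc, norm_smul, hx, hy,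
        Real.norm_eq_abs, mul_one, sq_abs]; ring
    have : ‖w‖ ^ 2 = 1 := by
      rw [hw, norm_smul, mul_pow, e, ← hsin2, norm_inv, inv_pow, Real.norm_eq_abs, sq_abs]
      exact inv_mul_cancel₀ (pow_ne_zero 2 hsin)
    nlinarith [norm_nonneg w]
  have hxw : x = Real.cos t • y + Real.sin t • w := by
    rw [hw, smul_smul, mul_inv_cancel₀ hsin, one_smul, hcos]; abel
  have ht0 : 0 ≤ t := Real.arccos_nonneg c
  have key := great_circle hF h1 h2 hE h0 hy hnw hyw ht0
  rw [← hxw] at key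
  refine key.trans ?_
  have hq := Real.cos_le_one_sub_mul_cos_sq (x := t) (by
    rw [abs_of_nonneg ht0]; exact Real.arccos_le_pi c)
  rw [hcos] at hq
  have hπ : t ^ 2 ≤ 5 * (1 - c) := by
    have p1 : Real.pi ^ 2 ≤ 10 := by nlinarith [Real.pi_lt_d2, Real.pi_pos]
    have p2 : 2 / 10 ≤ 2 / Real.pi ^ 2 := by
      apply div_le_div_of_nonneg_left (by norm_num) (by positivity) p1
    nlinarith [sq_nonneg t]
  nlinarith

theorem suppFn_image {n : ℕ} (K : Set (Euc n)) (φ : Euc n →L[ℝ] Euc n) (x : Euc n) :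
    suppFn (φ '' K) x = suppFn K (φ.adjoint x) := by
  unfold suppFn
  rw [Set.image_image]
  congr 1
  refine Set.image_congr fun y _ => ?_
  rw [ContinuousLinearMap.adjoint_inner_right]

theorem suppFn_zero {n : ℕ} (K : Set (Euc n)) : suppFn K 0 = 0 := by
  have := suppFn_smul K (le_refl (0 : ℝ)) 0
  rwa [zero_smul, zero_mul] at this

theorem homExt_suppFn {n : ℕ} (K : Set (Euc n)) (a : ℝ) :
    homExt (fun x => suppFn K x - a) = fun x => suppFn K x - a * ‖x‖ := by
  funext x
  unfold homExt
  by_cases hx : x = 0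
  · rw [hx, norm_zero, zero_mul, suppFn_zero]; ring
  · have : ‖x‖ ≠ 0 := norm_ne_zero_iff.2 hx
    change ‖x‖ * (suppFn K (‖x‖⁻¹ • x) - a) = _
    rw [suppFn_smul K (inv_nonneg.2 (norm_nonneg x))]
    field_simp

theorem c2_suppFn_image {n : ℕ} {K : Set (Euc n)} (h : C2Sph (suppFn K)) (φ : Euc n ≃ₗ[ℝ] Euc n) :
    ContDiffOn ℝ 2 (fun x => suppFn (φ '' K) x - ‖x‖) {(0 : Euc n)}ᶜ := by
  set A : Euc n →L[ℝ] Euc n := (φ : Euc n →ₗ[ℝ] Euc n).toContinuousLinearMap with hA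
  have e1 : ∀ x, suppFn (φ '' K) x = suppFn K (A.adjoint x) := fun x => suppFn_image K A x
  have hK : ContDiffOn ℝ 2 (suppFn K) {(0 : Euc n)}ᶜ := by
    have e := homExt_suppFn K 0
    simp only [sub_zero, zero_mul] at e
    unfold C2Sph at h
    rwa [e] at h
  simp only [e1]
  refine ContDiffOn.sub (hK.comp A.adjoint.contDiff.contDiffOn ?_) ?_
  · intro x hx h0
    rw [mem_singleton_iff] at h0
    apply hx
    rw [mem_singleton_iff]
    -- the adjoint of an invertible map is injective
    have : ⟪x, x⟫ = 0 := by
      obtain ⟨z, hz⟩ := φ.surjective x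
      have e : A z = x := hz
      nth_rewrite 2 [← e]
      rw [← ContinuousLinearMap.adjoint_inner_left, h0, inner_zero_left]
    exact inner_self_eq_zero.1 this
  · exact fun x hx => (contDiffAt_norm ℝ hx).contDiffWithinAt

/-- The terms in the definition of the `C²` norm are bounded by it, for `C²` functions. -/
theorem le_C2Norm {n : ℕ} {f : Euc n → ℝ} (hf : C2Sph f) {y : Euc n} (hy : ‖y‖ = 1) :
    |homExt f y| + ‖fderiv ℝ (homExt f) y‖ + ‖iteratedFDeriv ℝ 2 (homExt f) y‖ ≤ C2Norm f := by
  have hopen : IsOpen ({(0 : Euc n)}ᶜ : Set (Euc n)) := isOpen_compl_singleton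
  have hsub : sphere (0 : Euc n) 1 ⊆ {(0 : Euc n)}ᶜ := by
    rintro z hz rfl
    simp at hz
  have c1 : ContinuousOn (homExt f) {(0 : Euc n)}ᶜ := hf.continuousOn
  have c2 := hf.continuousOn_fderiv_of_isOpen hopen one_le_two
  have c3 : ContinuousOn (iteratedFDeriv ℝ 2 (homExt f)) {(0 : Euc n)}ᶜ :=
    (hf.continuousOn_iteratedFDerivWithin (m := 2) le_rfl hopen.uniqueDiffOn).congr
      fun x hx => ((iteratedFDerivWithin_of_isOpen 2 hopen) hx).symm
  have c4 := (((c1.abs.add c2.norm).add c3.norm).mono hsub)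
  have hb := (isCompact_sphere (0 : Euc n) 1).bddAbove_image c4
  refine le_ciSup (f := fun x : sphere (0 : Euc n) 1 => |homExt f (x : Euc n)| +
    ‖fderiv ℝ (homExt f) (x : Euc n)‖ + ‖iteratedFDeriv ℝ 2 (homExt f) (x : Euc n)‖) ?_
    ⟨y, mem_sphere_zero_iff_norm.2 hy⟩
  refine hb.mono ?_
  rintro _ ⟨x, rfl⟩
  exact ⟨x, x.2, rfl⟩

/-- Closeness to the ball in `C²` implies closeness in the sandwich sense. -/
theorem sand_of_C2 {n : ℕ} {K : Set (Euc n)} (hK : K = -K) (hC : C2Sph (suppFn K))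
    (φ : Euc n ≃ₗ[ℝ] Euc n) {ε : ℝ} (hε : C2Norm (fun x => suppFn (φ '' K) x - 1) ≤ ε) :
    ∃ G, Sand (1 - 20 * ε) (1 + 20 * ε) (suppFn (φ '' K)) G := by
  set L := φ '' K with hL
  set F : Euc n → ℝ := fun x => suppFn L x - ‖x‖ with hFd
  have hF : ContDiffOn ℝ 2 F {(0 : Euc n)}ᶜ := c2_suppFn_image hC φ
  have e : homExt (fun x => suppFn L x - 1) = F := by
    rw [homExt_suppFn]; simp only [one_mul, hFd]
  have hS : C2Sph (fun x => suppFn L x - 1) := by unfold C2Sph; rwa [e]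
  have hle : ∀ y : Euc n, ‖y‖ = 1 →
      |F y| + ‖fderiv ℝ F y‖ + ‖iteratedFDeriv ℝ 2 F y‖ ≤ ε := fun y hy => by
    have := le_C2Norm hS hy
    rw [e] at this
    exact this.trans hε
  have h0 : ∀ y : Euc n, ‖y‖ = 1 → |F y| ≤ ε := fun y hy => by
    linarith [hle y hy, norm_nonneg (fderiv ℝ F y), norm_nonneg (iteratedFDeriv ℝ 2 F y)]
  have h1 : ∀ y : Euc n, ‖y‖ = 1 → ‖fderiv ℝ F y‖ ≤ ε := fun y hy => by
    linarith [hle y hy, abs_nonneg (F y), norm_nonneg (iteratedFDeriv ℝ 2 F y)]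
  have h2 : ∀ y : Euc n, ‖y‖ = 1 → ‖iteratedFDeriv ℝ 2 F y‖ ≤ ε := fun y hy => by
    linarith [hle y hy, abs_nonneg (F y), norm_nonneg (fderiv ℝ F y)]
  have hhom : ∀ (t : ℝ), 0 ≤ t → ∀ x, F (t • x) = t * F x := fun t ht x => by
    simp only [hFd]
    rw [suppFn_smul L ht, norm_smul, Real.norm_of_nonneg ht]; ring
  have hE : ∀ y : Euc n, ‖y‖ = 1 → fderiv ℝ F y y = F y := by
    intro y hy
    have hy0 : y ∈ ({(0 : Euc n)}ᶜ : Set (Euc n)) := by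
      rintro rfl
      simp at hy
    have hd : HasFDerivAt F (fderiv ℝ F y) ((1 : ℝ) • y) := by
      rw [one_smul]
      exact ((hF.differentiableOn two_ne_zero y hy0).differentiableAt
        (isOpen_compl_singleton.mem_nhds hy0)).hasFDerivAt
    have d1 : HasDerivAt (fun t : ℝ => F (t • y)) (fderiv ℝ F y ((1 : ℝ) • y)) 1 :=
      HasFDerivAt.comp_hasDerivAt (f := fun t : ℝ => t • y) (1 : ℝ) hd
        ((hasDerivAt_id (1 : ℝ)).smul_const y)
    have d2 : HasDerivAt (fun t : ℝ => F (t • y)) (1 * F y) 1 := by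
      refine ((hasDerivAt_id (1 : ℝ)).mul_const (F y)).congr_of_eventuallyEq ?_
      filter_upwards [lt_mem_nhds (zero_lt_one' ℝ)] with t ht
      exact hhom t ht.le y
    have := d1.unique d2
    rwa [one_smul, one_mul] at this
  have hall : ∀ x y : Euc n, ‖y‖ = 1 → |F x - fderiv ℝ F y x| ≤ 20 * ε * (‖x‖ - ⟪y, x⟫) := by
    intro x y hy
    by_cases hx : x = 0
    · have : F 0 = 0 := by simp only [hFd]; rw [suppFn_zero, norm_zero, sub_zero]
      rw [hx, this]; simp
    · obtain ⟨u, hu, hxu⟩ := exists_unit x hx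
      have := c2_unit_bound hF h1 h2 hE h0 hu hy
      rw [hxu, hhom _ (norm_nonneg x), map_smul, smul_eq_mul, ← mul_sub, abs_mul,
        abs_of_nonneg (norm_nonneg x), inner_smul_right, norm_smul, hu, norm_norm]
      calc ‖x‖ * |F u - fderiv ℝ F y u| ≤ ‖x‖ * (20 * ε * (1 - ⟪y, u⟫)) := by gcongr
        _ = _ := by ring
  refine ⟨fun y => y + (InnerProductSpace.toDual ℝ (Euc n)).symm (fderiv ℝ F y), ?_, ?_, ?_⟩
  · intro x y hy
    rw [inner_add_left, InnerProductSpace.toDual_symm_apply]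
    have := (abs_le.1 (hall x y hy)).1
    simp only [hFd] at this ⊢
    linarith
  · intro x y hy
    rw [inner_add_left, InnerProductSpace.toDual_symm_apply]
    have := (abs_le.1 (hall x y hy)).2
    simp only [hFd] at this ⊢
    linarith
  · intro x
    have hneg : L = (fun z => -z) '' L := by
      rw [hL]
      nth_rewrite 1 [hK]
      rw [← Set.image_neg_eq_neg, Set.image_image, Set.image_image]
      simp
    have : suppFn L (-x) = suppFn ((fun z => -z) '' L) x := by
      unfold suppFn
      rw [Set.image_image (fun y => ⟪y, x⟫) (fun z => -z) L]
      simp only [inner_neg_left, inner_neg_right]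
    rw [this, ← hneg]

/-- A compact convex set is recovered from its support function. -/
theorem bodyOf_suppFn {n : ℕ} {L : Set (Euc n)} (hL : IsCompact L) (hc : Convex ℝ L)
    (hne : L.Nonempty) : bodyOf (suppFn L) = L := by
  refine Subset.antisymm (fun x hx => ?_) fun x hx u _ => le_suppFn hL hx u
  by_contra hxL
  obtain ⟨f, u, hfu, hux⟩ := geometric_hahn_banach_closed_point hc hL.isClosed hxL
  set a := (InnerProductSpace.toDual ℝ (Euc n)).symm f with ha
  have hfa : ∀ z, f z = ⟪z, a⟫ := fun z => by
    rw [real_inner_comm, ha, InnerProductSpace.toDual_symm_apply]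
  have h1 : suppFn L a < ⟪x, a⟫ := by
    refine (suppFn_le hne fun z hz => ?_).trans_lt (hfa x ▸ hux)
    rw [← hfa]; exact (hfu z hz).le
  have ha0 : a ≠ 0 := by
    intro h
    rw [h, suppFn_zero, inner_zero_right] at h1
    exact lt_irrefl _ h1
  obtain ⟨v, hv, hav⟩ := exists_unit a ha0
  have h2 := hx v (mem_sphere_zero_iff_norm.2 hv)
  rw [hav, suppFn_smul L (norm_nonneg a), inner_smul_right] at h1
  nlinarith [norm_nonneg a]

/-- For `n ≥ 3`, `m ≥ 4` there is `ε_m > 0` such that any origin-symmetric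
convex body `K ⊆ ℝⁿ` with `C²` support function satisfying `Π^{2m}K = cK` for some `c > 0`
and `‖h_{φK} - 1‖_{C²} ≤ ε_m` for some `φ ∈ GLₙ(ℝ)` is an origin-centered ellipsoid. -/
theorem iterated_projection_local_uniqueness (n : ℕ) (hn : 3 ≤ n) (m : ℕ) (hm : 4 ≤ m) :
    ∃ ε : ℝ, 0 < ε ∧
      ∀ K : Set (Euc n), IsConvexBody K → K = -K → C2Sph (suppFn K) →
        (∃ c : ℝ, 0 < c ∧ (projBody (n := n))^[2 * m] K = c • K) →
        (∃ φ : Euc n ≃ₗ[ℝ] Euc n, C2Norm (fun x => suppFn (⇑φ '' K) x - 1) ≤ ε) →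
        ∃ ψ : Euc n ≃ₗ[ℝ] Euc n, K = ⇑ψ '' closedBall (0 : Euc n) 1 := by
  obtain ⟨p, hp, rfl⟩ : ∃ p, 1 ≤ p ∧ n = p + 2 := ⟨n - 2, by omega, by omega⟩
  obtain ⟨η, hη, -, hrigid⟩ := sand_rigid p hp m (by omega)
  refine ⟨η / 20, by positivity, ?_⟩
  rintro K ⟨hKc, hKx, hKi⟩ hKs hC2 ⟨c, hc, hfix⟩ ⟨φ, hφ⟩
  obtain ⟨G, hS⟩ := sand_of_C2 hKs hC2 φ hφ
  rw [mul_div_cancel₀ η (by norm_num : (20 : ℝ) ≠ 0)] at hS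
  have hne : K.Nonempty := hKi.mono interior_subset
  have hbody : bodyOf (suppFn (φ '' K)) = φ '' K :=
    bodyOf_suppFn (hKc.image (φ : Euc (p + 2) →ₗ[ℝ] Euc (p + 2)).continuous_of_finiteDimensional)
      (hKx.linear_image (φ : Euc (p + 2) →ₗ[ℝ] Euc (p + 2))) (hne.image _)
  obtain ⟨s, hs, himg⟩ := projBody_iter_image m hKc hKx φ
  obtain ⟨ψ, hψ⟩ := hrigid _ G hS (s * c) (by positivity) (by
    rw [hbody, himg, hfix, Set.image_smul_comm _ _ _ (fun x => map_smul φ c x), smul_smul])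
  refine ⟨ψ.trans φ.symm, ?_⟩
  rw [hbody] at hψ
  have : K = φ.symm '' (φ '' K) := by rw [Set.image_image]; simp
  rw [this, hψ, Set.image_image]
  rfl
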